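/- Let Q be a finite acyclic quiver, 𝒬• = (Q¹,…,Q^ℓ) an admissible, ordered, Dynkin subquiver partition, β₁,…,β_r a Reineke order on Φ₊(𝒬•) with chosen vertices i(u) satisfying β_u(i(u)) = 1, γ a dimension vector, and m = (m₁,…,m_r) a 𝒬•-partition of γ. Grade each 𝒜_{β_u,m_u} and ℋ_γ by total polynomial degree, and set d_m := −Σ_{1≤u<v≤r} χ_Q(m_u β_u, m_v β_v), where χ_Q is the Euler form of Q. Then for every k ≥ 0, Σ_{k₁+⋯+k_r = k} ∏_{u=1}^r dim_ℚ (𝒜_{β_u,m_u})_{k_u} = dim_ℚ (𝒜_{β₁,m₁} * ⋯ * 𝒜_{β_r,m_r})_{k + d_m}, where 𝒜_{β₁,m₁} * ⋯ * 𝒜_{β_r,m_r} ⊆ ℋ_γ denotes the ℚ-span of all left-to-right products f₁ * ⋯ * f_r with f_u ∈ 𝒜_{β_u,m_u}, and (·)_j denotes the homogeneous degree-j part. -/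

import Mathlib

open MvPolynomial
open scoped Classical

/-- A finite quiver with vertex set `Fin n`: a finite type of arrows together with
head and tail maps. -/
structure FinQuiver (n : ℕ) where
  Arr : Type
  [fintypeArr : Fintype Arr]
  hd : Arr → Fin n
  tl : Arr → Fin n

attribute [instance] FinQuiver.fintypeArr

variable {n : ℕ}

/-- `Q` is acyclic: there is no oriented cycle, i.e. no path
`a₁, …, a_{k+1}` (with `hd aₘ = tl aₘ₊₁`) whose final head equals its initial tail. -/
def FinQuiver.Acyclic (Q : FinQuiver n) : Prop :=
  ∀ (k : ℕ) (c : Fin (k + 1) → Q.Arr),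
    (∀ m : Fin k, Q.hd (c m.castSucc) = Q.tl (c m.succ)) →
    Q.hd (c (Fin.last k)) ≠ Q.tl (c 0)

/-- The Euler form `χ_Q` of the quiver `Q`. -/
def FinQuiver.euler (Q : FinQuiver n) (α β : Fin n → ℕ) : ℤ :=
  ∑ i : Fin n, (α i : ℤ) * β i - ∑ a : Q.Arr, (α (Q.tl a) : ℤ) * β (Q.hd a)

/-- The opposite antisymmetrization `⟨α,β⟩ = χ_Q(β,α) − χ_Q(α,β)`. -/
def FinQuiver.lam (Q : FinQuiver n) (α β : Fin n → ℕ) : ℤ :=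
  Q.euler β α - Q.euler α β

/-- The polynomial ring in the variables `ω_{i,j}`, `i ∈ Q₀`, `j ∈ ℕ` (0-indexed). -/
abbrev PolyQ (n : ℕ) := MvPolynomial (Fin n × ℕ) ℚ

/-- The permutation of the variables at vertex `i` induced by a permutation of `ℕ`. -/
def vertexPerm (i : Fin n) (σ : Equiv.Perm ℕ) : Fin n × ℕ → Fin n × ℕ :=
  fun p => if p.1 = i then (i, σ p.2) else p

/-- `f` is, for each vertex `i`, symmetric in the variables `ω_{i,0},…,ω_{i,γ i − 1}`. -/
def SymmIn (γ : Fin n → ℕ) (f : PolyQ n) : Prop :=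
  ∀ (i : Fin n) (σ : Equiv.Perm ℕ),
    (∀ j : ℕ, σ j ≠ j → j < γ i) → rename (vertexPerm i σ) f = f

lemma vars_smul_subset (c : ℚ) (f : PolyQ n) : (c • f).vars ⊆ f.vars := by
  rw [MvPolynomial.smul_eq_C_mul]
  refine (MvPolynomial.vars_mul _ _).trans ?_
  simp [MvPolynomial.vars_C]

/-- `ℋ_γ`: polynomials using only the variables `ω_{i,j}`, `j < γ i`, which are
symmetric at each vertex.  A `ℚ`-submodule of `PolyQ n`. -/
noncomputable def Hspace (γ : Fin n → ℕ) : Submodule ℚ (PolyQ n) where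
  carrier := {f | (∀ p ∈ f.vars, p.2 < γ p.1) ∧ SymmIn γ f}
  add_mem' := by
    rintro f g ⟨hf1, hf2⟩ ⟨hg1, hg2⟩
    refine ⟨fun p hp => ?_, fun i σ hσ => ?_⟩
    · rcases Finset.mem_union.mp (MvPolynomial.vars_add_subset f g hp) with h | h
      exacts [hf1 p h, hg1 p h]
    · rw [map_add, hf2 i σ hσ, hg2 i σ hσ]
  zero_mem' := by
    refine ⟨fun p hp => ?_, fun i σ hσ => map_zero _⟩
    simp [MvPolynomial.vars_0] at hp
  smul_mem' := by
    rintro c f ⟨hf1, hf2⟩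
    refine ⟨fun p hp => hf1 p (vars_smul_subset c f hp), fun i σ hσ => ?_⟩
    rw [map_smul, hf2 i σ hσ]

/-- Polynomials all of whose variables sit at vertex `i`. -/
noncomputable def onlyVertex (i : Fin n) : Submodule ℚ (PolyQ n) where
  carrier := {f | ∀ p ∈ f.vars, p.1 = i}
  add_mem' := by
    intro f g hf hg p hp
    rcases Finset.mem_union.mp (MvPolynomial.vars_add_subset f g hp) with h | h
    exacts [hf p h, hg p h]
  zero_mem' := by
    intro p hp
    simp [MvPolynomial.vars_0] at hp
  smul_mem' := by
    intro c f hf p hp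
    exact hf p (vars_smul_subset c f hp)

/-- `𝒜_{β,m}`: the subspace of `ℋ_{m·β}` of polynomials depending only on the
variables `ω_{i,0},…,ω_{i,m−1}` at the distinguished vertex `i`. -/
noncomputable def Aspace (β : Fin n → ℕ) (i : Fin n) (m : ℕ) : Submodule ℚ (PolyQ n) :=
  Hspace (fun v => m * β v) ⊓ onlyVertex i

/-- Substitute for the `j`-th variable at vertex `i` the variable `ω_{i,s}` where `s`
is the `j`-th element of `T i` in increasing order. -/
noncomputable def substAlong (T : Fin n → Finset ℕ) : PolyQ n →ₐ[ℚ] PolyQ n :=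
  aeval fun p : Fin n × ℕ => X (p.1, ((T p.1).sort (· ≤ ·)).getD p.2 0)

/-- The index set of the Kontsevich–Soibelman localization sum:
for each vertex, a `γ₁ i`-element subset of `{0,…,γ₁ i + γ₂ i − 1}`. -/
def shuffles (γ₁ γ₂ : Fin n → ℕ) : Finset (Fin n → Finset ℕ) :=
  Fintype.piFinset fun i => (Finset.range (γ₁ i + γ₂ i)).powerset.filter fun s => s.card = γ₁ i

def shuffleCompl (γ₁ γ₂ : Fin n → ℕ) (S : Fin n → Finset ℕ) : Fin n → Finset ℕ :=
  fun i => Finset.range (γ₁ i + γ₂ i) \ S i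

/-- The numerator factor attached to the arrow `a`:
`∏_{j' ∈ S̄_{h a}} ∏_{j ∈ S_{t a}} (ω_{h a, j'} − ω_{t a, j})`. -/
noncomputable def arrowFactor (Q : FinQuiver n) (γ₁ γ₂ : Fin n → ℕ)
    (S : Fin n → Finset ℕ) (a : Q.Arr) : PolyQ n :=
  ∏ j' ∈ shuffleCompl γ₁ γ₂ S (Q.hd a), ∏ j ∈ S (Q.tl a),
    (X (Q.hd a, j') - X (Q.tl a, j))

noncomputable def interactionNum (Q : FinQuiver n) (γ₁ γ₂ : Fin n → ℕ)
    (S : Fin n → Finset ℕ) : PolyQ n :=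
  ∏ a : Q.Arr, arrowFactor Q γ₁ γ₂ S a

noncomputable def interactionDen (γ₁ γ₂ : Fin n → ℕ) (S : Fin n → Finset ℕ) : PolyQ n :=
  ∏ i : Fin n, ∏ j' ∈ shuffleCompl γ₁ γ₂ S i, ∏ j ∈ S i, (X (i, j') - X (i, j))

/-- The Kontsevich–Soibelman localization sum, an element of the field of rational
functions (the fraction field of `PolyQ n`). -/
noncomputable def cohaMulRat (Q : FinQuiver n) (γ₁ γ₂ : Fin n → ℕ) (f₁ f₂ : PolyQ n) :
    FractionRing (PolyQ n) :=
  ∑ S ∈ shuffles γ₁ γ₂,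
    algebraMap (PolyQ n) (FractionRing (PolyQ n))
        (substAlong S f₁ * substAlong (shuffleCompl γ₁ γ₂ S) f₂ * interactionNum Q γ₁ γ₂ S) /
      algebraMap (PolyQ n) (FractionRing (PolyQ n)) (interactionDen γ₁ γ₂ S)

/-- The CoHA product `f₁ * f₂`: the unique polynomial representing the localization
sum (and `0` if the sum were not a polynomial, which never happens). -/
noncomputable def cohaMul (Q : FinQuiver n) (γ₁ γ₂ : Fin n → ℕ) (f₁ f₂ : PolyQ n) : PolyQ n :=
  if h : ∃ P : PolyQ n,
      algebraMap (PolyQ n) (FractionRing (PolyQ n)) P = cohaMulRat Q γ₁ γ₂ f₁ f₂ then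
    h.choose
  else 0

/-- Iterated, left-to-right, CoHA product of a list of dimension-vector/polynomial pairs.
Returns the total dimension vector together with the product. -/
noncomputable def cohaProd (Q : FinQuiver n) :
    List ((Fin n → ℕ) × PolyQ n) → (Fin n → ℕ) × PolyQ n
  | [] => (fun _ => 0, 1)
  | x :: xs => xs.foldl (fun acc y => (acc.1 + y.1, cohaMul Q acc.1 y.1 acc.2 y.2)) x

/-- Left-to-right CoHA product `f 0 * f 1 * ⋯ * f (r−1)` with `f u ∈ ℋ_{γ u}`. -/
noncomputable def cohaProdFin (Q : FinQuiver n) {r : ℕ} (γ : Fin r → Fin n → ℕ)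
    (f : Fin r → PolyQ n) : PolyQ n :=
  (cohaProd Q (List.ofFn fun u => (γ u, f u))).2

/-- The quiver with one vertex and no arrows. -/
def A1 : FinQuiver 1 := { Arr := Empty, hd := Empty.elim, tl := Empty.elim }

/-- `ψ_p = x₁ ^ p ∈ ℋ₁(A₁)`. -/
noncomputable def psi (p : ℕ) : PolyQ 1 := X ((0 : Fin 1), 0) ^ p

def oneDim : Fin 1 → ℕ := fun _ => 1

/-- The simple dimension vector `e_i`. -/
def simpleDim (i : Fin n) : Fin n → ℕ := fun v => if v = i then 1 else 0

/-- A subquiver of `Q`. -/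
structure Subquiver (Q : FinQuiver n) where
  verts : Finset (Fin n)
  arrows : Finset Q.Arr
  hd_mem : ∀ a ∈ arrows, Q.hd a ∈ verts
  tl_mem : ∀ a ∈ arrows, Q.tl a ∈ verts

def Subquiver.Full {Q : FinQuiver n} (Q' : Subquiver Q) : Prop :=
  ∀ a : Q.Arr, Q.hd a ∈ Q'.verts → Q.tl a ∈ Q'.verts → a ∈ Q'.arrows

/-- Adjacency in the underlying undirected graph of a subquiver. -/
def Subquiver.Adj {Q : FinQuiver n} (Q' : Subquiver Q) (x y : Fin n) : Prop :=
  ∃ a ∈ Q'.arrows, (Q.hd a = x ∧ Q.tl a = y) ∨ (Q.hd a = y ∧ Q.tl a = x)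

def Subquiver.Connected {Q : FinQuiver n} (Q' : Subquiver Q) : Prop :=
  ∀ x ∈ Q'.verts, ∀ y ∈ Q'.verts, Relation.ReflTransGen Q'.Adj x y

/-- The Euler form of the subquiver `Q'` (on `ℤ`-valued vectors). -/
def Subquiver.eulerZ {Q : FinQuiver n} (Q' : Subquiver Q) (α β : Fin n → ℤ) : ℤ :=
  ∑ i ∈ Q'.verts, α i * β i - ∑ a ∈ Q'.arrows, α (Q.tl a) * β (Q.hd a)

/-- Positive definiteness of the Tits form of `Q'` on vectors supported on `Q'`. -/
def Subquiver.PosDefTits {Q : FinQuiver n} (Q' : Subquiver Q) : Prop :=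
  ∀ β : Fin n → ℤ, (∀ i, i ∉ Q'.verts → β i = 0) → β ≠ 0 → 0 < Q'.eulerZ β β

/-- A connected full subquiver with positive definite Tits form. -/
def Subquiver.IsDynkin {Q : FinQuiver n} (Q' : Subquiver Q) : Prop :=
  Q'.Connected ∧ Q'.Full ∧ Q'.PosDefTits

/-- A positive root of `Q'`: a nonzero dimension vector supported on `Q'` with
Tits form equal to `1`. -/
def Subquiver.IsPosRoot {Q : FinQuiver n} (Q' : Subquiver Q) (β : Fin n → ℕ) : Prop :=
  (∀ i, i ∉ Q'.verts → β i = 0) ∧ β ≠ 0 ∧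
    Q'.eulerZ (fun i => (β i : ℤ)) (fun i => (β i : ℤ)) = 1

/-- A subquiver regarded as a quiver in its own right (on the ambient vertex set). -/
def Subquiver.toQuiver {Q : FinQuiver n} (Q' : Subquiver Q) : FinQuiver n :=
  { Arr := {a : Q.Arr // a ∈ Q'.arrows}, hd := fun a => Q.hd a.1, tl := fun a => Q.tl a.1 }

/-- An (ordered list) subquiver partition `𝒬• = (Q¹,…,Q^ℓ)`: nonempty connected
subquivers whose vertex sets partition `Q₀`. -/
structure SubqPartition (Q : FinQuiver n) (ℓ : ℕ) where
  part : Fin ℓ → Subquiver Q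
  nonempty' : ∀ j, (part j).verts.Nonempty
  connected' : ∀ j, (part j).Connected
  cover : ∀ i : Fin n, ∃! j, i ∈ (part j).verts

/-- The set `𝒬•₁` of arrows belonging to one of the parts. -/
noncomputable def SubqPartition.arrs {Q : FinQuiver n} {ℓ : ℕ} (P : SubqPartition Q ℓ) : Finset Q.Arr :=
  Finset.univ.biUnion fun j => (P.part j).arrows

/-- The partition is admissible and ordered: every arrow not inside a part goes from a
later part to an earlier part (head before tail). -/
def SubqPartition.Ordered {Q : FinQuiver n} {ℓ : ℕ} (P : SubqPartition Q ℓ) : Prop :=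
  ∀ a : Q.Arr, a ∉ P.arrs → ∀ i j : Fin ℓ,
    Q.hd a ∈ (P.part i).verts → Q.tl a ∈ (P.part j).verts → i < j

/-- Every part is a Dynkin subquiver. -/
def SubqPartition.Dynkin {Q : FinQuiver n} {ℓ : ℕ} (P : SubqPartition Q ℓ) : Prop :=
  ∀ j, (P.part j).IsDynkin

/-- `β : Fin r → (Fin n → ℕ)` is a Reineke-ordered enumeration of `Φ₊(𝒬•)`, with
`blk u` the part to which `β u` belongs: block-monotone, enumerating all positive roots
without repetition, and within each block `u < v → ⟨β u, β v⟩ ≥ 0`. -/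
def IsReinekeOrder {Q : FinQuiver n} {ℓ : ℕ} (P : SubqPartition Q ℓ) {r : ℕ}
    (β : Fin r → Fin n → ℕ) (blk : Fin r → Fin ℓ) : Prop :=
  Monotone blk ∧
  (∀ u, (P.part (blk u)).IsPosRoot (β u)) ∧
  Function.Injective β ∧
  (∀ j (b : Fin n → ℕ), (P.part j).IsPosRoot b → ∃ u, β u = b) ∧
  (∀ u v : Fin r, u < v → blk u = blk v → 0 ≤ Q.lam (β u) (β v))

/-!
Up to a nonzero constant, the iterated CoHA product is the symmetrization of `f₁ ⋯ f_r`, taken in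
disjoint sets of variables, times the kernel `∏ (y_q - y_p) ^ e(i, j)` over the pairs consisting of
a variable `y_p` at the vertex `i` and a variable `y_q` at the vertex `j` of a later factor, `-e`
being the matrix of the Euler form. The kernel is homogeneous of degree `d_m`, so the product map on
`⨂ 𝒜_{β_u, m_u}` shifts degrees by `d_m`, and the theorem reduces to its injectivity.

To recover the `f_u`, divide the variables of the `u`-th factor into `m_u` clusters of dimension
`β_u` and let the variables of each cluster coincide. A term of the symmetrization that cuts a
cluster into pieces lying in different factors drops out if the kernel between the pieces has
positive degree. The Reineke order, the decomposition of a dimension vector below a root into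
orthogonal roots, and induction on the number of variables then leave only the terms that preserve
every factor. Their sum is a nonzero kernel times a positive multiple of `f₁ ⋯ f_r` evaluated at the
cluster coordinates, and this determines `f₁ ⋯ f_r` because `f_u` involves one variable of each
cluster.
-/

namespace CoHA

/-! ### Symmetrizations over colour-preserving permutations -/

section DifferenceOfVariables

variable {L R : Type*} [CommRing R]

theorem X_sub_X_dvd_iff (p q : L) (f : MvPolynomial L R) :
    X p - X q ∣ f ↔ aeval (Function.update (X : L → MvPolynomial L R) p (X q)) f = 0 := by
  constructor
  · rintro ⟨c, rfl⟩
    rw [map_mul, map_sub, aeval_X, aeval_X]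
    by_cases h : q = p
    · subst h; simp
    · simp [Function.update_of_ne h]
  · intro h
    set J := Ideal.span {(X p - X q : MvPolynomial L R)}
    have hfix : (Ideal.Quotient.mkₐ R J).comp
        (aeval (Function.update (X : L → MvPolynomial L R) p (X q))) = Ideal.Quotient.mkₐ R J := by
      refine MvPolynomial.algHom_ext fun i => ?_
      rw [AlgHom.comp_apply, aeval_X]
      by_cases hi : i = p
      · subst hi
        rw [Function.update_self, Ideal.Quotient.mkₐ_eq_mk, eq_comm, Ideal.Quotient.eq]
        exact Ideal.mem_span_singleton_self _
      · rw [Function.update_of_ne hi]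
    rw [← Ideal.mem_span_singleton, ← Ideal.Quotient.eq_zero_iff_mem]
    have hf := DFunLike.congr_fun hfix f
    rw [AlgHom.comp_apply, h, map_zero] at hf
    exact hf.symm

theorem eval_aeval {M : Type*} (φ : L → MvPolynomial M R) (f : MvPolynomial L R) (y : M → R) :
    eval y (aeval φ f) = eval (fun p => eval y (φ p)) f := by
  induction f using MvPolynomial.induction_on <;> simp_all

variable [IsDomain R]

theorem X_sub_X_dvd_of_eval_eq_zero [Infinite R] {p q : L} {f : MvPolynomial L R}
    (h : ∀ y : L → R, y p = y q → eval y f = 0) : X p - X q ∣ f := by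
  rw [X_sub_X_dvd_iff]
  refine MvPolynomial.funext fun y => ?_
  rw [map_zero, eval_aeval]
  apply h
  by_cases hq : q = p
  · subst hq; rfl
  · simp [Function.update_of_ne hq]

theorem prime_X_sub_X {p q : L} (hpq : p ≠ q) : Prime (X p - X q : MvPolynomial L R) := by
  refine ⟨sub_ne_zero.2 fun h => hpq (X_injective h), fun hunit => ?_, fun a b h => ?_⟩
  · have hmap := hunit.map (aeval (R := R) (Function.update (X : L → MvPolynomial L R) p (X q)))
    rw [(X_sub_X_dvd_iff p q (X p - X q)).1 dvd_rfl] at hmap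
    exact not_isUnit_zero hmap
  · rw [X_sub_X_dvd_iff, map_mul] at h
    simpa only [X_sub_X_dvd_iff] using mul_eq_zero.1 h

theorem isRelPrime_X_sub_X {p q r s : L} (hpq : p ≠ q) (hrs : r ≠ s)
    (hne : ¬ (r = p ∧ s = q)) (hne_swap : ¬ (r = q ∧ s = p)) :
    IsRelPrime (X p - X q : MvPolynomial L R) (X r - X s) := by
  rw [(prime_X_sub_X hpq).irreducible.isRelPrime_iff_not_dvd, X_sub_X_dvd_iff, map_sub, aeval_X,
    aeval_X, sub_eq_zero]
  simp only [Function.update_apply]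
  split_ifs with hrp hsp hsp
  · exact fun _ => hrs (hrp.trans hsp.symm)
  · exact fun h => hne ⟨hrp, (X_injective h).symm⟩
  · exact fun h => hne_swap ⟨X_injective h, hsp⟩
  · exact fun h => hrs (X_injective h)

-- The quotient by `X p - X q` is antisymmetric under the swap, so it vanishes on `y p = y q` too.
theorem X_sub_X_sq_dvd_of_rename_swap [DecidableEq L] [CharZero R] {p q : L} (hpq : p ≠ q)
    {f : MvPolynomial L R} (hvanish : ∀ y : L → R, y p = y q → eval y f = 0)
    (hswap : rename (Equiv.swap p q) f = f) : (X p - X q) ^ 2 ∣ f := by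
  have := CharZero.infinite R
  obtain ⟨g, rfl⟩ := X_sub_X_dvd_of_eval_eq_zero hvanish
  have hanti : rename (Equiv.swap p q) g = -g := by
    rw [map_mul, map_sub, rename_X, rename_X, Equiv.swap_apply_left,
      Equiv.swap_apply_right] at hswap
    apply mul_left_cancel₀ (prime_X_sub_X hpq).1
    linear_combination -hswap
  have hg : X p - X q ∣ g := X_sub_X_dvd_of_eval_eq_zero fun y hy => by
    have hfix : y ∘ Equiv.swap p q = y := by
      funext a
      rw [Function.comp_apply, Equiv.swap_apply_def]
      split_ifs with h h <;> simp [h, hy]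
    have heval := congrArg (eval y) hanti
    rwa [eval_rename, hfix, map_neg, self_eq_neg] at heval
  rw [sq]
  exact mul_dvd_mul_left _ hg

theorem eq_zero_of_eval_eq_zero_of_eval_ne_zero [Infinite R] {d f : MvPolynomial L R} (hd : d ≠ 0)
    (h : ∀ y, eval y d ≠ 0 → eval y f = 0) : f = 0 := by
  have hmul : f * d = 0 := MvPolynomial.funext fun y => by
    by_cases hy : eval y d = 0
    · simp [hy]
    · simp [h y hy]
  exact (mul_eq_zero.1 hmul).resolve_right hd

end DifferenceOfVariables

section ColorPerms

variable {L I : Type*} [Fintype L] {π : L → I}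

/-- The permutations of the labels `L` preserving the colouring `π`: for labels `(i, j)` coloured by
their vertex `i` this is the Weyl group `∏ᵢ S_{γ(i)}`. -/
noncomputable def colorPerms (π : L → I) : Finset (Equiv.Perm L) :=
  {σ | ∀ p, π (σ p) = π p}

@[simp]
theorem mem_colorPerms {σ : Equiv.Perm L} : σ ∈ colorPerms π ↔ ∀ p, π (σ p) = π p := by
  simp [colorPerms]

theorem mul_mem_colorPerms {σ τ : Equiv.Perm L} (hσ : σ ∈ colorPerms π) (hτ : τ ∈ colorPerms π) :
    σ * τ ∈ colorPerms π := by
  rw [mem_colorPerms] at *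
  intro p
  rw [Equiv.Perm.mul_apply, hσ, hτ]

theorem inv_mem_colorPerms {σ : Equiv.Perm L} (hσ : σ ∈ colorPerms π) : σ⁻¹ ∈ colorPerms π := by
  rw [mem_colorPerms] at *
  intro p
  simpa using (hσ (σ⁻¹ p)).symm

theorem swap_mem_colorPerms [DecidableEq L] {p q : L} (h : π p = π q) :
    Equiv.swap p q ∈ colorPerms π := by
  rw [mem_colorPerms]
  intro a
  rw [Equiv.swap_apply_def]
  split_ifs with ha ha <;> simp [ha, h]

theorem sum_colorPerms_mul_left {M : Type*} [AddCommMonoid M] {τ : Equiv.Perm L}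
    (hτ : τ ∈ colorPerms π) (f : Equiv.Perm L → M) :
    ∑ σ ∈ colorPerms π, f (τ * σ) = ∑ σ ∈ colorPerms π, f σ :=
  Finset.sum_bij' (fun σ _ => τ * σ) (fun σ _ => τ⁻¹ * σ)
    (fun _ h => mul_mem_colorPerms hτ h) (fun _ h => mul_mem_colorPerms (inv_mem_colorPerms hτ) h)
    (by simp) (by simp) (by simp)

theorem sum_colorPerms_mul_right {M : Type*} [AddCommMonoid M] {τ : Equiv.Perm L}
    (hτ : τ ∈ colorPerms π) (f : Equiv.Perm L → M) :
    ∑ σ ∈ colorPerms π, f (σ * τ) = ∑ σ ∈ colorPerms π, f σ :=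
  Finset.sum_bij' (fun σ _ => σ * τ) (fun σ _ => σ * τ⁻¹)
    (fun _ h => mul_mem_colorPerms h hτ) (fun _ h => mul_mem_colorPerms h (inv_mem_colorPerms hτ))
    (by simp) (by simp) (by simp)

theorem card_colorPerms_ne_zero (π : L → I) : ((colorPerms π).card : ℚ) ≠ 0 := by
  have hone : (1 : Equiv.Perm L) ∈ colorPerms π := by simp
  exact_mod_cast (Finset.card_pos.2 ⟨1, hone⟩).ne'

end ColorPerms

section ColorDiscriminant

variable {L I : Type*} [Fintype L]

/-- The product of the differences `X q - X p` over all ordered pairs of distinct labels of the same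
colour; up to sign, the product over the colours of the squared Vandermonde determinants. -/
noncomputable def colorDiscriminant (π : L → I) : MvPolynomial L ℚ :=
  ∏ a : L × L, if a.1 ≠ a.2 ∧ π a.1 = π a.2 then X a.2 - X a.1 else 1

theorem eval_colorDiscriminant_ne_zero_iff {π : L → I} {y : L → ℚ} :
    eval y (colorDiscriminant π) ≠ 0 ↔ ∀ p q, p ≠ q → π p = π q → y p ≠ y q := by
  rw [colorDiscriminant, map_prod, Finset.prod_ne_zero_iff]
  constructor
  · intro h p q hpq hc hy
    simpa [hpq, hc, hy] using h (p, q) (Finset.mem_univ _)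
  · intro h a _
    split_ifs with ha
    · rw [map_sub, eval_X, eval_X]
      exact sub_ne_zero.2 (h a.1 a.2 ha.1 ha.2).symm
    · simp

theorem eval_colorDiscriminant_ne_zero {π : L → I} {y : L → ℚ} (hy : Function.Injective y) :
    eval y (colorDiscriminant π) ≠ 0 :=
  eval_colorDiscriminant_ne_zero_iff.2 fun _ _ hpq _ => hy.ne hpq

theorem eval_comp_colorDiscriminant {π : L → I} {σ : Equiv.Perm L} (hσ : σ ∈ colorPerms π)
    (y : L → ℚ) : eval (y ∘ σ) (colorDiscriminant π) = eval y (colorDiscriminant π) := by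
  rw [mem_colorPerms] at hσ
  rw [colorDiscriminant, map_prod, map_prod]
  refine Fintype.prod_equiv (σ.prodCongr σ) _ _ fun a => ?_
  simp only [Equiv.prodCongr_apply, Prod.map_fst, Prod.map_snd, hσ, ne_eq, σ.injective.eq_iff]
  split_ifs <;> simp

theorem exists_injective_rat (L : Type*) [Finite L] : ∃ y : L → ℚ, Function.Injective y :=
  let ⟨f, hf⟩ := Countable.exists_injective_nat L
  ⟨fun p => f p, Nat.cast_injective.comp hf⟩

theorem colorDiscriminant_ne_zero (π : L → I) : colorDiscriminant π ≠ 0 := by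
  obtain ⟨y, hy⟩ := exists_injective_rat L
  intro h
  simpa [h] using eval_colorDiscriminant_ne_zero (π := π) hy

theorem eq_zero_of_eval_injective_eq_zero {L : Type*} [Finite L] {f : MvPolynomial L ℚ}
    (h : ∀ y, Function.Injective y → eval y f = 0) : f = 0 := by
  cases nonempty_fintype L
  refine eq_zero_of_eval_eq_zero_of_eval_ne_zero
    (colorDiscriminant_ne_zero fun _ : L => ()) fun y hy => h y fun p q hpq => ?_
  by_contra hne
  exact eval_colorDiscriminant_ne_zero_iff.1 hy p q hne rfl hpq

theorem colorDiscriminant_eq_prod_lt [LinearOrder L] (π : L → I) :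
    colorDiscriminant π =
      ∏ a : L × L with a.1 < a.2 ∧ π a.1 = π a.2, (X a.2 - X a.1) * (X a.1 - X a.2) := by
  have hswap : ∏ a : L × L with a.1 < a.2 ∧ π a.1 = π a.2, (X a.1 - X a.2 : MvPolynomial L ℚ) =
      ∏ a : L × L, if a.2 < a.1 ∧ π a.1 = π a.2 then (X a.2 - X a.1) else 1 := by
    rw [← Finset.prod_filter]
    refine Finset.prod_bij' (fun a _ => a.swap) (fun a _ => a.swap) ?_ ?_ ?_ ?_ ?_ <;>
      simp +contextual
  rw [Finset.prod_mul_distrib, hswap, Finset.prod_filter, ← Finset.prod_mul_distrib]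
  refine Finset.prod_congr rfl fun a _ => ?_
  rcases lt_trichotomy a.1 a.2 with h | h | h
  · simp [h, h.ne, h.not_gt]
  · simp [h]
  · simp [h, h.ne', h.not_gt]

theorem colorDiscriminant_dvd (π : L → I) (f : MvPolynomial L ℚ)
    (hvanish : ∀ p q, p ≠ q → π p = π q → ∀ y : L → ℚ, y p = y q → eval y f = 0)
    (hsymm : ∀ σ ∈ colorPerms π, rename σ f = f) : colorDiscriminant π ∣ f := by
  let _ : LinearOrder L := LinearOrder.lift' (Fintype.equivFin L) (Fintype.equivFin L).injective
  rw [colorDiscriminant_eq_prod_lt]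
  apply Finset.prod_dvd_of_isRelPrime
  · rintro ⟨p, q⟩ hpq ⟨r, s⟩ hrs hne
    simp only [Finset.coe_filter, Finset.mem_univ, true_and, Set.mem_ofPred_eq] at hpq hrs
    change IsRelPrime (_ * _) (_ * _)
    apply IsRelPrime.mul_left <;> apply IsRelPrime.mul_right <;> apply isRelPrime_X_sub_X <;>
      grind [hpq.1.ne, hrs.1.ne]
  · rintro ⟨p, q⟩ hpq
    simp only [Finset.mem_filter, Finset.mem_univ, true_and] at hpq
    have hsq : (X p - X q) ^ 2 ∣ f := X_sub_X_sq_dvd_of_rename_swap hpq.1.ne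
      (hvanish p q hpq.1.ne hpq.2) (hsymm _ (swap_mem_colorPerms hpq.2))
    exact Dvd.dvd.trans ⟨-1, by ring⟩ hsq

end ColorDiscriminant

section ShuffleSum

variable {L I : Type*} [Fintype L]

/-- The shuffle kernel `∏ (y_q - y_p) ^ e(π p, π q)` over the pairs of labels whose levels satisfy
`w p < w q`. For a quiver, `e(i, j)` is the number of arrows `i → j` minus `δ_{ij}`, and the kernel
is then the product of the localization factors of an iterated CoHA product. -/
noncomputable def shuffleKernel (e : I → I → ℤ) (π : L → I) (w : L → ℕ) (y : L → ℚ) : ℚ :=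
  ∏ a : L × L, if w a.1 < w a.2 then (y a.2 - y a.1) ^ e (π a.1) (π a.2) else 1

/-- The symmetrization of `g` times the shuffle kernel over the colour-preserving permutations: up
to a positive factor, the value at `y` of an iterated CoHA product. -/
noncomputable def shuffleSum (e : I → I → ℤ) (π : L → I) (w : L → ℕ) (g : MvPolynomial L ℚ)
    (y : L → ℚ) : ℚ :=
  ∑ σ ∈ colorPerms π, eval (y ∘ σ) g * shuffleKernel e π w (y ∘ σ)

/-- The polynomial `f` takes the values `φ y` at all points `y` with pairwise distinct coordinates;
there the shuffle kernels have no poles. -/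
def Represents {L : Type*} (f : MvPolynomial L ℚ) (φ : (L → ℚ) → ℚ) : Prop :=
  ∀ y, Function.Injective y → eval y f = φ y

theorem Represents.unique {L : Type*} [Finite L] {f f' : MvPolynomial L ℚ} {φ : (L → ℚ) → ℚ}
    (h : Represents f φ) (h' : Represents f' φ) : f = f' := by
  rw [← sub_eq_zero]
  exact eq_zero_of_eval_injective_eq_zero fun y hy => by rw [map_sub, h y hy, h' y hy, sub_self]

theorem shuffleSum_comp {e : I → I → ℤ} {π : L → I} {w : L → ℕ} {g : MvPolynomial L ℚ}
    {τ : Equiv.Perm L} (hτ : τ ∈ colorPerms π) (y : L → ℚ) :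
    shuffleSum e π w g (y ∘ τ) = shuffleSum e π w g y :=
  sum_colorPerms_mul_left hτ fun σ => eval (y ∘ σ) g * shuffleKernel e π w (y ∘ σ)

/-- The bounds on the exponents of a shuffle kernel coming from a quiver: the kernel
has at most simple poles, and only between labels of the same colour. -/
structure IsQuiverExponent (e : I → I → ℤ) : Prop where
  diag : ∀ i, -1 ≤ e i i
  off_diag : ∀ i j, i ≠ j → 0 ≤ e i j

theorem IsQuiverExponent.neg_one_le {e : I → I → ℤ} (he : IsQuiverExponent e) (i j : I) :
    -1 ≤ e i j := by
  by_cases h : i = j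
  · exact h ▸ he.diag i
  · exact le_trans (by norm_num) (he.off_diag i j h)

/-- The product of the shuffle kernel and the colour discriminant, as a polynomial. -/
noncomputable def clearedKernel (e : I → I → ℤ) (π : L → I) (w : L → ℕ) : MvPolynomial L ℚ :=
  ∏ a : L × L, if w a.1 < w a.2 then
    (X a.2 - X a.1) ^ (e (π a.1) (π a.2) + if π a.1 = π a.2 then 1 else 0).toNat
  else if a.1 ≠ a.2 ∧ π a.1 = π a.2 then X a.2 - X a.1 else 1

theorem eval_clearedKernel {e : I → I → ℤ} (he : IsQuiverExponent e) (π : L → I) (w : L → ℕ)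
    {y : L → ℚ} (hy : Function.Injective y) :
    eval y (clearedKernel e π w) = shuffleKernel e π w y * eval y (colorDiscriminant π) := by
  rw [clearedKernel, shuffleKernel, colorDiscriminant, map_prod, map_prod,
    ← Finset.prod_mul_distrib]
  refine Finset.prod_congr rfl fun a _ => ?_
  by_cases hw : w a.1 < w a.2
  · have hne : a.1 ≠ a.2 := fun h => hw.ne (congrArg w h)
    have hsub : y a.2 - y a.1 ≠ 0 := sub_ne_zero.2 (hy.ne hne.symm)
    by_cases hc : π a.1 = π a.2
    · have hdiag := he.diag (π a.2)
      simp only [hw, hc, hne, if_true, ne_eq, not_false_eq_true, and_self, map_pow, map_sub, eval_X]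
      rw [← zpow_natCast, Int.toNat_of_nonneg (by lia), zpow_add_one₀ hsub]
    · simp only [hw, hc, if_true, if_false, and_false, add_zero, map_pow, map_sub, eval_X, map_one,
        mul_one]
      rw [← zpow_natCast, Int.toNat_of_nonneg (he.off_diag _ _ hc)]
  · simp only [hw, if_false, one_mul]

theorem eval_clearedKernel_eq_zero (e : I → I → ℤ) (π : L → I) (w : L → ℕ) {y : L → ℚ} {p q : L}
    (hpq : p ≠ q) (hc : π p = π q) (h : y p = y q) : eval y (clearedKernel e π w) = 0 := by
  rw [clearedKernel, map_prod, Finset.prod_eq_zero_iff]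
  by_cases hw : w p < w q
  · exact ⟨(q, p), Finset.mem_univ _, by simp [hw.not_gt, hpq.symm, hc, h]⟩
  · exact ⟨(p, q), Finset.mem_univ _, by simp [hw, hpq, hc, h]⟩

theorem exists_represents_shuffleSum {e : I → I → ℤ} (he : IsQuiverExponent e) (π : L → I)
    (w : L → ℕ) (g : MvPolynomial L ℚ) : ∃ f, Represents f (shuffleSum e π w g) := by
  set f : MvPolynomial L ℚ := ∑ σ ∈ colorPerms π, rename σ (g * clearedKernel e π w) with hf
  have heval : ∀ y, eval y f = ∑ σ ∈ colorPerms π, eval (y ∘ σ) (g * clearedKernel e π w) := by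
    simp only [hf, map_sum, eval_rename, implies_true]
  have hvanish : ∀ p q, p ≠ q → π p = π q → ∀ y : L → ℚ, y p = y q → eval y f = 0 := by
    intro p q hpq hc y hy
    rw [heval]
    refine Finset.sum_eq_zero fun σ hσ => ?_
    have hinv := mem_colorPerms.1 (inv_mem_colorPerms hσ)
    rw [map_mul, eval_clearedKernel_eq_zero e π w (p := σ⁻¹ p) (q := σ⁻¹ q) (by simpa using hpq)
      (by rw [hinv, hinv, hc]) (by simpa using hy), mul_zero]
  have hsymm : ∀ σ ∈ colorPerms π, rename σ f = f := fun σ hσ => MvPolynomial.funext fun y => by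
    rw [eval_rename, heval, heval]
    exact sum_colorPerms_mul_left hσ fun τ => eval (y ∘ τ) (g * clearedKernel e π w)
  obtain ⟨P, hP⟩ := colorDiscriminant_dvd π f hvanish hsymm
  refine ⟨P, fun y hy => mul_left_cancel₀ (eval_colorDiscriminant_ne_zero (π := π) hy) ?_⟩
  rw [← map_mul, ← hP, heval, shuffleSum, Finset.mul_sum]
  refine Finset.sum_congr rfl fun σ hσ => ?_
  rw [map_mul, eval_clearedKernel he π w (hy.comp σ.injective), eval_comp_colorDiscriminant hσ]
  ring

end ShuffleSum

/-! ### The degree of the kernel and vanishing on the diagonal -/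

section Line

variable {L : Type*}

/-- The restriction of a polynomial to the line `l ↦ a + l b`. -/
noncomputable def restrictLine (a b : L → ℚ) : MvPolynomial L ℚ →ₐ[ℚ] Polynomial ℚ :=
  aeval fun p => Polynomial.C (a p) + Polynomial.C (b p) * Polynomial.X

theorem eval_restrictLine (a b : L → ℚ) (f : MvPolynomial L ℚ) (l : ℚ) :
    (restrictLine a b f).eval l = eval (fun p => a p + b p * l) f := by
  induction f using MvPolynomial.induction_on <;> simp_all [restrictLine]

theorem eval_eq_eval_zero_of_line [Finite L] {f : MvPolynomial L ℚ} {u : Polynomial ℚ}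
    {a b : L → ℚ} (hinj : ∃ l : ℚ, Function.Injective fun p => a p + b p * l)
    (h : ∀ l : ℚ, l ≠ 0 → (Function.Injective fun p => a p + b p * l) →
      eval (fun p => a p + b p * l) f = u.eval l) : eval a f = u.eval 0 := by
  cases nonempty_fintype L
  set Δ := restrictLine a b (colorDiscriminant fun _ : L => ()) with hΔdef
  have hΔ : Δ ≠ 0 := by
    obtain ⟨l, hl⟩ := hinj
    intro h0
    apply eval_colorDiscriminant_ne_zero (π := fun _ : L => ()) hl
    rw [← eval_restrictLine, ← hΔdef, h0, Polynomial.eval_zero]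
  have hmul : (restrictLine a b f - u) * (Polynomial.X * Δ) = 0 := by
    refine Polynomial.funext fun l => ?_
    rw [Polynomial.eval_mul, Polynomial.eval_sub, Polynomial.eval_mul, Polynomial.eval_X,
      Polynomial.eval_zero, hΔdef, eval_restrictLine, eval_restrictLine]
    rcases eq_or_ne l 0 with rfl | hl
    · simp
    by_cases hl' : Function.Injective fun p => a p + b p * l
    · rw [h l hl hl', sub_self, zero_mul]
    · have hzero : eval (fun p => a p + b p * l) (colorDiscriminant fun _ : L => ()) = 0 := by
        contrapose! hl'
        intro p q hpq
        by_contra hne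
        exact eval_colorDiscriminant_ne_zero_iff.1 hl' p q hne rfl hpq
      rw [hzero, mul_zero, mul_zero]
  have heq : restrictLine a b f = u :=
    sub_eq_zero.1 ((mul_eq_zero.1 hmul).resolve_right (mul_ne_zero Polynomial.X_ne_zero hΔ))
  rw [← heq, eval_restrictLine]
  simp

end Line

section Degree

variable {L I : Type*} [Fintype L] {e : I → I → ℤ} {π : L → I} {w : L → ℕ}

/-- The degree of the shuffle kernel as a homogeneous rational function. -/
noncomputable def kernelDegree (e : I → I → ℤ) (π : L → I) (w : L → ℕ) : ℤ :=
  ∑ a : L × L, if w a.1 < w a.2 then e (π a.1) (π a.2) else 0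

theorem prod_zpow_eq_zpow_sum {ι G : Type*} [CommGroupWithZero G] (s : Finset ι) (f : ι → ℤ) {l : G}
    (hl : l ≠ 0) : ∏ a ∈ s, l ^ f a = l ^ ∑ a ∈ s, f a := by
  induction s using Finset.induction_on with
  | empty => simp
  | insert a s ha ih => rw [Finset.prod_insert ha, Finset.sum_insert ha, zpow_add₀ hl, ih]

theorem shuffleKernel_add_mul (e : I → I → ℤ) (π : L → I) (w : L → ℕ) (y : L → ℚ) (x : ℚ) {l : ℚ}
    (hl : l ≠ 0) :
    shuffleKernel e π w (fun p => x + y p * l) =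
      l ^ kernelDegree e π w * shuffleKernel e π w y := by
  rw [shuffleKernel, shuffleKernel, kernelDegree, ← prod_zpow_eq_zpow_sum _ _ hl,
    ← Finset.prod_mul_distrib]
  refine Finset.prod_congr rfl fun a _ => ?_
  split_ifs
  · rw [← mul_zpow]
    congr 1
    ring
  · simp

/-- Every symmetrization with the kernel of `w` vanishes on the small diagonal. -/
def NullOnDiagonal (e : I → I → ℤ) (π : L → I) (w : L → ℕ) : Prop :=
  ∀ g f, Represents f (shuffleSum e π w g) → ∀ x : ℚ, eval (fun _ => x) f = 0

theorem nullOnDiagonal_of_kernelDegree_pos (h : 0 < kernelDegree e π w) :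
    NullOnDiagonal e π w := by
  intro g f hf x
  obtain ⟨y, hy⟩ := exists_injective_rat L
  rw [eval_eq_eval_zero_of_line (f := f) (b := y) (u := Polynomial.X ^ (kernelDegree e π w).toNat *
    ∑ σ ∈ colorPerms π, Polynomial.C (shuffleKernel e π w (y ∘ σ)) *
      restrictLine (fun _ => x) (y ∘ σ) g)]
  · simp [h]
  · exact ⟨1, fun a b hab => hy (by simpa using hab)⟩
  · intro l hl hinj
    rw [hf _ hinj, shuffleSum]
    simp only [Polynomial.eval_mul, Polynomial.eval_pow, Polynomial.eval_X,
      Polynomial.eval_finsetSum, Polynomial.eval_C, eval_restrictLine, Finset.mul_sum]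
    refine Finset.sum_congr rfl fun σ _ => ?_
    have hscale := shuffleKernel_add_mul e π w (y ∘ σ) x hl
    rw [← zpow_natCast, Int.toNat_of_nonneg h.le]
    simp only [Function.comp_def] at hscale ⊢
    rw [hscale]
    ring

theorem eq_C_of_kernelDegree_eq_zero (h : kernelDegree e π w = 0) {f : MvPolynomial L ℚ}
    (hf : Represents f (shuffleSum e π w 1)) : f = C (eval (fun _ => 0) f) := by
  rw [← sub_eq_zero]
  refine eq_zero_of_eval_injective_eq_zero fun y hy => ?_
  rw [map_sub, eval_C, sub_eq_zero, eq_comm]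
  rw [eval_eq_eval_zero_of_line (f := f) (b := y) (u := Polynomial.C (eval y f)),
    Polynomial.eval_C]
  · exact ⟨1, fun a b hab => hy (by simpa using hab)⟩
  · intro l hl hinj
    rw [hf _ hinj, Polynomial.eval_C, hf _ hy, shuffleSum, shuffleSum]
    refine Finset.sum_congr rfl fun σ _ => ?_
    have hscale := shuffleKernel_add_mul e π w (y ∘ σ) 0 hl
    rw [h, zpow_zero, one_mul] at hscale
    rw [← hscale, map_one, map_one]
    rfl

end Degree

section Levels

variable {L I : Type*} [Fintype L]

theorem shuffleKernel_comp_equiv {M : Type*} [Fintype M] (e : I → I → ℤ) (π : L → I) (w : L → ℕ)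
    (y : L → ℚ) (σ : M ≃ L) :
    shuffleKernel e (π ∘ σ) (w ∘ σ) (y ∘ σ) = shuffleKernel e π w y :=
  Fintype.prod_equiv (σ.prodCongr σ) _ _ fun _ => rfl

theorem shuffleKernel_comp_perm {e : I → I → ℤ} {π : L → I} (w : L → ℕ) (y : L → ℚ)
    {σ : Equiv.Perm L} (hσ : σ ∈ colorPerms π) :
    shuffleKernel e π (w ∘ σ) (y ∘ σ) = shuffleKernel e π w y := by
  have hπ : π ∘ σ = π := funext (mem_colorPerms.1 hσ)
  conv_lhs => rw [← hπ]
  exact shuffleKernel_comp_equiv e π w y σ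

theorem shuffleKernel_comp_perm_of_level_eq {e : I → I → ℤ} {π : L → I} {w : L → ℕ} (y : L → ℚ)
    {σ : Equiv.Perm L} (hσ : σ ∈ colorPerms π) (hw : w ∘ σ = w) :
    shuffleKernel e π w (y ∘ σ) = shuffleKernel e π w y := by
  simpa only [hw] using shuffleKernel_comp_perm (e := e) w y hσ

theorem shuffleKernel_subtype (e : I → I → ℤ) (π : L → I) (w : L → ℕ) (A : L → Prop)
    [Fintype {p // A p}] (y : L → ℚ) :
    shuffleKernel e (fun p : {p // A p} => π p) (fun p => w p) (fun p => y p) =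
      ∏ a : L × L, if A a.1 ∧ A a.2 ∧ w a.1 < w a.2 then
        (y a.2 - y a.1) ^ e (π a.1) (π a.2) else 1 := by
  refine Fintype.prod_of_injective (Prod.map Subtype.val Subtype.val)
    (Subtype.val_injective.prodMap Subtype.val_injective) _ _ ?_ ?_
  · intro a ha
    rw [if_neg]
    exact fun h => ha ⟨(⟨a.1, h.1⟩, ⟨a.2, h.2.1⟩), rfl⟩
  · rintro ⟨⟨a, ha⟩, ⟨b, hb⟩⟩
    simp [ha, hb]

theorem ofSubtype_mem_colorPerms {π : L → I} {A : L → Prop} {τ : Equiv.Perm {p // A p}}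
    (hτ : τ ∈ colorPerms fun p : {p // A p} => π p) :
    Equiv.Perm.ofSubtype τ ∈ colorPerms π := by
  rw [mem_colorPerms] at *
  intro p
  by_cases hp : A p
  · rw [Equiv.Perm.ofSubtype_apply_of_mem _ hp]
    exact hτ ⟨p, hp⟩
  · rw [Equiv.Perm.ofSubtype_apply_of_not_mem _ hp]

theorem sum_colorPerms_sum_mul_right {M ι : Type*} [AddCommMonoid M] {π : L → I} (s : Finset ι)
    (τ : ι → Equiv.Perm L) (hτ : ∀ i ∈ s, τ i ∈ colorPerms π) (f : ι → Equiv.Perm L → M) :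
    ∑ σ ∈ colorPerms π, ∑ i ∈ s, f i (σ * τ i) = ∑ σ ∈ colorPerms π, ∑ i ∈ s, f i σ := by
  rw [Finset.sum_comm, Finset.sum_comm (s := colorPerms π)]
  exact Finset.sum_congr rfl fun i hi => sum_colorPerms_mul_right (hτ i hi) (f i)

/-- The level function with the two levels `A` and its complement. -/
noncomputable def cutLevel {L : Type*} (A : L → Prop) (p : L) : ℕ :=
  if A p then 0 else 1

theorem cutLevel_comp_ofSubtype {L : Type*} {A : L → Prop} (τ : Equiv.Perm {p // A p}) :
    cutLevel A ∘ Equiv.Perm.ofSubtype τ = cutLevel A := by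
  funext p
  by_cases hp : A p
  · simp [cutLevel, hp, (τ ⟨p, hp⟩).2, Equiv.Perm.ofSubtype_apply_of_mem _ hp]
  · simp [Equiv.Perm.ofSubtype_apply_of_not_mem _ hp]

/-- The exponents of the pairs inside a cluster; the colours are refined by the cluster, and pairs
from different clusters do not interact. -/
noncomputable def clusterExponent {C : Type*} (e : I → I → ℤ) (a b : I × C) : ℤ :=
  if a.2 = b.2 then e a.1 b.1 else 0

theorem IsQuiverExponent.clusterExponent {C : Type*} {e : I → I → ℤ} (he : IsQuiverExponent e) :
    IsQuiverExponent (clusterExponent e : I × C → I × C → ℤ) where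
  diag i := by simpa [CoHA.clusterExponent] using he.diag i.1
  off_diag i j hij := by
    rw [CoHA.clusterExponent]
    split_ifs with h
    · exact he.off_diag _ _ fun h' => hij (Prod.ext h' h)
    · exact le_rfl

theorem shuffleKernel_eq_cutLevel_mul (e : I → I → ℤ) (π : L → I) (w : L → ℕ) (t : ℕ) (y : L → ℚ) :
    shuffleKernel e π w y = shuffleKernel e π (cutLevel fun p => w p < t) y *
      shuffleKernel (clusterExponent e) (fun p => (π p, w p < t)) w y := by
  rw [shuffleKernel, shuffleKernel, shuffleKernel, ← Finset.prod_mul_distrib]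
  refine Finset.prod_congr rfl fun a _ => ?_
  by_cases h1 : w a.1 < t <;> by_cases h2 : w a.2 < t <;> by_cases h3 : w a.1 < w a.2 <;>
    first | lia | simp [cutLevel, clusterExponent, h1, h2, h3]

theorem NullOnDiagonal.of_cutLevel {e : I → I → ℤ} (he : IsQuiverExponent e) {π : L → I}
    {w : L → ℕ} (t : ℕ) (h : NullOnDiagonal e π (cutLevel fun p => w p < t)) :
    NullOnDiagonal e π w := by
  intro g f hf x
  set π' : L → I × Prop := fun p => (π p, w p < t)
  obtain ⟨H, hH⟩ := exists_represents_shuffleSum he.clusterExponent π' w g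
  have hπ : ∀ τ ∈ colorPerms π', τ ∈ colorPerms π := fun τ hτ =>
    mem_colorPerms.2 fun p => congrArg Prod.fst (mem_colorPerms.1 hτ p)
  have hlevel : ∀ τ ∈ colorPerms π',
      (cutLevel fun p => w p < t) ∘ τ = cutLevel fun p => w p < t := fun τ hτ => funext fun p => by
    have hp : (w (τ p) < t) = (w p < t) := congrArg Prod.snd (mem_colorPerms.1 hτ p)
    simp [cutLevel, hp]
  have hrep : Represents (C ((colorPerms π').card : ℚ) * f)
      (shuffleSum e π (cutLevel fun p => w p < t) H) := by
    intro y hy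
    rw [map_mul, eval_C, hf y hy, shuffleSum, shuffleSum]
    calc ((colorPerms π').card : ℚ) *
          ∑ σ ∈ colorPerms π, eval (y ∘ σ) g * shuffleKernel e π w (y ∘ σ)
      _ = ∑ σ ∈ colorPerms π, ∑ τ ∈ colorPerms π',
            eval (y ∘ ⇑(σ * τ)) g * shuffleKernel e π w (y ∘ ⇑(σ * τ)) := by
          rw [sum_colorPerms_sum_mul_right _ (fun τ => τ) hπ
            fun _ σ => eval (y ∘ σ) g * shuffleKernel e π w (y ∘ σ)]
          simp only [Finset.sum_const, nsmul_eq_mul, Finset.mul_sum]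
      _ = _ := by
          refine Finset.sum_congr rfl fun σ _ => ?_
          rw [hH _ (hy.comp σ.injective), shuffleSum, Finset.sum_mul]
          refine Finset.sum_congr rfl fun τ hτ => ?_
          rw [shuffleKernel_eq_cutLevel_mul e π w t, Equiv.Perm.coe_mul, ← Function.comp_assoc,
            shuffleKernel_comp_perm_of_level_eq _ (hπ τ hτ) (hlevel τ hτ)]
          ring
  have hzero := h _ _ hrep x
  rw [map_mul, eval_C] at hzero
  exact (mul_eq_zero.1 hzero).resolve_left (card_colorPerms_ne_zero π')

theorem shuffleKernel_eq_cutLevel_mul_subtype (e : I → I → ℤ) (π : L → I) {A : L → Prop}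
    {w : L → ℕ} {M : ℕ} (hA : ∀ p, A p → w p < M) (hA' : ∀ p, ¬ A p → w p = M) (y : L → ℚ) :
    shuffleKernel e π w y = shuffleKernel e π (cutLevel A) y *
      shuffleKernel e (fun p : {p // A p} => π p) (fun p => w p) (fun p => y p) := by
  rw [shuffleKernel_subtype, shuffleKernel, shuffleKernel, ← Finset.prod_mul_distrib]
  refine Finset.prod_congr rfl fun a _ => ?_
  by_cases h1 : A a.1 <;> by_cases h2 : A a.2 <;> simp [cutLevel, h1, h2]
  · simp [hA' _ h2, hA _ h1]
  · simp [hA' _ h1, (hA _ h2).le.not_gt]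
  · simp [hA' _ h1, hA' _ h2]

theorem mul_shuffleSum_cutLevel {e : I → I → ℤ} {π : L → I} {A : L → Prop} {w : L → ℕ} {M : ℕ}
    (hA : ∀ p, A p → w p < M) (hA' : ∀ p, ¬ A p → w p = M) {k : ℚ}
    (hk : ∀ z, Function.Injective z →
      shuffleSum e (fun p : {p // A p} => π p) (fun p => w p) 1 z = k)
    (g : MvPolynomial L ℚ) {y : L → ℚ} (hy : Function.Injective y) :
    k * shuffleSum e π (cutLevel A) g y = shuffleSum e π w
      (∑ τ ∈ colorPerms fun p : {p // A p} => π p,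
        rename ((Equiv.Perm.ofSubtype τ)⁻¹ : Equiv.Perm L) g) y := by
  set πA : {p // A p} → I := fun p => π p
  set emb : Equiv.Perm {p // A p} → Equiv.Perm L := fun τ => Equiv.Perm.ofSubtype τ
  calc k * shuffleSum e π (cutLevel A) g y
    _ = ∑ σ ∈ colorPerms π, ∑ τ ∈ colorPerms πA,
          eval (y ∘ σ) g * shuffleKernel e π w (y ∘ ⇑(σ * emb τ)) := by
        rw [shuffleSum, Finset.mul_sum]
        refine Finset.sum_congr rfl fun σ _ => ?_
        rw [← hk (fun p => y (σ p)) fun a b hab => Subtype.ext (σ.injective (hy hab)), shuffleSum,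
          Finset.sum_mul]
        refine Finset.sum_congr rfl fun τ hτ => ?_
        rw [shuffleKernel_eq_cutLevel_mul_subtype e π hA hA', Equiv.Perm.coe_mul,
          ← Function.comp_assoc, shuffleKernel_comp_perm_of_level_eq _
            (ofSubtype_mem_colorPerms hτ) (cutLevel_comp_ofSubtype τ), map_one, one_mul]
        simp only [emb, Function.comp_def, Equiv.Perm.ofSubtype_apply_coe, πA]
        ring
    _ = ∑ σ ∈ colorPerms π, ∑ τ ∈ colorPerms πA,
          eval (y ∘ ⇑(σ * (emb τ)⁻¹)) g * shuffleKernel e π w (y ∘ σ) := by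
        rw [← sum_colorPerms_sum_mul_right _ (fun τ => (emb τ)⁻¹) fun τ hτ =>
          inv_mem_colorPerms (ofSubtype_mem_colorPerms hτ)]
        simp only [inv_mul_cancel_right, πA]
    _ = _ := by
        refine Finset.sum_congr rfl fun σ _ => ?_
        rw [map_sum, Finset.sum_mul]
        simp only [eval_rename, Equiv.Perm.coe_mul, Function.comp_assoc, emb]

theorem NullOnDiagonal.cutLevel {e : I → I → ℤ} {π : L → I} {A : L → Prop} {w : L → ℕ} {M : ℕ}
    (hA : ∀ p, A p → w p < M) (hA' : ∀ p, ¬ A p → w p = M) {k : ℚ} (hk₀ : k ≠ 0)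
    (hk : ∀ z, Function.Injective z →
      shuffleSum e (fun p : {p // A p} => π p) (fun p => w p) 1 z = k)
    (h : NullOnDiagonal e π w) : NullOnDiagonal e π (cutLevel A) := by
  intro g f hf x
  have hrep : Represents (C k * f) (shuffleSum e π w
      (∑ τ ∈ colorPerms fun p : {p // A p} => π p,
        rename ((Equiv.Perm.ofSubtype τ)⁻¹ : Equiv.Perm L) g)) := fun y hy => by
    rw [map_mul, eval_C, hf y hy, mul_shuffleSum_cutLevel hA hA' hk g hy]
  have hzero := h _ _ hrep x
  rw [map_mul, eval_C] at hzero
  exact (mul_eq_zero.1 hzero).resolve_left hk₀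

end Levels

section Clusters

variable {L I C : Type*}

/-- The polynomial in the variables of the subset `A` obtained by giving the other variables the
values `z`. -/
noncomputable def specialize (A : L → Prop) (z : {p // ¬ A p} → ℚ) :
    MvPolynomial L ℚ →ₐ[ℚ] MvPolynomial {p // A p} ℚ :=
  aeval fun p => if hp : A p then X ⟨p, hp⟩ else MvPolynomial.C (z ⟨p, hp⟩)

theorem eval_specialize (A : L → Prop) (y : L → ℚ) (h : MvPolynomial L ℚ) :
    eval (fun p : {p // A p} => y p) (specialize A (fun p => y p) h) = eval y h := by
  rw [specialize, eval_aeval]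
  congr 2
  funext p
  split_ifs <;> simp

variable [Fintype L]

theorem shuffleKernel_clusterExponent (e : I → I → ℤ) (π : L → I) (κ : L → C) (w : L → ℕ) (c : C)
    (y : L → ℚ) :
    shuffleKernel (clusterExponent e) (fun p => (π p, κ p)) w y =
      shuffleKernel (clusterExponent e) (fun p : {p // ¬ κ p = c} => (π p, κ p))
        (fun p => w p) (fun p => y p) *
      shuffleKernel e (fun p : {p // κ p = c} => π p) (fun p => w p) (fun p => y p) := by
  rw [shuffleKernel_subtype (clusterExponent e) (fun p => (π p, κ p)) w (¬ κ · = c) y,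
    shuffleKernel_subtype, shuffleKernel, ← Finset.prod_mul_distrib]
  refine Finset.prod_congr rfl fun a _ => ?_
  by_cases h1 : κ a.1 = c <;> by_cases h2 : κ a.2 = c
  · simp [h1, h2, clusterExponent]
  · simp [h1, h2, clusterExponent, Ne.symm h2]
  · simp [h1, h2, clusterExponent]
  · simp [h1, h2]

theorem ofSubtype_mem_colorPerms_cluster {π : L → I} {κ : L → C} {c : C}
    {τ : Equiv.Perm {p // κ p = c}} (hτ : τ ∈ colorPerms fun p : {p // κ p = c} => π p) :
    Equiv.Perm.ofSubtype τ ∈ colorPerms fun p => (π p, κ p) :=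
  ofSubtype_mem_colorPerms (mem_colorPerms.2 fun p =>
    Prod.ext (mem_colorPerms.1 hτ p) ((τ p).2.trans p.2.symm))

theorem card_mul_shuffleSum_clusterExponent (e : I → I → ℤ) (π : L → I) (κ : L → C) (w : L → ℕ)
    (c : C) (h : MvPolynomial L ℚ) (y : L → ℚ) :
    ((colorPerms fun p : {p // κ p = c} => π p).card : ℚ) *
        shuffleSum (clusterExponent e) (fun p => (π p, κ p)) w h y =
      ∑ σ ∈ colorPerms fun p => (π p, κ p),
        shuffleKernel (clusterExponent e) (fun p : {p // ¬ κ p = c} => (π p, κ p))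
          (fun p => w p) (fun p => y (σ p)) *
        shuffleSum e (fun p : {p // κ p = c} => π p) (fun p => w p)
          (specialize (κ · = c) (fun p => y (σ p)) h) (fun p => y (σ p)) := by
  calc _
    _ = ∑ σ ∈ colorPerms fun p => (π p, κ p),
          ∑ τ ∈ colorPerms fun p : {p // κ p = c} => π p,
            eval (y ∘ ⇑(σ * Equiv.Perm.ofSubtype τ)) h *
            shuffleKernel (clusterExponent e) (fun p => (π p, κ p)) w
              (y ∘ ⇑(σ * Equiv.Perm.ofSubtype τ)) := by
        rw [sum_colorPerms_sum_mul_right _ (fun τ => Equiv.Perm.ofSubtype τ)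
          (fun τ hτ => ofSubtype_mem_colorPerms_cluster hτ) fun _ σ => eval (y ∘ σ) h *
            shuffleKernel (clusterExponent e) (fun p => (π p, κ p)) w (y ∘ σ)]
        simp only [shuffleSum, Finset.sum_const, nsmul_eq_mul, Finset.mul_sum]
    _ = _ := by
        refine Finset.sum_congr rfl fun σ _ => ?_
        rw [shuffleSum, Finset.mul_sum]
        refine Finset.sum_congr rfl fun τ _ => ?_
        have hout : ∀ p : {p // ¬ κ p = c}, Equiv.Perm.ofSubtype τ (p : L) = p := fun p =>
          Equiv.Perm.ofSubtype_apply_of_not_mem _ p.2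
        rw [shuffleKernel_clusterExponent e π κ w c, ← eval_specialize (κ · = c)]
        simp only [Function.comp_def, Equiv.Perm.mul_apply, hout, Equiv.Perm.ofSubtype_apply_coe]
        ring

theorem eval_eq_zero_of_nullOnDiagonal_cluster_of_injective {e : I → I → ℤ}
    (he : IsQuiverExponent e) {π : L → I} {κ : L → C} {w : L → ℕ} {c : C}
    (hnull : NullOnDiagonal e (fun p : {p // κ p = c} => π p) fun p => w p)
    {h f : MvPolynomial L ℚ}
    (hf : Represents f (shuffleSum (clusterExponent e) (fun p => (π p, κ p)) w h)) (x : ℚ)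
    {y : L → ℚ} (hy : Function.Injective y) :
    eval (fun p => if κ p = c then x else y p) f = 0 := by
  choose Q hQ using fun z : {p // ¬ κ p = c} → ℚ => exists_represents_shuffleSum he
    (fun p : {p // κ p = c} => π p) (fun p => w p) (specialize (κ · = c) z h)
  set N : ℚ := ((colorPerms fun p : {p // κ p = c} => π p).card : ℚ) with hN
  set a : L → ℚ := fun p => if κ p = c then x else y p with ha
  set b : L → ℚ := fun p => if κ p = c then y p - x else 0 with hb
  have hline := eval_eq_eval_zero_of_line (f := MvPolynomial.C N * f) (a := a) (b := b)
    (u := ∑ σ ∈ colorPerms fun p => (π p, κ p), Polynomial.C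
      (shuffleKernel (clusterExponent e) (fun p : {p // ¬ κ p = c} => (π p, κ p))
        (fun p => w p) (fun p => y (σ p))) *
      restrictLine (fun _ => x) (fun p : {p // κ p = c} => y (σ p) - x)
        (Q fun p => y (σ p))) ?_ ?_
  · have hdiag := fun z => hnull _ _ (hQ z) x
    rw [map_mul, eval_C] at hline
    refine (mul_eq_zero.1 (hline.trans ?_)).resolve_left (card_colorPerms_ne_zero _)
    simp [Polynomial.eval_finsetSum, eval_restrictLine, hdiag]
  · refine ⟨1, ?_⟩
    convert hy using 1
    funext p
    simp only [ha, hb]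
    split_ifs <;> ring
  · intro l _ hinj
    rw [map_mul, eval_C, hf _ hinj, hN, card_mul_shuffleSum_clusterExponent,
      Polynomial.eval_finsetSum]
    refine Finset.sum_congr rfl fun σ hσ => ?_
    have hκ : ∀ p, κ (σ p) = κ p := fun p => congrArg Prod.snd (mem_colorPerms.1 hσ p)
    have hout : ∀ p : {p // ¬ κ p = c}, a (σ p) + b (σ p) * l = y (σ p) := fun p => by
      simp [ha, hb, hκ, p.2]
    have hin : ∀ p : {p // κ p = c}, a (σ p) + b (σ p) * l = x + (y (σ p) - x) * l := fun p => by
      simp [ha, hb, hκ, p.2]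
    rw [Polynomial.eval_mul, Polynomial.eval_C, eval_restrictLine, hQ]
    · simp only [hout, hin]
    · simp only [← hin]
      exact fun p q hpq => Subtype.ext (σ.injective (hinj hpq))

theorem eval_eq_zero_of_nullOnDiagonal_cluster {e : I → I → ℤ} (he : IsQuiverExponent e)
    {π : L → I} {κ : L → C} {w : L → ℕ} (c : C)
    (hnull : NullOnDiagonal e (fun p : {p // κ p = c} => π p) fun p => w p)
    {h f : MvPolynomial L ℚ}
    (hf : Represents f (shuffleSum (clusterExponent e) (fun p => (π p, κ p)) w h)) (x : C → ℚ) :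
    eval (x ∘ κ) f = 0 := by
  set f' : MvPolynomial L ℚ := aeval (fun p => if κ p = c then MvPolynomial.C (x c) else X p) f
  have heval : ∀ y, eval y f' = eval (fun p => if κ p = c then x c else y p) f := by
    intro y
    rw [eval_aeval]
    congr 2
    funext p
    split_ifs <;> simp
  have hf' : f' = 0 := eq_zero_of_eval_injective_eq_zero fun y hy => by
    rw [heval, eval_eq_zero_of_nullOnDiagonal_cluster_of_injective he hnull hf (x c) hy]
  have hx : x ∘ κ = fun p => if κ p = c then x c else (x ∘ κ) p := by
    funext p
    split_ifs with hp <;> simp [hp]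
  rw [hx, ← heval, hf', map_zero]

end Clusters

/-! ### The Euler form and Reineke systems -/

section EulerForm

variable {I : Type*} [Fintype I]

/-- The bilinear form `-∑ e(i,j) F(i) G(j)`; when `e` is the exponent matrix of a quiver this is
its Euler form. -/
noncomputable def eulerForm (e : I → I → ℤ) : LinearMap.BilinForm ℤ (I → ℤ) :=
  -Matrix.toBilin' (Matrix.of e)

theorem eulerForm_apply (e : I → I → ℤ) (F G : I → ℤ) :
    eulerForm e F G = -∑ i, ∑ j, F i * e i j * G j := by
  simp [eulerForm, Matrix.toBilin'_apply]

/-- The coercion of dimension vectors to integer vectors. -/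
def intVec {I : Type*} : (I → ℕ) →+ (I → ℤ) :=
  (Nat.castAddMonoidHom ℤ).compLeft I

@[simp]
theorem intVec_apply {I : Type*} (f : I → ℕ) (i : I) : intVec f i = f i := rfl

end EulerForm

section DimVec

variable {I L : Type*} [Fintype L]

/-- The dimension vector of a set `S` of coloured labels: the number of labels of each colour. -/
noncomputable def dimVec (π : L → I) (S : L → Prop) : I → ℤ :=
  fun i => ∑ p, if S p ∧ π p = i then 1 else 0

theorem dimVec_congr {π : L → I} {S T : L → Prop} (h : ∀ p, S p ↔ T p) :
    dimVec π S = dimVec π T :=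
  congrArg (dimVec π) (funext fun p => propext (h p))

theorem dimVec_nonneg (π : L → I) (S : L → Prop) : 0 ≤ dimVec π S :=
  fun _ => Finset.sum_nonneg fun _ _ => by split_ifs <;> norm_num

theorem dimVec_eq_zero_iff {π : L → I} {S : L → Prop} : dimVec π S = 0 ↔ ∀ p, ¬ S p := by
  constructor
  · intro h p hp
    have hsum := congrFun h (π p)
    rw [dimVec, Pi.zero_apply, Finset.sum_eq_zero_iff_of_nonneg fun _ _ => by
      split_ifs <;> norm_num] at hsum
    simpa [hp] using hsum p (Finset.mem_univ p)
  · intro h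
    funext i
    simp [dimVec, h]

theorem dimVec_and_add_dimVec_and_not (π : L → I) (S T : L → Prop) :
    dimVec π (fun p => S p ∧ T p) + dimVec π (fun p => S p ∧ ¬ T p) = dimVec π S := by
  funext i
  rw [Pi.add_apply, dimVec, dimVec, dimVec, ← Finset.sum_add_distrib]
  refine Finset.sum_congr rfl fun p _ => ?_
  by_cases h1 : S p <;> by_cases h2 : T p <;> simp [h1, h2]

theorem dimVec_add_dimVec_not (π : L → I) (S : L → Prop) :
    dimVec π S + dimVec π (fun p => ¬ S p) = dimVec π fun _ => True := by
  simpa only [true_and] using dimVec_and_add_dimVec_and_not π (fun _ => True) S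

theorem sum_dimVec_fiber {C : Type*} [Fintype C] (π : L → I) (κ : L → C) (T : L → Prop) :
    ∑ c, dimVec π (fun p => κ p = c ∧ T p) = dimVec π T := by
  funext i
  simp only [Finset.sum_apply, dimVec]
  rw [Finset.sum_comm]
  refine Finset.sum_congr rfl fun p _ => ?_
  by_cases h2 : T p <;> by_cases h3 : π p = i <;> simp [h2, h3]

theorem dimVec_comp_equiv {M : Type*} [Fintype M] (f : M ≃ L) (π : L → I) (S : L → Prop) :
    dimVec (π ∘ f) (S ∘ f) = dimVec π S :=
  funext fun _ => Fintype.sum_equiv f _ _ fun _ => rfl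

theorem dimVec_subtype (π : L → I) (A : L → Prop) (T : {p // A p} → Prop) :
    dimVec (fun p : {p // A p} => π p) T = dimVec π fun p => ∃ h : A p, T ⟨p, h⟩ := by
  funext i
  refine Fintype.sum_of_injective (fun p : {p // A p} => (p : L)) Subtype.val_injective _ _ ?_ ?_
  · intro p hp
    have hpA : ¬ A p := fun h => hp ⟨⟨p, h⟩, rfl⟩
    simp [hpA]
  · rintro ⟨p, hp⟩
    simp [hp]

theorem exists_equiv_of_dimVec_eq {M : Type*} [Fintype M] (π : L → I) (πM : M → I)
    (h : dimVec π (fun _ => True) = dimVec πM fun _ => True) :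
    ∃ f : L ≃ M, ∀ p, πM (f p) = π p := by
  have hfiber : ∀ i, Nonempty ({p // π p = i} ≃ {p // πM p = i}) := by
    intro i
    refine ⟨Fintype.equivOfCardEq ?_⟩
    have hi := congrFun h i
    simp only [dimVec, true_and, ← Finset.sum_filter, Finset.sum_const, nsmul_eq_mul,
      mul_one] at hi
    rw [Fintype.card_subtype, Fintype.card_subtype]
    exact_mod_cast hi
  exact ⟨Equiv.ofFiberEquiv fun i => (hfiber i).some, fun p => Equiv.ofFiberEquiv_map _ p⟩

variable [Fintype I]

theorem sum_dimVec_mul (π : L → I) (S : L → Prop) (f : I → ℤ) :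
    ∑ i, dimVec π S i * f i = ∑ p, if S p then f (π p) else 0 := by
  simp only [dimVec, Finset.sum_mul]
  rw [Finset.sum_comm]
  refine Finset.sum_congr rfl fun p _ => ?_
  by_cases hp : S p <;> simp [hp]

theorem eulerForm_dimVec (e : I → I → ℤ) (π : L → I) (S T : L → Prop) :
    eulerForm e (dimVec π S) (dimVec π T) =
      -∑ a : L × L, if S a.1 ∧ T a.2 then e (π a.1) (π a.2) else 0 := by
  simp only [eulerForm_apply, mul_assoc, ← Finset.mul_sum, mul_comm (e _ _)]
  rw [sum_dimVec_mul, Fintype.sum_prod_type, neg_inj]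
  refine Finset.sum_congr rfl fun p _ => ?_
  rw [sum_dimVec_mul]
  by_cases hp : S p <;> simp [hp]

theorem kernelDegree_cutLevel (e : I → I → ℤ) (π : L → I) (A : L → Prop) :
    kernelDegree e π (cutLevel A) = -eulerForm e (dimVec π A) (dimVec π fun p => ¬ A p) := by
  rw [eulerForm_dimVec, neg_neg]
  refine Finset.sum_congr rfl fun a _ => ?_
  by_cases h1 : A a.1 <;> by_cases h2 : A a.2 <;> simp [cutLevel, h1, h2]

theorem kernelDegree_fin {r : ℕ} (e : I → I → ℤ) (π : L → I) (ρ : L → Fin r) :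
    kernelDegree e π (fun p => ρ p) = -∑ a : Fin r × Fin r with a.1 < a.2,
      eulerForm e (dimVec π fun p => ρ p = a.1) (dimVec π fun p => ρ p = a.2) := by
  simp only [eulerForm_dimVec, Finset.sum_neg_distrib, neg_neg]
  rw [Finset.sum_comm, kernelDegree]
  refine Finset.sum_congr rfl fun b _ => ?_
  rw [Finset.sum_filter, Finset.sum_eq_single (ρ b.1, ρ b.2)]
  · simp
  · rintro ⟨u, v⟩ _ hne
    have huv : ¬ (ρ b.1 = u ∧ ρ b.2 = v) := fun h => hne (by rw [h.1, h.2])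
    simp [huv]
  · simp

end DimVec

section Clusters

variable {L I C : Type*} [Fintype L] {r : ℕ}

theorem dimVec_fiber_and_level (π : L → I) (κ : L → C) (ρ : C → Fin r) (c : C) (u : Fin r) :
    dimVec π (fun p => κ p = c ∧ ρ (κ p) = u) =
      if ρ c = u then dimVec π (fun p => κ p = c) else 0 := by
  split_ifs with hc
  · exact dimVec_congr fun p => ⟨fun h => h.1, fun h => ⟨h, h ▸ hc⟩⟩
  · exact dimVec_eq_zero_iff.2 fun p h => hc (h.1 ▸ h.2)

theorem dimVec_level [Fintype C] {β : Fin r → I → ℕ} {π : L → I} {κ : L → C} {ρ : C → Fin r}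
    (hκ : ∀ c, dimVec π (fun p => κ p = c) = intVec (β (ρ c))) (u : Fin r) :
    dimVec π (fun p => ρ (κ p) = u) = ({c | ρ c = u} : Finset C).card • intVec (β u) := by
  rw [← sum_dimVec_fiber π κ, ← Finset.sum_const, Finset.sum_filter]
  refine Finset.sum_congr rfl fun c _ => ?_
  rw [dimVec_fiber_and_level, hκ]
  split_ifs with hc <;> simp [hc]

-- Both sides are the correction to `dim {v = t} = dim {ρ ∘ κ = t}`, computed cluster by cluster.
theorem sum_dimVec_le_eq_sum_dimVec_gt [Fintype C] {π : L → I} {κ : L → C} {ρ : C → Fin r}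
    {v : L → Fin r} {t : Fin r}
    (hdim : dimVec π (fun p => v p = t) = dimVec π fun p => ρ (κ p) = t)
    (hlt : ∀ u < t, ∀ p, v p = u ↔ ρ (κ p) = u) :
    ∑ c with t < ρ c, dimVec π (fun p => κ p = c ∧ v p ≤ t) =
      ∑ c with ρ c = t, dimVec π (fun p => κ p = c ∧ ¬ v p ≤ t) := by
  have hge : ∀ c, t ≤ ρ c →
      dimVec π (fun p => κ p = c ∧ v p = t) = dimVec π fun p => κ p = c ∧ v p ≤ t := by
    refine fun c hc => dimVec_congr fun p => and_congr_right fun hp => ⟨fun h => h.le, fun h => ?_⟩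
    by_contra hne
    have hv := (hlt _ (lt_of_le_of_ne h hne) p).1 rfl
    exact (lt_of_le_of_ne h hne).not_ge (hv ▸ hp ▸ hc)
  have hleft : ∀ c, dimVec π (fun p => κ p = c ∧ v p = t) =
      (if ρ c = t then dimVec π (fun p => κ p = c ∧ v p ≤ t) else 0) +
        if t < ρ c then dimVec π (fun p => κ p = c ∧ v p ≤ t) else 0 := by
    intro c
    rcases lt_trichotomy t (ρ c) with h | h | h
    · rw [if_neg h.ne', if_pos h, zero_add, hge c h.le]
    · rw [if_pos h.symm, if_neg h.not_lt, add_zero, hge c h.le]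
    · rw [if_neg h.ne, if_neg h.not_gt, add_zero, dimVec_eq_zero_iff]
      rintro p ⟨rfl, hp⟩
      exact h.ne' (hp.symm.trans ((hlt _ h p).2 rfl))
  have hright : ∀ c, dimVec π (fun p => κ p = c ∧ ρ (κ p) = t) =
      (if ρ c = t then dimVec π (fun p => κ p = c ∧ v p ≤ t) else 0) +
        if ρ c = t then dimVec π (fun p => κ p = c ∧ ¬ v p ≤ t) else 0 := by
    intro c
    rw [dimVec_fiber_and_level, ← dimVec_and_add_dimVec_and_not π (fun p => κ p = c) (v · ≤ t)]
    split_ifs <;> simp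
  rw [← sum_dimVec_fiber π κ, ← sum_dimVec_fiber π κ (fun p => ρ (κ p) = t)] at hdim
  simp only [hleft, hright, Finset.sum_add_distrib, add_right_inj] at hdim
  rw [Finset.sum_filter, Finset.sum_filter, hdim]

end Clusters

section ReinekeSystem

variable {I : Type*} [Fintype I] {r : ℕ}

/-- The properties of the exponents of a quiver and of the roots of a Dynkin subquiver partition, in
Reineke order, on which the injectivity of the iterated product rests. -/
structure IsReinekeSystem (e : I → I → ℤ) (β : Fin r → I → ℕ) : Prop where
  exponent : IsQuiverExponent e
  eulerForm_nonpos : ∀ u v, u < v → eulerForm e (intVec (β u)) (intVec (β v)) ≤ 0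
  eulerForm_self : ∀ u, eulerForm e (intVec (β u)) (intVec (β u)) = 1
  eulerForm_self_pos : ∀ t (G : I → ℤ), 0 ≤ G → G ≤ intVec (β t) → G ≠ 0 → 0 < eulerForm e G G
  exists_orthogonal_decomposition : ∀ t d, t < d → ∀ F : I → ℤ, 0 ≤ F → F ≤ intVec (β d) →
    0 < eulerForm e (intVec (β t)) F →
    ∃ m : Fin r → ℕ, F = ∑ u, m u • intVec (β u) ∧
      ∀ u v, u < v → m u ≠ 0 → m v ≠ 0 → eulerForm e (intVec (β u)) (intVec (β v)) = 0

variable {L C : Type*} [Fintype L] {e : I → I → ℤ} {β : Fin r → I → ℕ} {π : L → I}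
  {κ : L → C} {ρ : C → Fin r} {v : L → Fin r}

theorem IsReinekeSystem.eulerForm_dimVec_gt_pos (hβ : IsReinekeSystem e β) {c : C}
    (hκ : dimVec π (fun p => κ p = c) = intVec (β (ρ c)))
    (hcut : 0 ≤ eulerForm e (dimVec π fun p => κ p = c ∧ v p ≤ ρ c)
      (dimVec π fun p => κ p = c ∧ ¬ v p ≤ ρ c))
    (hne : dimVec π (fun p => κ p = c ∧ ¬ v p ≤ ρ c) ≠ 0) :
    0 < eulerForm e (intVec (β (ρ c))) (dimVec π fun p => κ p = c ∧ ¬ v p ≤ ρ c) := by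
  have hadd := dimVec_and_add_dimVec_and_not π (fun p => κ p = c) (v · ≤ ρ c)
  rw [hκ] at hadd
  have hself := hβ.eulerForm_self_pos (ρ c) _ (dimVec_nonneg _ _)
    (hadd ▸ le_add_of_nonneg_left (dimVec_nonneg _ _)) hne
  rw [← hadd, map_add, LinearMap.add_apply]
  exact add_pos_of_nonneg_of_pos hcut hself

variable [Finite C]

theorem IsReinekeSystem.dimVec_eq_zero_of_level_eq_below (hβ : IsReinekeSystem e β)
    (hκ : ∀ c, dimVec π (fun p => κ p = c) = intVec (β (ρ c)))
    (hcut : ∀ c, 0 ≤ eulerForm e (dimVec π fun p => κ p = c ∧ v p ≤ ρ c)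
      (dimVec π fun p => κ p = c ∧ ¬ v p ≤ ρ c)) {t : Fin r}
    (hdim : dimVec π (fun p => v p = t) = dimVec π fun p => ρ (κ p) = t)
    (hlower : ∀ c, t < ρ c → eulerForm e (intVec (β t)) (dimVec π fun p => κ p = c ∧ v p ≤ t) ≤ 0)
    (hlt : ∀ u < t, ∀ p, v p = u ↔ ρ (κ p) = u) :
    (∀ c, ρ c = t → dimVec π (fun p => κ p = c ∧ ¬ v p ≤ t) = 0) ∧
      ∀ c, t < ρ c → dimVec π (fun p => κ p = c ∧ v p ≤ t) = 0 := by
  cases nonempty_fintype C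
  have hsum := sum_dimVec_le_eq_sum_dimVec_gt hdim hlt
  have hgt : ∀ c, ρ c = t → dimVec π (fun p => κ p = c ∧ ¬ v p ≤ t) = 0 := by
    rintro c rfl
    by_contra hne
    have hle : ∑ c' with ρ c' = ρ c, eulerForm e (intVec (β (ρ c)))
        (dimVec π fun p => κ p = c' ∧ ¬ v p ≤ ρ c) ≤ 0 := by
      rw [← map_sum, ← hsum, map_sum]
      exact Finset.sum_nonpos fun c' hc' => hlower c' (Finset.mem_filter.1 hc').2
    refine hle.not_gt (Finset.sum_pos' (fun c' hc' => ?_) ⟨c, by simp,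
      hβ.eulerForm_dimVec_gt_pos (hκ c) (hcut c) hne⟩)
    rw [← (Finset.mem_filter.1 hc').2]
    by_cases h0 : dimVec π (fun p => κ p = c' ∧ ¬ v p ≤ ρ c') = 0
    · rw [h0, map_zero]
    · exact (hβ.eulerForm_dimVec_gt_pos (hκ c') (hcut c') h0).le
  refine ⟨hgt, fun c hc => ?_⟩
  rw [Finset.sum_eq_zero fun c' hc' => hgt c' (Finset.mem_filter.1 hc').2,
    Finset.sum_eq_zero_iff_of_nonneg fun _ _ => dimVec_nonneg _ _] at hsum
  exact hsum c (by simpa using hc)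

theorem IsReinekeSystem.level_eq (hβ : IsReinekeSystem e β)
    (hκ : ∀ c, dimVec π (fun p => κ p = c) = intVec (β (ρ c)))
    (hdim : ∀ u, dimVec π (fun p => v p = u) = dimVec π fun p => ρ (κ p) = u)
    (hcut : ∀ c, 0 ≤ eulerForm e (dimVec π fun p => κ p = c ∧ v p ≤ ρ c)
      (dimVec π fun p => κ p = c ∧ ¬ v p ≤ ρ c))
    (hlower : ∀ c t, t < ρ c →
      eulerForm e (intVec (β t)) (dimVec π fun p => κ p = c ∧ v p ≤ t) ≤ 0) (p : L) :
    v p = ρ (κ p) := by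
  suffices h : ∀ t p, v p = t ↔ ρ (κ p) = t from (h _ p).2 rfl
  intro t
  induction t using WellFoundedLT.induction with
  | _ t ih =>
  obtain ⟨hgt, hle⟩ :=
    hβ.dimVec_eq_zero_of_level_eq_below hκ hcut (hdim t) (fun c => hlower c t) ih
  intro p
  constructor
  · intro hp
    rcases lt_trichotomy t (ρ (κ p)) with h | h | h
    · exact (dimVec_eq_zero_iff.1 (hle _ h) p ⟨rfl, hp.le⟩).elim
    · exact h.symm
    · exact ((ih _ h p).2 rfl).symm.trans hp
  · intro hp
    have hvt : v p ≤ t := by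
      by_contra h
      exact dimVec_eq_zero_iff.1 (hgt _ hp) p ⟨rfl, h⟩
    by_contra hne
    exact hne ((ih _ (lt_of_le_of_ne hvt hne) p).1 rfl ▸ hp)

end ReinekeSystem

/-! ### Evaluation at clusters -/

section ClusterFormula

variable {I L : Type*} [Fintype L] {e : I → I → ℤ} {π : L → I}

theorem shuffleKernel_ne_zero {w : L → ℕ} {y : L → ℚ} (h : ∀ p q, w p < w q → y p ≠ y q) :
    shuffleKernel e π w y ≠ 0 := by
  refine Finset.prod_ne_zero_iff.2 fun a _ => ?_
  split_ifs with hw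
  · exact zpow_ne_zero _ (sub_ne_zero.2 (h _ _ hw).symm)
  · exact one_ne_zero

/-- The evaluation formula for symmetrizations on the label set `L`: when the labels are grouped
into clusters `c` with dimension vector the root `β (ρ c)`, at a point which is constant on the
clusters only the permutations preserving the levels `ρ ∘ κ` contribute. -/
def HasClusterFormula {r : ℕ} (e : I → I → ℤ) (β : Fin r → I → ℕ) (L : Type*) [Fintype L] :
    Prop :=
  ∀ (C : Type) [Finite C] (π : L → I) (κ : L → C) (ρ : C → Fin r)
    (_ : ∀ c, dimVec π (fun p => κ p = c) = intVec (β (ρ c))) (g f : MvPolynomial L ℚ)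
    (_ : Represents f (shuffleSum e π (fun p => ρ (κ p)) g)) (x : C → ℚ)
    (_ : Function.Injective x),
    eval (x ∘ κ) f = (∑ σ ∈ colorPerms π with ∀ p, ρ (κ (σ p)) = ρ (κ p), eval (x ∘ κ ∘ σ) g) *
      shuffleKernel e π (fun p => ρ (κ p)) (x ∘ κ)

variable {r : ℕ} {β : Fin r → I → ℕ}

theorem kernelDegree_eq_zero_of_orthogonal [Fintype I] {C : Type*} [Finite C] {κ : L → C}
    {ρ : C → Fin r} (hκ : ∀ c, dimVec π (fun p => κ p = c) = intVec (β (ρ c)))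
    (horth : ∀ c d, ρ c < ρ d → eulerForm e (intVec (β (ρ c))) (intVec (β (ρ d))) = 0) :
    kernelDegree e π (fun p => ρ (κ p)) = 0 := by
  cases nonempty_fintype C
  rw [kernelDegree_fin e π fun p => ρ (κ p), neg_eq_zero]
  refine Finset.sum_eq_zero fun a ha => ?_
  rw [dimVec_level hκ, dimVec_level hκ, map_nsmul, map_nsmul, LinearMap.smul_apply]
  rcases Finset.eq_empty_or_nonempty ({c | ρ c = a.1} : Finset C) with h₁ | ⟨c, hc⟩
  · rw [h₁, Finset.card_empty, zero_nsmul, smul_zero]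
  rcases Finset.eq_empty_or_nonempty ({c | ρ c = a.2} : Finset C) with h₂ | ⟨d, hd⟩
  · rw [h₂, Finset.card_empty, zero_nsmul]
  rw [Finset.mem_filter_univ] at hc hd ha
  rw [← hc, ← hd, horth c d (by rwa [hc, hd]), smul_zero, smul_zero]

theorem HasClusterFormula.exists_shuffleSum_one_eq (h : HasClusterFormula e β L)
    (he : IsQuiverExponent e) {C : Type} [Finite C] {κ : L → C} {ρ : C → Fin r}
    (hκ : ∀ c, dimVec π (fun p => κ p = c) = intVec (β (ρ c)))
    (hdeg : kernelDegree e π (fun p => ρ (κ p)) = 0) :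
    ∃ k ≠ 0, ∀ z, Function.Injective z → shuffleSum e π (fun p => ρ (κ p)) 1 z = k := by
  obtain ⟨f, hf⟩ := exists_represents_shuffleSum he π (fun p => ρ (κ p)) 1
  obtain ⟨x, hx⟩ := exists_injective_rat C
  have hconst := eq_C_of_kernelDegree_eq_zero hdeg hf
  refine ⟨_, ?_, fun z hz => (hf z hz).symm.trans (by rw [hconst, eval_C])⟩
  have hformula := h C π κ ρ hκ 1 f hf x hx
  rw [hconst, eval_C] at hformula
  rw [hformula]
  refine mul_ne_zero ?_ (shuffleKernel_ne_zero fun p q hpq heq => ?_)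
  · have hmem : (1 : Equiv.Perm L) ∈
        ({σ ∈ colorPerms π | ∀ p, ρ (κ (σ p)) = ρ (κ p)} : Finset (Equiv.Perm L)) := by simp
    simpa using Finset.card_ne_zero_of_mem hmem
  · exact hpq.ne (by rw [hx heq])

theorem exists_clustering [Finite I] {m : Fin r → ℕ}
    (hdim : dimVec π (fun _ => True) = ∑ u, m u • intVec (β u)) :
    ∃ κ : L → Σ u, Fin (m u), ∀ c, dimVec π (fun p => κ p = c) = intVec (β c.1) := by
  cases nonempty_fintype I
  set M := Σ c : (Σ u, Fin (m u)), Σ i, Fin (β c.1 i)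
  set πM : M → I := fun x => x.2.1
  have hfiber : ∀ c, dimVec πM (fun x => x.1 = c) = intVec (β c.1) := by
    intro c
    funext i
    rw [dimVec, Fintype.sum_sigma, Finset.sum_eq_single c (fun b _ hb => by simp [hb]) (by simp),
      Fintype.sum_sigma]
    simp [πM]
  have htotal : dimVec π (fun _ => True) = dimVec πM fun _ => True := by
    rw [hdim, ← sum_dimVec_fiber πM Sigma.fst, Fintype.sum_sigma]
    simp [hfiber]
  obtain ⟨f, hf⟩ := exists_equiv_of_dimVec_eq _ _ htotal
  refine ⟨fun p => (f p).1, fun c => ?_⟩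
  rw [← hfiber c, ← dimVec_comp_equiv f, ← (funext hf : πM ∘ f = π)]
  rfl

variable [Fintype I]

theorem IsReinekeSystem.exists_le_of_eulerForm_pos (hβ : IsReinekeSystem e β) {t : Fin r}
    {m : Fin r → ℕ} (h : 0 < eulerForm e (intVec (β t)) (∑ u, m u • intVec (β u))) :
    ∃ u ≤ t, m u ≠ 0 := by
  by_contra! hm
  refine h.not_ge ?_
  rw [map_sum]
  refine Finset.sum_nonpos fun u _ => ?_
  rw [map_nsmul]
  by_cases hu : u ≤ t
  · simp [hm u hu]
  · exact nsmul_nonpos (hβ.eulerForm_nonpos t u (not_le.1 hu)) _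

theorem IsReinekeSystem.nullOnDiagonal_cutLevel (hβ : IsReinekeSystem e β) {t d : Fin r}
    (htd : t < d) (hdim : dimVec π (fun _ => True) = intVec (β d)) {S : L → Prop} {k : ℕ}
    (hk : k ≠ 0) (hS : dimVec π S = k • intVec (β t)) : NullOnDiagonal e π (cutLevel S) := by
  apply nullOnDiagonal_of_kernelDegree_pos
  have hcompl : dimVec π (fun p => ¬ S p) = intVec (β d) - k • intVec (β t) := by
    rw [← hdim, ← dimVec_add_dimVec_not π S, hS, add_sub_cancel_left]
  have hpos : (0 : ℤ) < k := by positivity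
  have hneg := hβ.eulerForm_nonpos t d htd
  rw [kernelDegree_cutLevel, hcompl, hS, map_sub, map_nsmul, map_nsmul, LinearMap.smul_apply,
    LinearMap.smul_apply, hβ.eulerForm_self]
  simp only [nsmul_eq_mul, mul_one]
  nlinarith

-- If the form were positive, `A` would split into pairwise orthogonal roots, whose symmetrization
-- is a nonzero constant; refining the cut at `A` by these levels and coarsening it to the lowest
-- one yields a kernel of positive degree.
theorem IsReinekeSystem.eulerForm_nonpos_of_not_nullOnDiagonal {L : Type*} [Fintype L] {π : L → I}
    (hβ : IsReinekeSystem e β) {A : L → Prop} (hformula : (∃ p, ¬ A p) →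
      HasClusterFormula e β {p // A p}) {t d : Fin r} (htd : t < d)
    (hdim : dimVec π (fun _ => True) = intVec (β d))
    (hA : ¬ NullOnDiagonal e π (cutLevel A)) :
    eulerForm e (intVec (β t)) (dimVec π A) ≤ 0 := by
  by_contra! hpos
  have hle : dimVec π A ≤ intVec (β d) := by
    rw [← hdim, ← dimVec_add_dimVec_not π A]
    exact le_add_of_nonneg_right (dimVec_nonneg _ _)
  have hproper : ∃ p, ¬ A p := by
    by_contra! hall
    rw [dimVec_congr fun p => iff_true_intro (hall p), hdim] at hpos
    exact (hβ.eulerForm_nonpos t d htd).not_gt hpos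
  obtain ⟨m, hm, horth⟩ :=
    hβ.exists_orthogonal_decomposition t d htd _ (dimVec_nonneg _ _) hle hpos
  obtain ⟨κ, hκ⟩ := exists_clustering (π := fun p : {p // A p} => π p) (β := β) (m := m)
    (by rw [dimVec_subtype, ← hm]; simp only [exists_prop, and_true])
  have hdeg := kernelDegree_eq_zero_of_orthogonal (ρ := Sigma.fst) hκ fun c d hcd =>
    horth _ _ hcd (Fin.pos c.2).ne' (Fin.pos d.2).ne'
  obtain ⟨k, hk₀, hk⟩ := (hformula hproper).exists_shuffleSum_one_eq hβ.exponent hκ hdeg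
  obtain ⟨u, hut, hu⟩ := hβ.exists_le_of_eulerForm_pos (hm ▸ hpos)
  have : Nonempty (Σ u, Fin (m u)) := ⟨⟨u, ⟨0, Nat.pos_of_ne_zero hu⟩⟩⟩
  obtain ⟨c, hc⟩ := Finite.exists_min (Sigma.fst : (Σ u, Fin (m u)) → Fin r)
  set w : L → ℕ := fun p => if h : A p then (κ ⟨p, h⟩).1 else r
  have hw : (fun p : {p // A p} => w p) = fun p => ((κ p).1 : ℕ) := funext fun p => by
    simp [w, p.2]
  refine hA (NullOnDiagonal.cutLevel (w := w) (M := r) (fun p hp => by simp [w, hp])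
    (fun p hp => by simp [w, hp]) hk₀ (by rwa [hw]) ?_)
  refine NullOnDiagonal.of_cutLevel hβ.exponent (c.1 + 1 : ℕ)
    (hβ.nullOnDiagonal_cutLevel (((hc ⟨u, ⟨0, Nat.pos_of_ne_zero hu⟩⟩).trans hut).trans_lt htd)
      hdim (Finset.card_ne_zero_of_mem (by simp : c ∈ ({c' | c'.1 = c.1} : Finset _))) ?_)
  rw [← dimVec_level hκ, dimVec_subtype]
  refine dimVec_congr fun p => ?_
  by_cases hp : A p
  · have hmin := hc (κ ⟨p, hp⟩)
    simp only [w, hp, dif_pos, exists_true_left]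
    rw [Fin.le_def] at hmin
    rw [Fin.ext_iff]
    lia
  · simp only [w, hp, IsEmpty.exists_iff]
    lia

end ClusterFormula

section CrossKernel

variable {I L C : Type*} [Fintype L]

/-- The factors of the shuffle kernel of `w` between labels in different fibres of `κ`. -/
noncomputable def crossKernel (e : I → I → ℤ) (π : L → I) (κ : L → C) (w : L → ℕ) (y : L → ℚ) :
    ℚ :=
  ∏ a : L × L, if w a.1 < w a.2 ∧ κ a.1 ≠ κ a.2 then
    (y a.2 - y a.1) ^ e (π a.1) (π a.2) else 1

theorem shuffleKernel_eq_crossKernel_mul (e : I → I → ℤ) (π : L → I) (κ : L → C) (w : L → ℕ)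
    (y : L → ℚ) :
    shuffleKernel e π w y =
      crossKernel e π κ w y * shuffleKernel (clusterExponent e) (fun p => (π p, κ p)) w y := by
  unfold shuffleKernel crossKernel clusterExponent
  rw [← Finset.prod_mul_distrib]
  refine Finset.prod_congr rfl fun a _ => ?_
  by_cases h₁ : κ a.1 = κ a.2 <;> by_cases h₂ : w a.1 < w a.2 <;> simp [h₁, h₂]

theorem shuffleKernel_clusterExponent_eq_one (e : I → I → ℤ) (π : L → I) {κ : L → C} {w : L → ℕ}
    (hw : ∀ p q, κ p = κ q → w p = w q) (y : L → ℚ) :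
    shuffleKernel (clusterExponent e) (fun p => (π p, κ p)) w y = 1 := by
  refine Finset.prod_eq_one fun a _ => ?_
  split_ifs with h
  · have hne : κ a.1 ≠ κ a.2 := fun h' => h.ne (hw _ _ h')
    simp [clusterExponent, hne]
  · rfl

/-- The product of the differences of the variables in different fibres of `κ`. -/
noncomputable def crossDiscriminant (κ : L → C) : MvPolynomial L ℚ :=
  ∏ a : L × L, if κ a.1 ≠ κ a.2 then X a.2 - X a.1 else 1

/-- The product of the crossing kernel and the crossing discriminant, as a polynomial. -/
noncomputable def clearedCrossKernel (e : I → I → ℤ) (π : L → I) (κ : L → C) (w : L → ℕ) :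
    MvPolynomial L ℚ :=
  ∏ a : L × L, if κ a.1 ≠ κ a.2 then (if w a.1 < w a.2 then
    (X a.2 - X a.1) ^ (e (π a.1) (π a.2) + 1).toNat else X a.2 - X a.1) else 1

theorem eval_crossDiscriminant_ne_zero {κ : L → C} {y : L → ℚ}
    (hy : ∀ p q, κ p ≠ κ q → y p ≠ y q) : eval y (crossDiscriminant κ) ≠ 0 := by
  rw [crossDiscriminant, map_prod, Finset.prod_ne_zero_iff]
  intro a _
  split_ifs with h
  · simpa [sub_eq_zero] using (hy _ _ h).symm
  · simp

theorem eval_comp_crossDiscriminant {κ : L → C} {σ : Equiv.Perm L} (hσ : σ ∈ colorPerms κ)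
    (y : L → ℚ) : eval (y ∘ σ) (crossDiscriminant κ) = eval y (crossDiscriminant κ) := by
  rw [mem_colorPerms] at hσ
  rw [crossDiscriminant, map_prod, map_prod]
  refine Fintype.prod_equiv (σ.prodCongr σ) _ _ fun a => ?_
  simp only [Equiv.prodCongr_apply, Prod.map_fst, Prod.map_snd, hσ]
  split_ifs <;> simp

theorem eval_clearedCrossKernel {e : I → I → ℤ} (he : IsQuiverExponent e) {π : L → I} {κ : L → C}
    {w : L → ℕ} {y : L → ℚ} (hy : ∀ p q, κ p ≠ κ q → y p ≠ y q) :
    eval y (clearedCrossKernel e π κ w) =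
      eval y (crossDiscriminant κ) * crossKernel e π κ w y := by
  rw [clearedCrossKernel, crossDiscriminant, crossKernel, map_prod, map_prod,
    ← Finset.prod_mul_distrib]
  refine Finset.prod_congr rfl fun a _ => ?_
  by_cases h₁ : κ a.1 = κ a.2
  · simp [h₁]
  by_cases h₂ : w a.1 < w a.2
  · have hsub : y a.2 - y a.1 ≠ 0 := sub_ne_zero.2 (hy _ _ h₁).symm
    have hnonneg : 0 ≤ e (π a.1) (π a.2) + 1 := by linarith [he.neg_one_le (π a.1) (π a.2)]
    simp only [h₁, h₂, ne_eq, not_false_eq_true, and_self, if_true, map_pow, map_sub, eval_X]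
    rw [← zpow_natCast, Int.toNat_of_nonneg hnonneg, zpow_add_one₀ hsub, mul_comm]
  · simp [h₁, h₂]

/-- The numerator of the `σ`-th term of `shuffleSum e π w g` when its kernel is split into the part
within the fibres of `κ` and the crossing part. -/
noncomputable def clusterNumerator (e : I → I → ℤ) (π : L → I) (κ : L → C) (w : L → ℕ)
    (g : MvPolynomial L ℚ) (σ : Equiv.Perm L) : MvPolynomial L ℚ :=
  rename σ g * clearedCrossKernel e π κ (w ∘ (σ⁻¹ : Equiv.Perm L))

variable {e : I → I → ℤ} {π : L → I} {κ : L → C} {w : L → ℕ} {g : MvPolynomial L ℚ}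

theorem eval_clusterNumerator_mul (he : IsQuiverExponent e) {y : L → ℚ} {σ : Equiv.Perm L}
    (hσ : σ ∈ colorPerms π) (hy : ∀ p q, κ p ≠ κ q → y p ≠ y q) :
    eval y (clusterNumerator e π κ w g σ) *
        shuffleKernel (clusterExponent e) (fun p => (π p, κ p)) (w ∘ (σ⁻¹ : Equiv.Perm L)) y =
      eval y (crossDiscriminant κ) * (eval (y ∘ σ) g * shuffleKernel e π w (y ∘ σ)) := by
  have hkernel := shuffleKernel_comp_perm (e := e) (w ∘ (σ⁻¹ : Equiv.Perm L)) y hσ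
  have hw : (w ∘ (σ⁻¹ : Equiv.Perm L)) ∘ σ = w := funext fun p => by simp
  rw [hw] at hkernel
  rw [hkernel, shuffleKernel_eq_crossKernel_mul e π κ, clusterNumerator, map_mul, eval_rename,
    eval_clearedCrossKernel he hy]
  ring

theorem card_mul_crossDiscriminant_mul_shuffleSum (he : IsQuiverExponent e) {y : L → ℚ}
    (hy : Function.Injective y) :
    ((colorPerms fun p => (π p, κ p)).card : ℚ) * eval y (crossDiscriminant κ) *
        shuffleSum e π w g y =
      ∑ σ ∈ colorPerms π, shuffleSum (clusterExponent e) (fun p => (π p, κ p))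
        (w ∘ (σ⁻¹ : Equiv.Perm L)) (clusterNumerator e π κ w g σ) y := by
  have hterm : ∀ τ ∈ colorPerms fun p => (π p, κ p),
      eval y (crossDiscriminant κ) * shuffleSum e π w g y = ∑ σ ∈ colorPerms π,
        eval (y ∘ τ) (clusterNumerator e π κ w g σ) * shuffleKernel (clusterExponent e)
          (fun p => (π p, κ p)) (w ∘ (σ⁻¹ : Equiv.Perm L)) (y ∘ τ) := by
    intro τ hτ
    have hπ : τ ∈ colorPerms π :=
      mem_colorPerms.2 fun p => congrArg Prod.fst (mem_colorPerms.1 hτ p)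
    have hκ : τ ∈ colorPerms κ :=
      mem_colorPerms.2 fun p => congrArg Prod.snd (mem_colorPerms.1 hτ p)
    rw [← shuffleSum_comp hπ, ← eval_comp_crossDiscriminant hκ, shuffleSum, Finset.mul_sum]
    refine Finset.sum_congr rfl fun σ hσ => ?_
    exact (eval_clusterNumerator_mul he hσ fun p q hpq h =>
      hpq (congrArg κ (τ.injective (hy h)))).symm
  rw [mul_assoc, ← nsmul_eq_mul, ← Finset.sum_const, Finset.sum_congr rfl hterm, Finset.sum_comm]
  rfl

theorem eval_eq_of_level_perm_eq (he : IsQuiverExponent e) (hw : ∀ p q, κ p = κ q → w p = w q)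
    {σ : Equiv.Perm L} (hσ : σ ∈ colorPerms π) (hwσ : ∀ p, w (σ p) = w p) {f : MvPolynomial L ℚ}
    (hf : Represents f (shuffleSum (clusterExponent e) (fun p => (π p, κ p))
      (w ∘ (σ⁻¹ : Equiv.Perm L)) (clusterNumerator e π κ w g σ))) {x : C → ℚ}
    (hx : Function.Injective x) :
    eval (x ∘ κ) f = ((colorPerms fun p => (π p, κ p)).card : ℚ) *
      eval (x ∘ κ) (crossDiscriminant κ) *
        (eval (x ∘ κ ∘ σ) g * shuffleKernel e π w (x ∘ κ)) := by
  have hw' : w ∘ (σ⁻¹ : Equiv.Perm L) = w := funext fun p => by simpa using (hwσ (σ⁻¹ p)).symm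
  have hkernel := shuffleKernel_clusterExponent_eq_one e π hw
  have hf' : f = ∑ τ ∈ colorPerms fun p => (π p, κ p),
      rename τ (clusterNumerator e π κ w g σ) := by
    refine hf.unique fun y _ => ?_
    simp only [map_sum, eval_rename, shuffleSum, hw', hkernel, mul_one]
  have hterm : ∀ τ ∈ colorPerms fun p => (π p, κ p),
      eval (x ∘ κ) (rename τ (clusterNumerator e π κ w g σ)) =
        eval (x ∘ κ) (clusterNumerator e π κ w g σ) := by
    intro τ hτ
    have hκ : κ ∘ τ = κ := funext fun p => congrArg Prod.snd (mem_colorPerms.1 hτ p)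
    rw [eval_rename, Function.comp_assoc, hκ]
  have hnum := eval_clusterNumerator_mul (w := w) (g := g) he hσ (y := x ∘ κ)
    fun p q hpq h => hpq (hx h)
  rw [hw', hkernel, mul_one, shuffleKernel_comp_perm_of_level_eq _ hσ (funext hwσ),
    Function.comp_assoc] at hnum
  rw [hf', map_sum, Finset.sum_congr rfl hterm, Finset.sum_const, nsmul_eq_mul, hnum, mul_assoc]

end CrossKernel

section ClusterFormula

universe u

variable {I : Type*} [Fintype I] {r : ℕ} {e : I → I → ℤ} {β : Fin r → I → ℕ}

theorem IsReinekeSystem.level_perm_eq (hβ : IsReinekeSystem e β) {L : Type u} [Fintype L]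
    {C : Type*} [Finite C] {π : L → I} {κ : L → C} {ρ : C → Fin r}
    (hformula : ∀ (M : Type u) [Fintype M], Nat.card M < Nat.card L →
      HasClusterFormula e β M)
    (hκ : ∀ c, dimVec π (fun p => κ p = c) = intVec (β (ρ c))) {σ : Equiv.Perm L}
    (hσ : σ ∈ colorPerms π)
    (hnull : ∀ c, ¬ NullOnDiagonal e (fun p : {p // κ p = c} => π p)
      fun p => ρ (κ (σ⁻¹ p.1))) (p : L) :
    ρ (κ (σ p)) = ρ (κ p) := by
  set v : L → Fin r := fun p => ρ (κ (σ⁻¹ p)) with hv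
  have hcut : ∀ c (t : Fin r), ¬ NullOnDiagonal e (fun p : {p // κ p = c} => π p)
      (cutLevel fun p => v p ≤ t) := by
    intro c t hc
    refine hnull c (NullOnDiagonal.of_cutLevel hβ.exponent (t + 1 : ℕ) ?_)
    simpa only [Nat.lt_succ_iff, ← Fin.le_def] using hc
  have hlevel := hβ.level_eq (v := v) hκ ?_ ?_ ?_ (σ p)
  · simpa [hv] using hlevel.symm
  · intro u
    rw [← dimVec_comp_equiv σ π fun p => v p = u, (funext (mem_colorPerms.1 hσ) : π ∘ σ = π)]
    exact dimVec_congr fun p => by simp [hv]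
  · intro c
    by_contra hneg
    refine hcut c (ρ c) (nullOnDiagonal_of_kernelDegree_pos ?_)
    rw [kernelDegree_cutLevel, dimVec_subtype, dimVec_subtype]
    simpa only [exists_prop, Left.neg_pos_iff, not_le] using hneg
  · intro c t htc
    have hdim : dimVec (fun p : {p // κ p = c} => π p) (fun _ => True) = intVec (β (ρ c)) := by
      rw [dimVec_subtype, ← hκ c]
      exact dimVec_congr fun p => by simp
    have hsmall : ∀ A : {p // κ p = c} → Prop, (∃ q, ¬ A q) → HasClusterFormula e β {q // A q} :=
      fun A ⟨_, hq⟩ =>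
        hformula _ ((Finite.card_subtype_lt hq).trans_le (Finite.card_subtype_le _))
    have hle := hβ.eulerForm_nonpos_of_not_nullOnDiagonal (hsmall _) htc hdim (hcut c t)
    simpa only [dimVec_subtype, exists_prop] using hle

theorem IsReinekeSystem.hasClusterFormula (hβ : IsReinekeSystem e β) (L : Type u) [Fintype L] :
    HasClusterFormula e β L := by
  induction hN : Nat.card L using Nat.strong_induction_on generalizing L with
  | _ N ih =>
  intro C _ π κ ρ hκ g f hf x hx
  set w : L → ℕ := fun p => ρ (κ p)
  choose F hF using fun σ : Equiv.Perm L => exists_represents_shuffleSum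
    hβ.exponent.clusterExponent (fun p => (π p, κ p)) (w ∘ (σ⁻¹ : Equiv.Perm L))
    (clusterNumerator e π κ w g σ)
  have hexpand : MvPolynomial.C ((colorPerms fun p => (π p, κ p)).card : ℚ) *
      crossDiscriminant κ * f = ∑ σ ∈ colorPerms π, F σ := by
    rw [← sub_eq_zero]
    refine eq_zero_of_eval_injective_eq_zero fun y hy => ?_
    rw [map_sub, map_mul, map_mul, eval_C, map_sum, sub_eq_zero, hf y hy,
      card_mul_crossDiscriminant_mul_shuffleSum hβ.exponent hy]
    exact Finset.sum_congr rfl fun σ _ => (hF σ y hy).symm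
  have hzero : ∀ σ ∈ colorPerms π, (¬ ∀ p, ρ (κ (σ p)) = ρ (κ p)) → eval (x ∘ κ) (F σ) = 0 := by
    intro σ hσ
    contrapose!
    exact fun hne => hβ.level_perm_eq (fun M _ hM => ih _ (hM.trans_eq hN) M rfl) hκ hσ fun c hc =>
      hne (eval_eq_zero_of_nullOnDiagonal_cluster (w := w ∘ (σ⁻¹ : Equiv.Perm L)) hβ.exponent c hc
        (hF σ) x)
  have heval := congrArg (eval (x ∘ κ)) hexpand
  rw [map_mul, map_mul, eval_C, map_sum] at heval
  refine mul_left_cancel₀ (mul_ne_zero (card_colorPerms_ne_zero fun p => (π p, κ p))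
    (eval_crossDiscriminant_ne_zero fun p q h h' => h (hx h'))) (heval.trans ?_)
  rw [Finset.sum_mul, Finset.mul_sum, Finset.sum_filter]
  refine Finset.sum_congr rfl fun σ hσ => ?_
  split_ifs with hlevel
  · exact eval_eq_of_level_perm_eq hβ.exponent (fun p q h => by simp only [w, h]) hσ
      (fun p => congrArg Fin.val (hlevel p)) (hF σ) hx
  · exact hzero σ hσ hlevel

end ClusterFormula

/-! ### Orthogonal decompositions along ordered positive roots -/

section PositiveRoots

variable {I : Type*}

/-- The simple root at the vertex `i`, that is, the `i`-th standard basis vector. -/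
noncomputable abbrev simpleRoot (i : I) : I → ℤ := Pi.single i 1

theorem simpleRoot_nonneg (i : I) : 0 ≤ simpleRoot i :=
  Pi.single_nonneg.2 zero_le_one

theorem simpleRoot_apply_eq_zero {S : Finset I} {i j : I} (hi : i ∈ S) (hj : j ∉ S) :
    simpleRoot i j = 0 :=
  Pi.single_eq_of_ne (ne_of_mem_of_not_mem hi hj).symm 1

theorem eq_sum_smul_simpleRoot {S : Finset I} {x : I → ℤ} (hx : ∀ i ∉ S, x i = 0) :
    x = ∑ k ∈ S, x k • simpleRoot k := by
  ext j
  by_cases hj : j ∈ S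
  · simp [Finset.sum_apply, Pi.single_apply, hj]
  · simp [Finset.sum_apply, Pi.single_apply, hj, hx j hj]

theorem apply_eq_sum_simpleRoot (f : (I → ℤ) →ₗ[ℤ] ℤ) {S : Finset I} {x : I → ℤ}
    (hx : ∀ i ∉ S, x i = 0) : f x = ∑ k ∈ S, x k * f (simpleRoot k) := by
  conv_lhs => rw [eq_sum_smul_simpleRoot hx, map_sum]
  simp only [map_smul, smul_eq_mul]

/-- `IsPositiveRootList S B l` says that `B`, on vectors supported in `S`, is a positive definite
form of the kind given by the Euler form of a quiver without loops, and that `l` lists, without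
repetition, its positive roots in an order along which `B` is nonpositive forwards and nonnegative
backwards. -/
structure IsPositiveRootList (S : Finset I) (B : LinearMap.BilinForm ℤ (I → ℤ))
    (l : List (I → ℤ)) : Prop where
  diag : ∀ i ∈ S, B (simpleRoot i) (simpleRoot i) = 1
  off_diag : ∀ i ∈ S, ∀ j ∈ S, i ≠ j → B (simpleRoot i) (simpleRoot j) ≤ 0
  pos_def : ∀ x : I → ℤ, (∀ i ∉ S, x i = 0) → x ≠ 0 → 0 < B x x
  mem_iff : ∀ x, x ∈ l ↔ (∀ i ∉ S, x i = 0) ∧ 0 ≤ x ∧ B x x = 1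
  pairwise : l.Pairwise fun x y => x ≠ y ∧ B x y ≤ 0 ∧ 0 ≤ B y x

variable {S : Finset I} {B : LinearMap.BilinForm ℤ (I → ℤ)} {l t : List (I → ℤ)} {i : I}
  {x : I → ℤ}

namespace IsPositiveRootList

theorem apply_self_nonneg (h : IsPositiveRootList S B l) (hx : ∀ i ∉ S, x i = 0) :
    0 ≤ B x x := by
  obtain rfl | hx0 := eq_or_ne x 0
  · simp
  · exact (h.pos_def x hx hx0).le

theorem simpleRoot_mem (h : IsPositiveRootList S B l) {k : I} (hk : k ∈ S) : simpleRoot k ∈ l :=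
  (h.mem_iff _).2 ⟨fun _ => simpleRoot_apply_eq_zero hk, simpleRoot_nonneg k, h.diag k hk⟩

theorem exists_head_eq_simpleRoot (h : IsPositiveRootList S B (x :: t)) :
    ∃ i, x = simpleRoot i := by
  by_contra! hne
  obtain ⟨hxS, hx0, hxx⟩ := (h.mem_iff x).1 List.mem_cons_self
  suffices B x x ≤ 0 by lia
  rw [apply_eq_sum_simpleRoot _ hxS]
  refine Finset.sum_nonpos fun k hk => ?_
  have hkt : simpleRoot k ∈ t := (List.mem_cons.1 (h.simpleRoot_mem hk)).resolve_left (hne k).symm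
  exact mul_nonpos_of_nonneg_of_nonpos (hx0 k) ((List.pairwise_cons.1 h.pairwise).1 _ hkt).2.1

section Head

variable (h : IsPositiveRootList S B (simpleRoot i :: t))
include h

theorem head_mem : i ∈ S := by
  by_contra hi
  simpa using ((h.mem_iff _).1 List.mem_cons_self).1 i hi

theorem head_apply_self : B (simpleRoot i) (simpleRoot i) = 1 :=
  h.diag i h.head_mem

theorem ne_head {y : I → ℤ} (hy : y ∈ t) : y ≠ simpleRoot i :=
  ((List.pairwise_cons.1 h.pairwise).1 y hy).1.symm

theorem apply_simpleRoot_head {k : I} (hk : k ∈ S) (hki : k ≠ i) :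
    B (simpleRoot k) (simpleRoot i) = 0 := by
  have hkt : simpleRoot k ∈ t := by
    refine (List.mem_cons.1 (h.simpleRoot_mem hk)).resolve_left fun heq => ?_
    simpa [hki] using congrFun heq k
  exact le_antisymm (h.off_diag k hk i h.head_mem hki)
    ((List.pairwise_cons.1 h.pairwise).1 _ hkt).2.2

theorem apply_head (hx : ∀ i ∉ S, x i = 0) : B x (simpleRoot i) = x i := by
  rw [← LinearMap.flip_apply, apply_eq_sum_simpleRoot _ hx,
    Finset.sum_eq_single_of_mem i h.head_mem]
  · simp [h.head_apply_self]
  · intro k hk hki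
    simp [h.apply_simpleRoot_head hk hki]

theorem head_apply_le (hx : ∀ i ∉ S, x i = 0) (hx0 : 0 ≤ x) : B (simpleRoot i) x ≤ x i := by
  rw [apply_eq_sum_simpleRoot _ hx, ← Finset.add_sum_erase _ _ h.head_mem, h.head_apply_self,
    mul_one]
  suffices ∑ k ∈ S.erase i, x k * B (simpleRoot i) (simpleRoot k) ≤ 0 by lia
  exact Finset.sum_nonpos fun k hk => mul_nonpos_of_nonneg_of_nonpos (hx0 k)
    (h.off_diag i h.head_mem k (Finset.mem_of_mem_erase hk) (Finset.ne_of_mem_erase hk).symm)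

end Head

end IsPositiveRootList

/-- The reflection at the simple root `i` for the symmetrization of `B`. -/
noncomputable def simpleReflection (B : LinearMap.BilinForm ℤ (I → ℤ)) (i : I) :
    Module.End ℤ (I → ℤ) :=
  Module.preReflection (simpleRoot i) (B (simpleRoot i) + B.flip (simpleRoot i))

/-- The pullback of `B` along the reflection at the simple root `i`. For the Euler form of a quiver
with sink `i` it is the Euler form of the quiver in which all arrows at `i` are reversed. -/
noncomputable def reflectForm (B : LinearMap.BilinForm ℤ (I → ℤ)) (i : I) :
    LinearMap.BilinForm ℤ (I → ℤ) :=
  B.compl₁₂ (simpleReflection B i) (simpleReflection B i)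

theorem simpleReflection_apply (B : LinearMap.BilinForm ℤ (I → ℤ)) (i : I) (x : I → ℤ) :
    simpleReflection B i x = x - (B (simpleRoot i) x + B x (simpleRoot i)) • simpleRoot i :=
  rfl

theorem reflectForm_apply (B : LinearMap.BilinForm ℤ (I → ℤ)) (i : I) (x y : I → ℤ) :
    reflectForm B i x y = B (simpleReflection B i x) (simpleReflection B i y) :=
  rfl

theorem simpleReflection_apply_of_ne (B : LinearMap.BilinForm ℤ (I → ℤ)) {i j : I} (h : j ≠ i)
    (x : I → ℤ) : simpleReflection B i x j = x j := by
  simp [simpleReflection_apply, h]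

theorem simpleReflection_apply_eq_zero (hi : i ∈ S) (hx : ∀ j ∉ S, x j = 0) {j : I} (hj : j ∉ S) :
    simpleReflection B i x j = 0 := by
  rw [simpleReflection_apply_of_ne B (ne_of_mem_of_not_mem hi hj).symm, hx j hj]

section Involution

variable (h : B (simpleRoot i) (simpleRoot i) = 1)
include h

theorem simpleReflection_involutive : Function.Involutive (simpleReflection B i) :=
  Module.involutive_preReflection (by simp [h])

theorem simpleReflection_simpleRoot : simpleReflection B i (simpleRoot i) = -simpleRoot i :=
  Module.preReflection_apply_self (by simp [h])

theorem apply_simpleReflection_self (x : I → ℤ) :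
    B (simpleReflection B i x) (simpleReflection B i x) = B x x := by
  simp only [simpleReflection_apply, map_sub, map_smul, LinearMap.sub_apply, LinearMap.smul_apply,
    h, smul_eq_mul]
  ring

theorem reflectForm_apply_self (x : I → ℤ) : reflectForm B i x x = B x x :=
  apply_simpleReflection_self h x

theorem reflectForm_simpleReflection (x y : I → ℤ) :
    reflectForm B i (simpleReflection B i x) (simpleReflection B i y) = B x y := by
  rw [reflectForm_apply, simpleReflection_involutive h, simpleReflection_involutive h]

theorem simpleReflection_ne_simpleRoot (hx : 0 ≤ x) : simpleReflection B i x ≠ simpleRoot i := by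
  intro heq
  have hneg : x = -simpleRoot i := by
    rw [← simpleReflection_simpleRoot h, ← heq, simpleReflection_involutive h]
  simpa [hneg] using hx i

end Involution

namespace IsPositiveRootList

variable (h : IsPositiveRootList S B (simpleRoot i :: t))
include h

theorem simpleReflection_nonneg (hx : ∀ i ∉ S, x i = 0) (hx0 : 0 ≤ x)
    (hBx : B (simpleRoot i) x ≤ 0) : 0 ≤ simpleReflection B i x := by
  intro j
  by_cases hj : j = i
  · subst hj
    simpa [simpleReflection_apply, h.apply_head hx] using hBx
  · rw [simpleReflection_apply_of_ne B hj]
    exact hx0 j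

theorem reflectForm_off_diag {j k : I} (hj : j ∈ S) (hk : k ∈ S) (hjk : j ≠ k) :
    reflectForm B i (simpleRoot j) (simpleRoot k) ≤ 0 := by
  have hii := h.head_apply_self
  by_cases hji : j = i
  · subst hji
    rw [reflectForm_apply, simpleReflection_simpleRoot hii, simpleReflection_apply,
      h.apply_simpleRoot_head hk hjk.symm]
    simp [-zsmul_eq_mul, hii]
  by_cases hki : k = i
  · subst hki
    rw [reflectForm_apply, simpleReflection_simpleRoot hii, simpleReflection_apply]
    simp [-zsmul_eq_mul, hii, h.apply_simpleRoot_head hj hji, h.off_diag k hk j hj hjk.symm]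
  · have hoff := h.off_diag j hj k hk hjk
    simp only [reflectForm_apply, simpleReflection_apply, h.apply_simpleRoot_head hj hji,
      h.apply_simpleRoot_head hk hki, map_sub, map_smul, LinearMap.sub_apply,
      LinearMap.smul_apply, smul_eq_mul, hii]
    linarith

theorem eq_simpleRoot_of_head_apply_pos (hx : ∀ i ∉ S, x i = 0) (hx0 : 0 ≤ x) (hxx : B x x = 1)
    (hpos : 0 < B (simpleRoot i) x) : x = simpleRoot i := by
  by_contra hne
  have hsub : 0 < B (x - simpleRoot i) (x - simpleRoot i) :=
    h.pos_def _ (fun j hj => by simp [hx j hj, simpleRoot_apply_eq_zero h.head_mem hj])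
      (sub_ne_zero.2 hne)
  have hle := h.head_apply_le hx hx0
  simp only [map_sub, LinearMap.sub_apply, h.head_apply_self, h.apply_head hx, hxx] at hsub
  lia

theorem mem_map_simpleReflection (hx : ∀ i ∉ S, x i = 0) (hx0 : 0 ≤ x) (hxx : B x x = 1)
    (hBx : B (simpleRoot i) x ≤ 0) : x ∈ t.map (simpleReflection B i) := by
  have hii := h.head_apply_self
  have hmem : simpleReflection B i x ∈ simpleRoot i :: t :=
    (h.mem_iff _).2 ⟨fun _ => simpleReflection_apply_eq_zero h.head_mem hx,
      h.simpleReflection_nonneg hx hx0 hBx, by rw [apply_simpleReflection_self hii, hxx]⟩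
  exact List.mem_map.2 ⟨_, (List.mem_cons.1 hmem).resolve_left
    (simpleReflection_ne_simpleRoot hii hx0), simpleReflection_involutive hii x⟩

theorem reflect_mem_iff : x ∈ t.map (simpleReflection B i) ++ [simpleRoot i] ↔
    (∀ i ∉ S, x i = 0) ∧ 0 ≤ x ∧ B x x = 1 := by
  have hii := h.head_apply_self
  rw [List.mem_append, List.mem_singleton]
  constructor
  · rintro (hx | rfl)
    · obtain ⟨y, hy, rfl⟩ := List.mem_map.1 hx
      obtain ⟨hyS, hy0, hyy⟩ := (h.mem_iff y).1 (List.mem_cons_of_mem _ hy)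
      exact ⟨fun _ => simpleReflection_apply_eq_zero h.head_mem hyS,
        h.simpleReflection_nonneg hyS hy0 ((List.pairwise_cons.1 h.pairwise).1 y hy).2.1,
        by rw [apply_simpleReflection_self hii, hyy]⟩
    · exact (h.mem_iff _).1 List.mem_cons_self
  · rintro ⟨hxS, hx0, hxx⟩
    rcases lt_or_ge 0 (B (simpleRoot i) x) with hpos | hnonpos
    · exact Or.inr (h.eq_simpleRoot_of_head_apply_pos hxS hx0 hxx hpos)
    · exact Or.inl (h.mem_map_simpleReflection hxS hx0 hxx hnonpos)

theorem reflect_pairwise : (t.map (simpleReflection B i) ++ [simpleRoot i]).Pairwise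
    fun x y => x ≠ y ∧ reflectForm B i x y ≤ 0 ∧ 0 ≤ reflectForm B i y x := by
  have hii := h.head_apply_self
  obtain ⟨hhead, htail⟩ := List.pairwise_cons.1 h.pairwise
  rw [List.pairwise_append, List.pairwise_map]
  refine ⟨htail.imp ?_, List.pairwise_singleton _ _, ?_⟩
  · rintro x y ⟨hne, hle⟩
    rw [reflectForm_simpleReflection hii, reflectForm_simpleReflection hii]
    exact ⟨(simpleReflection_involutive hii).injective.ne hne, hle⟩
  · intro x hx y hy
    obtain ⟨z, hz, rfl⟩ := List.mem_map.1 hx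
    rw [List.mem_singleton.1 hy]
    refine ⟨simpleReflection_ne_simpleRoot hii
      ((h.mem_iff z).1 (List.mem_cons_of_mem _ hz)).2.1, ?_⟩
    rw [reflectForm_apply, reflectForm_apply, simpleReflection_involutive hii,
      simpleReflection_simpleRoot hii]
    simpa using (hhead z hz).2.symm

theorem reflect : IsPositiveRootList S (reflectForm B i)
    (t.map (simpleReflection B i) ++ [simpleRoot i]) where
  diag j hj := by rw [reflectForm_apply_self h.head_apply_self, h.diag j hj]
  off_diag j hj k hk hjk := h.reflectForm_off_diag hj hk hjk
  pos_def x hx hx0 := by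
    rw [reflectForm_apply_self h.head_apply_self]
    exact h.pos_def x hx hx0
  mem_iff x := by rw [reflectForm_apply_self h.head_apply_self, h.reflect_mem_iff]
  pairwise := h.reflect_pairwise

end IsPositiveRootList

/-- `δ` is a nonnegative combination of entries of `l` such that `B x y = 0` whenever `x` precedes
`y` in `l` and both occur with nonzero multiplicity. For the positive roots of a Dynkin quiver these
are the multiplicities of the indecomposable summands of the generic representation. -/
def HasOrthogonalDecomposition (B : LinearMap.BilinForm ℤ (I → ℤ)) (l : List (I → ℤ))
    (δ : I → ℤ) : Prop :=
  ∃ m : (I → ℤ) → ℕ, δ = (l.map fun x => m x • x).sum ∧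
    l.Pairwise fun x y => m x ≠ 0 → m y ≠ 0 → B x y = 0

theorem apply_list_sum_nsmul {V : Type*} [AddCommGroup V] (f : V →ₗ[ℤ] ℤ) (m : V → ℕ)
    (l : List V) : f (l.map fun x => m x • x).sum = (l.map fun x => (m x : ℤ) * f x).sum := by
  rw [map_list_sum, List.map_map]
  simp [Function.comp_def]

theorem list_sum_mul_eq_zero {V : Type*} (f : V → ℤ) (m : V → ℕ) {l : List V}
    (hl : ∀ y ∈ l, m y ≠ 0 → f y = 0) : (l.map fun x => (m x : ℤ) * f x).sum = 0 := by
  refine List.sum_eq_zero fun z hz => ?_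
  obtain ⟨y, hy, rfl⟩ := List.mem_map.1 hz
  by_cases hmy : m y = 0
  · simp [hmy]
  · simp [hl y hy hmy]

theorem mul_eq_zero_of_list_sum_eq_zero {V : Type*} {f : V → ℤ} {m : V → ℕ} {l : List V}
    (hf : ∀ y ∈ l, f y ≤ 0) (hsum : (l.map fun x => (m x : ℤ) * f x).sum = 0) {y : V}
    (hy : y ∈ l) : (m y : ℤ) * f y = 0 := by
  have hneg : (l.map fun x => (m x : ℤ) * -f x).sum = 0 := by
    simpa [List.sum_neg, Function.comp_def] using congrArg Neg.neg hsum
  have hzero := List.all_zero_of_le_zero_le_of_sum_eq_zero (fun z hz => ?_) hneg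
    (List.mem_map_of_mem hy)
  · simpa using hzero
  · obtain ⟨x, hx, rfl⟩ := List.mem_map.1 hz
    exact mul_nonneg (Nat.cast_nonneg _) (neg_nonneg.2 (hf x hx))

namespace IsPositiveRootList

variable (h : IsPositiveRootList S B (simpleRoot i :: t)) {δ : I → ℤ}
include h

theorem hasOrthogonalDecomposition_of_sub (hBδ : 0 ≤ B (simpleRoot i) δ)
    (hδ : HasOrthogonalDecomposition B (simpleRoot i :: t)
      (δ - B (simpleRoot i) δ • simpleRoot i)) :
    HasOrthogonalDecomposition B (simpleRoot i :: t) δ := by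
  obtain ⟨m, hm, horth⟩ := hδ
  obtain ⟨horth_head, horth_tail⟩ := List.pairwise_cons.1 horth
  have hne {x} (hx : x ∈ t) : x ≠ simpleRoot i := h.ne_head hx
  have hB : (m (simpleRoot i) : ℤ) + (t.map fun x => (m x : ℤ) * B (simpleRoot i) x).sum = 0 := by
    have hzero := congrArg (B (simpleRoot i)) hm
    rw [apply_list_sum_nsmul, map_sub, map_smul, List.map_cons, List.sum_cons,
      h.head_apply_self] at hzero
    simpa using hzero.symm
  have hmi : m (simpleRoot i) = 0 := by
    by_contra hmi
    rw [list_sum_mul_eq_zero _ m fun x hx => horth_head x hx hmi] at hB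
    lia
  rw [hmi, Nat.cast_zero, zero_add] at hB
  refine ⟨Function.update m (simpleRoot i) (B (simpleRoot i) δ).toNat, ?_, ?_⟩
  · have htail : (t.map fun x => Function.update m (simpleRoot i) (B (simpleRoot i) δ).toNat x • x)
        = t.map fun x => m x • x :=
      List.map_congr_left fun x hx => by rw [Function.update_of_ne (hne hx)]
    rw [List.map_cons, List.sum_cons, hmi, zero_smul, zero_add] at hm
    rw [List.map_cons, List.sum_cons, htail, ← hm, Function.update_self, ← natCast_zsmul,
      Int.toNat_of_nonneg hBδ, add_sub_cancel]
  · refine List.pairwise_cons.2 ⟨fun x hx _ hmx => ?_, horth_tail.imp_of_mem fun hx hy hxy => ?_⟩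
    · rw [Function.update_of_ne (hne hx)] at hmx
      have hzero := mul_eq_zero_of_list_sum_eq_zero
        (fun y hy => ((List.pairwise_cons.1 h.pairwise).1 y hy).2.1) hB hx
      simpa [hmx] using hzero
    · rwa [Function.update_of_ne (hne hx), Function.update_of_ne (hne hy)]

theorem hasOrthogonalDecomposition_of_reflect (hδS : ∀ i ∉ S, δ i = 0) (hδ0 : 0 ≤ δ)
    (hδ : HasOrthogonalDecomposition (reflectForm B i)
      (t.map (simpleReflection B i) ++ [simpleRoot i]) (simpleReflection B i δ)) :
    HasOrthogonalDecomposition B (simpleRoot i :: t) δ := by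
  obtain ⟨m, hm, horth⟩ := hδ
  obtain ⟨horth_tail, -, horth_head⟩ := List.pairwise_append.1 horth
  have hii := h.head_apply_self
  have hinv := simpleReflection_involutive hii
  have hmi : m (simpleRoot i) = 0 := by
    by_contra hmi
    have hB : reflectForm B i (simpleReflection B i δ) (simpleRoot i) = -δ i := by
      rw [reflectForm_apply, hinv, simpleReflection_simpleRoot hii, map_neg, h.apply_head hδS]
    rw [← LinearMap.flip_apply, hm, apply_list_sum_nsmul, List.map_append, List.sum_append,
      list_sum_mul_eq_zero (LinearMap.flip (reflectForm B i) (simpleRoot i)) m fun x hx hmx =>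
        horth_head x hx _ (List.mem_singleton_self _) hmx hmi] at hB
    have hδi : 0 ≤ δ i := hδ0 i
    simp [reflectForm_apply_self hii, hii] at hB
    lia
  refine ⟨fun y => if y = simpleRoot i then 0 else m (simpleReflection B i y), ?_, ?_⟩
  · rw [← hinv δ, hm]
    simp only [List.map_append, List.sum_append, map_list_sum, List.map_map,
      List.map_cons, List.sum_cons, List.map_nil, List.sum_nil, hmi, zero_smul,
      add_zero, if_true, zero_add]
    congr 1
    refine List.map_congr_left fun x hx => ?_
    simp only [Function.comp_apply, h.ne_head hx, if_false, map_nsmul, hinv x]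
  · refine List.pairwise_cons.2 ⟨by simp, (List.pairwise_map.1 horth_tail).imp_of_mem ?_⟩
    intro x y hx hy hxy
    simpa only [h.ne_head hx, h.ne_head hy, if_false, reflectForm_simpleReflection hii] using hxy

end IsPositiveRootList

theorem exists_eq_nsmul_add_of_mem_closure_cons {M : Type*} [AddCommMonoid M] {x a : M}
    {t : List M} (h : a ∈ AddSubmonoid.closure {y | y ∈ x :: t}) :
    ∃ k : ℕ, ∃ b ∈ AddSubmonoid.closure {y | y ∈ t}, a = k • x + b := by
  have hset : {y | y ∈ x :: t} = {x} ∪ {y | y ∈ t} := by ext; simp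
  rw [hset, AddSubmonoid.closure_union, AddSubmonoid.mem_sup] at h
  obtain ⟨y, hy, b, hb, rfl⟩ := h
  obtain ⟨k, rfl⟩ := AddSubmonoid.mem_closure_singleton.1 hy
  exact ⟨k, b, hb, rfl⟩

theorem map_mem_closure_of_forall_mem {M N F : Type*} [AddCommMonoid M] [AddCommMonoid N]
    [FunLike F M N] [AddMonoidHomClass F M N] (f : F) {t : List M} {t' : List N}
    (ht : ∀ y ∈ t, f y ∈ t') {a : M} (h : a ∈ AddSubmonoid.closure {y | y ∈ t}) :
    f a ∈ AddSubmonoid.closure {y | y ∈ t'} :=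
  (AddSubmonoid.closure_le (S := (AddSubmonoid.closure {y | y ∈ t'}).comap (f : M →+ N))).2
    (fun y hy => AddSubmonoid.subset_closure (ht y hy)) h

namespace IsPositiveRootList

theorem mem_closure (h : IsPositiveRootList S B l) {δ : I → ℤ} (hδS : ∀ i ∉ S, δ i = 0)
    (hδ0 : 0 ≤ δ) : δ ∈ AddSubmonoid.closure {y | y ∈ l} := by
  rw [eq_sum_smul_simpleRoot hδS]
  refine sum_mem fun k hk => ?_
  lift δ k to ℕ using hδ0 k with d
  rw [natCast_zsmul]
  exact nsmul_mem (AddSubmonoid.mem_closure_of_mem (s := {y | y ∈ l}) (h.simpleRoot_mem hk)) _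

theorem hasOrthogonalDecomposition_of_neg_mem_closure (h : IsPositiveRootList S B l) {δ : I → ℤ}
    (hδ0 : 0 ≤ δ) (hδ : -δ ∈ AddSubmonoid.closure {y | y ∈ l}) :
    HasOrthogonalDecomposition B l δ := by
  have hneg : 0 ≤ -δ := (AddSubmonoid.closure_le (S := AddSubmonoid.nonneg (I → ℤ))).2
    (fun y (hy : y ∈ l) => ((h.mem_iff y).1 hy).2.1) hδ
  obtain rfl : δ = 0 := le_antisymm (neg_nonneg.1 hneg) hδ0
  exact ⟨0, by simp, List.pairwise_of_forall fun _ _ hx => absurd rfl hx⟩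

theorem apply_sub_self_lt (h : IsPositiveRootList S B (simpleRoot i :: t)) {δ : I → ℤ}
    (hδS : ∀ i ∉ S, δ i = 0) (hδ0 : 0 ≤ δ) (hpos : 0 < B (simpleRoot i) δ) :
    B (δ - B (simpleRoot i) δ • simpleRoot i) (δ - B (simpleRoot i) δ • simpleRoot i) < B δ δ := by
  have hle := h.head_apply_le hδS hδ0
  have hexp : B (δ - B (simpleRoot i) δ • simpleRoot i) (δ - B (simpleRoot i) δ • simpleRoot i)
      = B δ δ - B (simpleRoot i) δ * δ i := by
    simp only [map_sub, map_smul, LinearMap.sub_apply, LinearMap.smul_apply, h.head_apply_self,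
      h.apply_head hδS, smul_eq_mul]
    ring
  have : 0 < B (simpleRoot i) δ * δ i := mul_pos hpos (by lia)
  lia

theorem hasOrthogonalDecomposition_of_sub_mem_closure (N : ℤ)
    (IH : ∀ (B : LinearMap.BilinForm ℤ (I → ℤ)) l δ, IsPositiveRootList S B l →
      (∀ i ∉ S, δ i = 0) → 0 ≤ δ → B δ δ < N → HasOrthogonalDecomposition B l δ)
    (l₁ : List (I → ℤ)) : ∀ (B : LinearMap.BilinForm ℤ (I → ℤ)) (l₂ : List (I → ℤ)) (δ a b : I → ℤ),
      IsPositiveRootList S B (l₁ ++ l₂) → (∀ i ∉ S, δ i = 0) → 0 ≤ δ → B δ δ = N →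
      a ∈ AddSubmonoid.closure {y | y ∈ l₁} → b ∈ AddSubmonoid.closure {y | y ∈ l₂} →
      δ = a - b → HasOrthogonalDecomposition B (l₁ ++ l₂) δ := by
  induction hlen : l₁.length generalizing l₁ with
  | zero =>
    intro B l₂ δ a b hl _ hδ0 _ ha hb hab
    obtain rfl := List.length_eq_zero_iff.1 hlen
    obtain rfl : a = 0 := by simpa using ha
    exact hl.hasOrthogonalDecomposition_of_neg_mem_closure hδ0 (by simpa [hab] using hb)
  | succ k ih =>
    intro B l₂ δ a b hl hδS hδ0 hδN ha hb hab
    obtain ⟨x, t, rfl⟩ := List.exists_cons_of_length_eq_add_one hlen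
    obtain ⟨i, rfl⟩ := hl.exists_head_eq_simpleRoot
    rw [List.cons_append] at hl ⊢
    rcases lt_or_ge 0 (B (simpleRoot i) δ) with hpos | hnonpos
    · refine hl.hasOrthogonalDecomposition_of_sub hpos.le (IH B _ _ hl (fun j hj => ?_) ?_ ?_)
      · simp [hδS j hj, simpleRoot_apply_eq_zero hl.head_mem hj]
      · intro j
        obtain rfl | hj := eq_or_ne j i
        · simpa using hl.head_apply_le hδS hδ0
        · simpa [hj] using hδ0 j
      · exact (hl.apply_sub_self_lt hδS hδ0 hpos).trans_eq hδN
    · have hii := hl.head_apply_self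
      obtain ⟨c, a', ha', rfl⟩ := exists_eq_nsmul_add_of_mem_closure_cons ha
      have hrefl := hl.reflect
      refine hl.hasOrthogonalDecomposition_of_reflect hδS hδ0 ?_
      rw [List.map_append, List.append_assoc] at hrefl ⊢
      refine ih (t.map (simpleReflection B i)) (by simpa using hlen) (reflectForm B i) _ _
        (simpleReflection B i a') (simpleReflection B i b + c • simpleRoot i) hrefl
        (fun _ => simpleReflection_apply_eq_zero hl.head_mem hδS)
        (hl.simpleReflection_nonneg hδS hδ0 hnonpos)
        (by rw [reflectForm_simpleReflection hii, hδN])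
        (map_mem_closure_of_forall_mem _ (fun y hy => List.mem_map_of_mem hy) ha')
        (add_mem (map_mem_closure_of_forall_mem _ (fun y hy => ?_) hb)
          (nsmul_mem (AddSubmonoid.subset_closure (by simp)) _)) ?_
      · exact List.mem_append_left _ (List.mem_map_of_mem hy)
      · rw [hab, map_sub, map_add, map_nsmul, simpleReflection_simpleRoot hii, smul_neg]
        abel

theorem hasOrthogonalDecomposition (h : IsPositiveRootList S B l) {δ : I → ℤ}
    (hδS : ∀ i ∉ S, δ i = 0) (hδ0 : 0 ≤ δ) : HasOrthogonalDecomposition B l δ := by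
  induction hN : (B δ δ).toNat using Nat.strong_induction_on generalizing B l δ with
  | _ N ih =>
    have IH (B : LinearMap.BilinForm ℤ (I → ℤ)) (l : List (I → ℤ)) (δ : I → ℤ)
        (h' : IsPositiveRootList S B l) (hδS' : ∀ i ∉ S, δ i = 0) (hδ0' : 0 ≤ δ) (hlt : B δ δ < N) :
        HasOrthogonalDecomposition B l δ := by
      have hnonneg := h'.apply_self_nonneg hδS'
      exact ih _ (by lia) h' hδS' hδ0' rfl
    have hnonneg := h.apply_self_nonneg hδS
    simpa using hasOrthogonalDecomposition_of_sub_mem_closure N IH l B [] δ δ 0 (by simpa using h)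
      hδS hδ0 (by lia) (h.mem_closure hδS hδ0) (zero_mem _) (sub_zero δ).symm

end IsPositiveRootList

end PositiveRoots

/-! ### The Euler form of a quiver with a Dynkin partition -/

section QuiverExponent

/-- The exponent of the factors `ω_{j,*} - ω_{i,*}` in the localization formula of `Q`: the number
of arrows from `i` to `j`, minus one if `i = j`. -/
noncomputable def quiverExponent (Q : FinQuiver n) (i j : Fin n) : ℤ :=
  (∑ a : Q.Arr, if Q.tl a = i ∧ Q.hd a = j then 1 else 0) - if i = j then 1 else 0

theorem eulerForm_quiverExponent (Q : FinQuiver n) (F G : Fin n → ℤ) :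
    eulerForm (quiverExponent Q) F G =
      ∑ i, F i * G i - ∑ a : Q.Arr, F (Q.tl a) * G (Q.hd a) := by
  have harrows : ∑ i, ∑ j, ∑ a : Q.Arr, F i * (if Q.tl a = i ∧ Q.hd a = j then 1 else 0) * G j
      = ∑ a : Q.Arr, F (Q.tl a) * G (Q.hd a) := by
    simp_rw [Finset.sum_comm (s := Finset.univ (α := Fin n)) (t := Finset.univ (α := Q.Arr))]
    refine Finset.sum_congr rfl fun a _ => ?_
    simp [ite_and]
  simp only [eulerForm_apply, quiverExponent, mul_sub, sub_mul, Finset.sum_sub_distrib,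
    Finset.mul_sum, Finset.sum_mul, harrows]
  simp

theorem euler_eq_eulerForm (Q : FinQuiver n) (α β : Fin n → ℕ) :
    Q.euler α β = eulerForm (quiverExponent Q) (intVec α) (intVec β) := by
  rw [eulerForm_quiverExponent]
  rfl

theorem eulerForm_simpleRoot {I : Type*} [Fintype I] (e : I → I → ℤ) (i j : I) :
    eulerForm e (simpleRoot i) (simpleRoot j) = -e i j := by
  rw [eulerForm_apply, Finset.sum_eq_single i, Finset.sum_eq_single j] <;> simp +contextual

theorem neg_ite_le_quiverExponent (Q : FinQuiver n) (i j : Fin n) :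
    -(if i = j then 1 else 0) ≤ quiverExponent Q i j := by
  rw [quiverExponent, le_sub_iff_add_le, neg_add_cancel]
  exact Finset.sum_nonneg fun a _ => by split_ifs <;> norm_num

theorem isQuiverExponent_quiverExponent (Q : FinQuiver n) :
    IsQuiverExponent (quiverExponent Q) where
  diag i := by simpa using neg_ite_le_quiverExponent Q i i
  off_diag i j hij := by simpa [hij] using neg_ite_le_quiverExponent Q i j

theorem eulerForm_quiverExponent_eq_eulerZ {Q : FinQuiver n} {Q' : Subquiver Q} (hfull : Q'.Full)
    {F G : Fin n → ℤ} (hF : ∀ i ∉ Q'.verts, F i = 0) (hG : ∀ i ∉ Q'.verts, G i = 0) :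
    eulerForm (quiverExponent Q) F G = Q'.eulerZ F G := by
  rw [eulerForm_quiverExponent, Subquiver.eulerZ]
  congr 1
  · refine (Finset.sum_subset (Finset.subset_univ _) fun i _ hi => ?_).symm
    rw [hF i hi, zero_mul]
  · refine (Finset.sum_subset (Finset.subset_univ _) fun a _ ha => ?_).symm
    by_cases hhd : Q.hd a ∈ Q'.verts
    · rw [hF (Q.tl a) fun htl => ha (hfull a hhd htl), zero_mul]
    · rw [hG _ hhd, mul_zero]

theorem eulerForm_quiverExponent_self_pos {Q : FinQuiver n} {Q' : Subquiver Q} (h : Q'.IsDynkin)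
    {x : Fin n → ℤ} (hx : ∀ i ∉ Q'.verts, x i = 0) (hx0 : x ≠ 0) :
    0 < eulerForm (quiverExponent Q) x x := by
  rw [eulerForm_quiverExponent_eq_eulerZ h.2.1 hx hx]
  exact h.2.2 x hx hx0

/-- A loop at `i` would make the Tits form nonpositive on the simple root at `i`. -/
theorem quiverExponent_self {Q : FinQuiver n} {Q' : Subquiver Q} (h : Q'.IsDynkin) {i : Fin n}
    (hi : i ∈ Q'.verts) : quiverExponent Q i i = -1 := by
  have hpos := eulerForm_quiverExponent_self_pos h (fun _ => simpleRoot_apply_eq_zero hi)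
    (x := simpleRoot i) (by simp)
  rw [eulerForm_simpleRoot] at hpos
  have hge := (isQuiverExponent_quiverExponent Q).diag i
  lia

end QuiverExponent

section IntVec

variable {I : Type*}

theorem intVec_injective : Function.Injective (intVec (I := I)) := fun f g h =>
  funext fun i => by simpa using congrFun h i

theorem intVec_nonneg (f : I → ℕ) : 0 ≤ intVec f := fun i => by simp

theorem exists_intVec_eq {x : I → ℤ} (h : 0 ≤ x) : ∃ f : I → ℕ, intVec f = x :=
  ⟨fun i => (x i).toNat, funext fun i => Int.toNat_of_nonneg (h i)⟩

end IntVec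

section DynkinPartition

variable {ℓ r : ℕ} {Q : FinQuiver n} {P : SubqPartition Q ℓ} {β : Fin r → Fin n → ℕ}
  {blk : Fin r → Fin ℓ}

theorem intVec_root_apply_eq_zero (hR : IsReinekeOrder P β blk) (u : Fin r) :
    ∀ i ∉ (P.part (blk u)).verts, intVec (β u) i = 0 := fun i hi => by
  rw [intVec_apply, (hR.2.1 u).1 i hi, Nat.cast_zero]

theorem blk_eq_of_forall_notMem (hR : IsReinekeOrder P β blk) {u : Fin r} {j : Fin ℓ}
    (h : ∀ i ∉ (P.part j).verts, intVec (β u) i = 0) : blk u = j := by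
  obtain ⟨i, hi⟩ : ∃ i, β u i ≠ 0 := Function.ne_iff.1 (hR.2.1 u).2.1
  have hi' : intVec (β u) i ≠ 0 := by simpa using hi
  exact (P.cover i).unique (not_imp_comm.1 (intVec_root_apply_eq_zero hR u i) hi')
    (not_imp_comm.1 (h i) hi')

theorem eulerForm_root_of_blk_ne (hR : IsReinekeOrder P β blk) {u v : Fin r}
    (hblk : blk u ≠ blk v) :
    eulerForm (quiverExponent Q) (intVec (β u)) (intVec (β v)) ≤ 0 := by
  have hdiag : ∑ i, intVec (β u) i * intVec (β v) i = 0 := by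
    refine Finset.sum_eq_zero fun i _ => ?_
    by_cases hi : i ∈ (P.part (blk u)).verts
    · rw [intVec_root_apply_eq_zero hR v i fun hi' => hblk ((P.cover i).unique hi hi'), mul_zero]
    · rw [intVec_root_apply_eq_zero hR u i hi, zero_mul]
  rw [eulerForm_quiverExponent, hdiag, zero_sub, neg_nonpos]
  exact Finset.sum_nonneg fun a _ => mul_nonneg (intVec_nonneg _ _) (intVec_nonneg _ _)

variable (hDyn : P.Dynkin) (hR : IsReinekeOrder P β blk)
include hDyn hR

theorem eulerForm_root_self (u : Fin r) :
    eulerForm (quiverExponent Q) (intVec (β u)) (intVec (β u)) = 1 := by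
  rw [eulerForm_quiverExponent_eq_eulerZ (hDyn (blk u)).2.1 (intVec_root_apply_eq_zero hR u)
    (intVec_root_apply_eq_zero hR u)]
  exact (hR.2.1 u).2.2

/-- Positivity of the Tits form on `β u ± β v` leaves only `-1`, `0` and `1` as values of
`χ(β u, β v) + χ(β v, β u)`, and the Reineke condition bounds their difference. -/
theorem eulerForm_root_of_blk_eq {u v : Fin r} (huv : u < v) (hblk : blk u = blk v) :
    eulerForm (quiverExponent Q) (intVec (β u)) (intVec (β v)) ≤ 0 ∧
      0 ≤ eulerForm (quiverExponent Q) (intVec (β v)) (intVec (β u)) := by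
  have hu := intVec_root_apply_eq_zero hR u
  have hv := hblk ▸ intVec_root_apply_eq_zero hR v
  have hlam := hR.2.2.2.2 u v huv hblk
  rw [FinQuiver.lam, euler_eq_eulerForm, euler_eq_eulerForm] at hlam
  have hne : intVec (β u) ≠ intVec (β v) := fun h => huv.ne (hR.2.2.1 (intVec_injective h))
  have hsub := eulerForm_quiverExponent_self_pos (hDyn (blk u)) (x := intVec (β u) - intVec (β v))
    (fun i hi => by rw [Pi.sub_apply, hu i hi, hv i hi, sub_zero]) (sub_ne_zero.2 hne)
  have hadd := eulerForm_quiverExponent_self_pos (hDyn (blk u)) (x := intVec (β u) + intVec (β v))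
    (fun i hi => by rw [Pi.add_apply, hu i hi, hv i hi, add_zero]) fun h0 => by
      rw [add_eq_zero_iff_of_nonneg (intVec_nonneg _) (intVec_nonneg _)] at h0
      exact hne (h0.1.trans h0.2.symm)
  simp only [map_sub, map_add, LinearMap.sub_apply, LinearMap.add_apply,
    eulerForm_root_self hDyn hR] at hsub hadd
  lia

theorem mem_blockRoots_iff (j : Fin ℓ) (x : Fin n → ℤ) :
    x ∈ ((List.finRange r).filter (blk · = j)).map (intVec ∘ β) ↔
      (∀ i ∉ (P.part j).verts, x i = 0) ∧ 0 ≤ x ∧ eulerForm (quiverExponent Q) x x = 1 := by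
  simp only [List.mem_map, List.mem_filter, List.mem_finRange, true_and, decide_eq_true_eq,
    Function.comp_apply]
  constructor
  · rintro ⟨u, rfl, rfl⟩
    exact ⟨intVec_root_apply_eq_zero hR u, intVec_nonneg _, eulerForm_root_self hDyn hR u⟩
  · rintro ⟨hxS, hx0, hxx⟩
    obtain ⟨b, rfl⟩ := exists_intVec_eq hx0
    have hroot : (P.part j).IsPosRoot b := by
      refine ⟨fun i hi => by simpa using hxS i hi, fun hb => ?_, ?_⟩
      · simp [hb] at hxx
      · rwa [eulerForm_quiverExponent_eq_eulerZ (hDyn j).2.1 hxS hxS] at hxx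
    obtain ⟨u, rfl⟩ := hR.2.2.2.1 j b hroot
    exact ⟨u, blk_eq_of_forall_notMem hR hxS, rfl⟩

theorem isPositiveRootList_blockRoots (j : Fin ℓ) :
    IsPositiveRootList (P.part j).verts (eulerForm (quiverExponent Q))
      (((List.finRange r).filter (blk · = j)).map (intVec ∘ β)) where
  diag i hi := by rw [eulerForm_simpleRoot, quiverExponent_self (hDyn j) hi, neg_neg]
  off_diag i _ k _ hik := by
    rw [eulerForm_simpleRoot, neg_nonpos]
    exact (isQuiverExponent_quiverExponent Q).off_diag i k hik
  pos_def _ hx hx0 := eulerForm_quiverExponent_self_pos (hDyn j) hx hx0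
  mem_iff := mem_blockRoots_iff hDyn hR j
  pairwise := by
    rw [List.pairwise_map, List.pairwise_filter]
    refine (List.pairwise_lt_finRange r).imp fun {u v} huv hu hv => ?_
    have hblk : blk u = blk v := by simp_all
    exact ⟨fun h => huv.ne (hR.2.2.1 (intVec_injective h)),
      eulerForm_root_of_blk_eq hDyn hR huv hblk⟩

theorem exists_orthogonal_decomposition_of_le_root {d : Fin r} {F : Fin n → ℤ} (hF0 : 0 ≤ F)
    (hF : F ≤ intVec (β d)) :
    ∃ m : Fin r → ℕ, F = ∑ u, m u • intVec (β u) ∧ ∀ u v, u < v → m u ≠ 0 → m v ≠ 0 →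
      eulerForm (quiverExponent Q) (intVec (β u)) (intVec (β v)) = 0 := by
  have hFS : ∀ i ∉ (P.part (blk d)).verts, F i = 0 := fun i hi =>
    le_antisymm ((hF i).trans_eq (intVec_root_apply_eq_zero hR d i hi)) (hF0 i)
  obtain ⟨m, hm, horth⟩ :=
    (isPositiveRootList_blockRoots hDyn hR (blk d)).hasOrthogonalDecomposition hFS hF0
  refine ⟨fun u => if blk u = blk d then m (intVec (β u)) else 0, ?_, fun u v huv hu hv => ?_⟩
  · simp [hm, ite_smul, Fin.sum_univ_def, List.sum_map_ite, Function.comp_def]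
  · rw [List.pairwise_map, List.pairwise_filter] at horth
    have horth' := List.pairwise_iff_getElem.1 horth u v (by simp) (by simp) huv
    simp only [ne_eq, ite_eq_right_iff, Classical.not_imp] at hu hv
    simp_all

theorem isReinekeSystem_quiverExponent : IsReinekeSystem (quiverExponent Q) β where
  exponent := isQuiverExponent_quiverExponent Q
  eulerForm_nonpos u v huv := by
    by_cases hblk : blk u = blk v
    · exact (eulerForm_root_of_blk_eq hDyn hR huv hblk).1
    · exact eulerForm_root_of_blk_ne hR hblk
  eulerForm_self := eulerForm_root_self hDyn hR
  eulerForm_self_pos t G hG0 hG hne :=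
    eulerForm_quiverExponent_self_pos (hDyn (blk t)) (fun i hi =>
      le_antisymm ((hG i).trans_eq (intVec_root_apply_eq_zero hR t i hi)) (hG0 i)) hne
  exists_orthogonal_decomposition _ _ _ _ hF0 hF _ :=
    exists_orthogonal_decomposition_of_le_root hDyn hR hF0 hF

end DynkinPartition

/-! ### Polynomials in finitely many labelled variables -/

section ColorPermutations

variable {L I X : Type*}

theorem exists_perm_of_range_subset [Finite L] {a b : L → X} (ha : Function.Injective a)
    (hab : ∀ p, ∃ q, b q = a p) : ∃ ρ : Equiv.Perm L, ∀ p, b (ρ p) = a p := by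
  choose f hf using hab
  have hinj : Function.Injective f := fun p q h => ha (by rw [← hf p, ← hf q, h])
  exact ⟨Equiv.ofBijective f (Finite.injective_iff_bijective.1 hinj), hf⟩

theorem colorPerms_induction [Fintype L] [DecidableEq L] {π : L → I} {motive : Equiv.Perm L → Prop}
    (one : motive 1)
    (swap_mul : ∀ p q τ, π p = π q → motive τ → motive (Equiv.swap p q * τ))
    {σ : Equiv.Perm L} (hσ : σ ∈ colorPerms π) : motive σ := by
  induction hN : σ.support.card using Nat.strong_induction_on generalizing σ with
  | _ N ih =>
    by_cases hσ1 : σ = 1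
    · exact hσ1 ▸ one
    obtain ⟨p, hp⟩ : ∃ p, σ p ≠ p := by
      by_contra! h
      exact hσ1 (Equiv.ext h)
    have hcolor : π p = π (σ p) := (mem_colorPerms.1 hσ p).symm
    have hmotive := ih _ (hN ▸ Equiv.Perm.card_support_swap_mul hp)
      (mul_mem_colorPerms (swap_mem_colorPerms hcolor) hσ) rfl
    simpa only [Equiv.swap_mul_self_mul] using swap_mul p (σ p) _ hcolor hmotive

end ColorPermutations

section Labels

variable {γ : Fin n → ℕ}

/-- The labels `(i, j)` with `j < γ i` of the variables occurring in `ℋ_γ`. -/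
abbrev Label (γ : Fin n → ℕ) : Type := Σ i : Fin n, Fin (γ i)

/-- The index of the variable `ω_{i,j}` of `PolyQ n` carried by the label `(i, j)`. -/
def labelVar (γ : Fin n → ℕ) (p : Label γ) : Fin n × ℕ := (p.1, p.2)

theorem labelVar_injective (γ : Fin n → ℕ) : Function.Injective (labelVar γ) := by
  rintro ⟨i, a⟩ ⟨j, b⟩ h
  simp only [labelVar, Prod.mk.injEq] at h
  obtain ⟨rfl, h⟩ := h
  rw [Fin.ext h]

theorem exists_labelVar_eq {p : Fin n × ℕ} (h : p.2 < γ p.1) : ∃ q, labelVar γ q = p :=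
  ⟨⟨p.1, ⟨p.2, h⟩⟩, rfl⟩

/-- Read a polynomial in the variables `ω_{i,j}` as a polynomial in the labels of `γ`; the
variables outside `γ` are set to `0`. -/
noncomputable def toLabels (γ : Fin n → ℕ) : PolyQ n →ₐ[ℚ] MvPolynomial (Label γ) ℚ :=
  aeval fun p => if h : p.2 < γ p.1 then X (⟨p.1, ⟨p.2, h⟩⟩ : Label γ) else 0

theorem toLabels_rename (γ : Fin n → ℕ) (g : MvPolynomial (Label γ) ℚ) :
    toLabels γ (rename (labelVar γ) g) = g := by
  rw [toLabels, aeval_rename]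
  conv_rhs => rw [← aeval_X_left_apply g]
  congr 2
  funext p
  simp [labelVar]

theorem rename_toLabels {f : PolyQ n} (hf : ∀ p ∈ f.vars, p.2 < γ p.1) :
    rename (labelVar γ) (toLabels γ f) = f := by
  obtain ⟨g, rfl⟩ := exists_rename_eq_of_vars_subset_range f (labelVar γ) (labelVar_injective γ)
    (fun p hp => exists_labelVar_eq (hf p hp))
  rw [toLabels_rename]

theorem labelVar_comp_swap [DecidableEq (Label γ)] (i : Fin n) (j k : Fin (γ i)) :
    labelVar γ ∘ Equiv.swap ⟨i, j⟩ ⟨i, k⟩ =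
      vertexPerm i (Equiv.swap (j : ℕ) k) ∘ labelVar γ := by
  funext ⟨l, a⟩
  simp only [Function.comp_apply]
  by_cases hl : l = i
  · subst hl
    simp only [vertexPerm, labelVar, if_true]
    obtain rfl | hj := eq_or_ne a j
    · rw [Equiv.swap_apply_left, Equiv.swap_apply_left]
    obtain rfl | hk := eq_or_ne a k
    · rw [Equiv.swap_apply_right, Equiv.swap_apply_right]
    rw [Equiv.swap_apply_of_ne_of_ne (Fin.val_ne_of_ne hj) (Fin.val_ne_of_ne hk),
      Equiv.swap_apply_of_ne_of_ne (by simpa using hj) (by simpa using hk)]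
  · rw [Equiv.swap_apply_of_ne_of_ne (by rintro ⟨⟩; exact hl rfl) (by rintro ⟨⟩; exact hl rfl)]
    exact (if_neg hl).symm

theorem rename_toLabels_of_mem_colorPerms {f : PolyQ n} (hf : f ∈ Hspace γ)
    {σ : Equiv.Perm (Label γ)} (hσ : σ ∈ colorPerms (fun p : Label γ => p.1)) :
    rename σ (toLabels γ f) = toLabels γ f := by
  refine colorPerms_induction (motive := fun σ => rename σ (toLabels γ f) = toLabels γ f)
    ?_ ?_ hσ
  · exact rename_id_apply _
  · rintro ⟨i, j⟩ ⟨i', k⟩ τ (rfl : i = i') hτ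
    rw [Equiv.Perm.coe_mul, ← rename_rename, hτ]
    apply rename_injective _ (labelVar_injective γ)
    rw [rename_rename, labelVar_comp_swap, ← rename_rename, rename_toLabels hf.1]
    refine hf.2 i _ fun l hl => ?_
    obtain rfl | rfl := (Equiv.swap_apply_ne_self_iff.1 hl).2 <;> exact Fin.is_lt _

theorem eval_toLabels_eq_of_range_subset {f : PolyQ n} (hf : f ∈ Hspace γ) {M : Type*}
    {π : M → Fin n} {a b : Label γ → M} (ha : Function.Injective a)
    (haπ : ∀ p, π (a p) = p.1) (hbπ : ∀ p, π (b p) = p.1)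
    (hab : ∀ p, ∃ q, b q = a p) (z : M → ℚ) :
    eval (z ∘ a) (toLabels γ f) = eval (z ∘ b) (toLabels γ f) := by
  obtain ⟨ρ, hρ⟩ := exists_perm_of_range_subset ha hab
  have hcomp : z ∘ a = (z ∘ b) ∘ ρ := funext fun p => congrArg z (hρ p).symm
  have hcolor : ρ ∈ colorPerms (fun p : Label γ => p.1) :=
    mem_colorPerms.2 fun p => by rw [← hbπ, hρ, haπ]
  rw [hcomp, ← eval_rename, rename_toLabels_of_mem_colorPerms hf hcolor]

theorem vertexPerm_injective (i : Fin n) (σ : Equiv.Perm ℕ) :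
    Function.Injective (vertexPerm i σ) := by
  rintro ⟨a, b⟩ ⟨c, d⟩ h
  simp only [vertexPerm] at h
  split_ifs at h <;> simp_all

theorem vertexPerm_fst (i : Fin n) (σ : Equiv.Perm ℕ) (p : Fin n × ℕ) :
    (vertexPerm i σ p).1 = p.1 := by
  unfold vertexPerm
  split_ifs with h
  exacts [h.symm, rfl]

theorem lt_of_perm_moves_below {σ : Equiv.Perm ℕ} {N : ℕ} (hσ : ∀ j, σ j ≠ j → j < N) {j : ℕ}
    (hj : j < N) : σ j < N := by
  by_contra hlt
  have hfix : σ (σ j) = σ j := not_not.1 fun h => hlt (hσ _ h)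
  exact hlt ((σ.injective hfix).symm ▸ hj)

theorem rename_labelVar_mem_Hspace {g : MvPolynomial (Label γ) ℚ}
    (hg : ∀ σ ∈ colorPerms (fun p : Label γ => p.1), rename σ g = g) :
    rename (labelVar γ) g ∈ Hspace γ := by
  refine ⟨fun p hp => ?_, fun i σ hσ => ?_⟩
  · obtain ⟨q, _, rfl⟩ := Finset.mem_image.1 (vars_rename _ _ hp)
    exact q.2.2
  · have hrange : ∀ q : Label γ, ∃ q', labelVar γ q' = vertexPerm i σ (labelVar γ q) := by
      intro q
      apply exists_labelVar_eq
      unfold vertexPerm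
      split_ifs with h
      · exact lt_of_perm_moves_below hσ (h ▸ q.2.2)
      · exact q.2.2
    obtain ⟨ρ, hρ⟩ := exists_perm_of_range_subset
      ((vertexPerm_injective i σ).comp (labelVar_injective γ)) hrange
    have hcomp : vertexPerm i σ ∘ labelVar γ = labelVar γ ∘ ρ := funext fun p => (hρ p).symm
    have hcolor : ρ ∈ colorPerms (fun p : Label γ => p.1) :=
      mem_colorPerms.2 fun p => (congrArg Prod.fst (hρ p)).trans (vertexPerm_fst i σ _)
    rw [rename_rename, hcomp, ← rename_rename, hg ρ hcolor]

end Labels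

/-! ### The CoHA product as a shuffle sum -/

section NthElement

/-- The `k`-th element of `s` in increasing order, counting from `0`; it is `0` if `s` has at most
`k` elements. -/
noncomputable def nthElement (s : Finset ℕ) (k : ℕ) : ℕ := (s.sort (· ≤ ·)).getD k 0

variable {s : Finset ℕ} {c : ℕ}

theorem nthElement_eq_orderEmbOfFin (h : s.card = c) (k : Fin c) :
    nthElement s k = s.orderEmbOfFin h k := by
  rw [Finset.orderEmbOfFin_apply, nthElement,
    List.getD_eq_getElem _ _ (by rw [Finset.length_sort, h]; exact k.2)]
  rfl

theorem nthElement_mem (h : s.card = c) (k : Fin c) : nthElement s k ∈ s := by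
  rw [nthElement_eq_orderEmbOfFin h]
  exact Finset.orderEmbOfFin_mem s h k

theorem nthElement_injective (h : s.card = c) :
    Function.Injective fun k : Fin c => nthElement s k := by
  simpa only [nthElement_eq_orderEmbOfFin h] using (s.orderEmbOfFin h).injective

theorem prod_eq_prod_nthElement {M : Type*} [CommMonoid M] (h : s.card = c) (F : ℕ → M) :
    ∏ j ∈ s, F j = ∏ k : Fin c, F (nthElement s k) := by
  rw [← Finset.prod_coe_sort]
  refine (Fintype.prod_equiv (s.orderIsoOfFin h).toEquiv _ _ fun k => ?_).symm
  rw [nthElement_eq_orderEmbOfFin h]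
  rfl

end NthElement

section PairLabel

variable {γ₁ γ₂ : Fin n → ℕ}

/-- The labels of the variables of a pair of polynomials in `ℋ_{γ₁}` and `ℋ_{γ₂}`. -/
abbrev PairLabel (γ₁ γ₂ : Fin n → ℕ) : Type := Label γ₁ ⊕ Label γ₂

/-- The vertex of a label of the first or of the second factor. -/
def pairColor (γ₁ γ₂ : Fin n → ℕ) : PairLabel γ₁ γ₂ → Fin n :=
  Sum.elim (fun p => p.1) (fun p => p.1)

/-- The level of the labels of the first factor is `0`, that of the second factor is `1`. -/
def pairLevel (γ₁ γ₂ : Fin n → ℕ) : PairLabel γ₁ γ₂ → ℕ := Sum.elim (fun _ => 0) (fun _ => 1)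

/-- Each vertex receives its `γ₁ i` labels of the first factor followed by the `γ₂ i` labels of the
second one. -/
def labelAddEquiv (γ₁ γ₂ : Fin n → ℕ) : Label (γ₁ + γ₂) ≃ PairLabel γ₁ γ₂ :=
  (Equiv.sigmaCongrRight fun _ => finSumFinEquiv.symm).trans (Equiv.sigmaSumDistrib _ _)

theorem pairColor_labelAddEquiv (p : Label (γ₁ + γ₂)) :
    pairColor γ₁ γ₂ (labelAddEquiv γ₁ γ₂ p) = p.1 := by
  obtain ⟨i, k⟩ := p
  simp only [labelAddEquiv, pairColor, Equiv.trans_apply, Equiv.sigmaCongrRight_apply,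
    Equiv.sigmaSumDistrib_apply]
  rcases finSumFinEquiv.symm k <;> rfl

theorem labelAddEquiv_symm_fst (p : PairLabel γ₁ γ₂) :
    ((labelAddEquiv γ₁ γ₂).symm p).1 = pairColor γ₁ γ₂ p := by
  rw [← pairColor_labelAddEquiv, Equiv.apply_symm_apply]

/-- The variable of `ℋ_{γ₁ + γ₂}` at which a label of a pair is placed by the trivial shuffle. -/
def pairVar (γ₁ γ₂ : Fin n → ℕ) (p : PairLabel γ₁ γ₂) : Fin n × ℕ :=
  labelVar _ ((labelAddEquiv γ₁ γ₂).symm p)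

theorem pairVar_injective (γ₁ γ₂ : Fin n → ℕ) : Function.Injective (pairVar γ₁ γ₂) :=
  (labelVar_injective _).comp (Equiv.injective _)

theorem pairVar_fst (p : PairLabel γ₁ γ₂) : (pairVar γ₁ γ₂ p).1 = pairColor γ₁ γ₂ p :=
  labelAddEquiv_symm_fst p

theorem pairVar_snd_lt (p : PairLabel γ₁ γ₂) :
    (pairVar γ₁ γ₂ p).2 < γ₁ (pairColor γ₁ γ₂ p) + γ₂ (pairColor γ₁ γ₂ p) := by
  rw [← pairVar_fst]
  exact ((labelAddEquiv γ₁ γ₂).symm p).2.2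

theorem exists_pairVar_eq {p : Fin n × ℕ} (h : p.2 < γ₁ p.1 + γ₂ p.1) :
    ∃ q, pairVar γ₁ γ₂ q = p := by
  obtain ⟨q, hq⟩ := exists_labelVar_eq (γ := γ₁ + γ₂) h
  exact ⟨labelAddEquiv γ₁ γ₂ q, by rw [pairVar, Equiv.symm_apply_apply, hq]⟩

end PairLabel

section Shuffles

variable {γ₁ γ₂ : Fin n → ℕ} {S : Fin n → Finset ℕ}

theorem mem_shuffles :
    S ∈ shuffles γ₁ γ₂ ↔
      ∀ i, S i ⊆ Finset.range (γ₁ i + γ₂ i) ∧ (S i).card = γ₁ i := by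
  simp only [shuffles, Fintype.mem_piFinset, Finset.mem_filter, Finset.mem_powerset]

theorem card_of_mem_shuffles (hS : S ∈ shuffles γ₁ γ₂) (i : Fin n) : (S i).card = γ₁ i :=
  (mem_shuffles.1 hS i).2

theorem card_shuffleCompl (hS : S ∈ shuffles γ₁ γ₂) (i : Fin n) :
    (shuffleCompl γ₁ γ₂ S i).card = γ₂ i := by
  rw [shuffleCompl, Finset.card_sdiff_of_subset (mem_shuffles.1 hS i).1,
    card_of_mem_shuffles hS, Finset.card_range, Nat.add_sub_cancel_left]

/-- The variable at which the shuffle `S` places a label of a pair. -/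
noncomputable def shuffleVar (γ₁ γ₂ : Fin n → ℕ) (S : Fin n → Finset ℕ) :
    PairLabel γ₁ γ₂ → Fin n × ℕ :=
  Sum.elim (fun p => (p.1, nthElement (S p.1) p.2))
    (fun p => (p.1, nthElement (shuffleCompl γ₁ γ₂ S p.1) p.2))

theorem shuffleVar_fst (S : Fin n → Finset ℕ) (p : PairLabel γ₁ γ₂) :
    (shuffleVar γ₁ γ₂ S p).1 = pairColor γ₁ γ₂ p := by
  rcases p with p | p <;> rfl

theorem shuffleVar_inl_mem (hS : S ∈ shuffles γ₁ γ₂) (p : Label γ₁) :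
    (shuffleVar γ₁ γ₂ S (Sum.inl p)).2 ∈ S p.1 :=
  nthElement_mem (card_of_mem_shuffles hS _) p.2

theorem shuffleVar_inr_mem (hS : S ∈ shuffles γ₁ γ₂) (p : Label γ₂) :
    (shuffleVar γ₁ γ₂ S (Sum.inr p)).2 ∈ shuffleCompl γ₁ γ₂ S p.1 :=
  nthElement_mem (card_shuffleCompl hS _) p.2

theorem shuffleVar_inl_ne_inr (hS : S ∈ shuffles γ₁ γ₂) (p : Label γ₁) (q : Label γ₂) :
    shuffleVar γ₁ γ₂ S (Sum.inl p) ≠ shuffleVar γ₁ γ₂ S (Sum.inr q) := by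
  intro h
  have hcolor : p.1 = q.1 := congrArg Prod.fst h
  have hp := shuffleVar_inl_mem hS p
  rw [h, hcolor] at hp
  exact (Finset.mem_sdiff.1 (shuffleVar_inr_mem hS q)).2 hp

theorem shuffleVar_injective (hS : S ∈ shuffles γ₁ γ₂) :
    Function.Injective (shuffleVar γ₁ γ₂ S) := by
  rintro (⟨i, a⟩ | ⟨i, a⟩) (⟨j, b⟩ | ⟨j, b⟩) h
  · obtain rfl : i = j := congrArg Prod.fst h
    have hab : a = b := nthElement_injective (card_of_mem_shuffles hS i) (congrArg Prod.snd h)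
    rw [hab]
  · exact absurd h (shuffleVar_inl_ne_inr hS _ _)
  · exact absurd h.symm (shuffleVar_inl_ne_inr hS _ _)
  · obtain rfl : i = j := congrArg Prod.fst h
    have hab : a = b := nthElement_injective (card_shuffleCompl hS i) (congrArg Prod.snd h)
    rw [hab]

theorem exists_perm_shuffleVar (hS : S ∈ shuffles γ₁ γ₂) :
    ∃ σ ∈ colorPerms (pairColor γ₁ γ₂), pairVar γ₁ γ₂ ∘ σ = shuffleVar γ₁ γ₂ S := by
  have hrange : ∀ p, ∃ q, pairVar γ₁ γ₂ q = shuffleVar γ₁ γ₂ S p := by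
    intro p
    apply exists_pairVar_eq
    rcases p with p | p
    · exact Finset.mem_range.1 ((mem_shuffles.1 hS _).1 (shuffleVar_inl_mem hS p))
    · exact Finset.mem_range.1 (Finset.mem_sdiff.1 (shuffleVar_inr_mem hS p)).1
  obtain ⟨σ, hσ⟩ := exists_perm_of_range_subset (shuffleVar_injective hS) hrange
  refine ⟨σ, mem_colorPerms.2 fun p => ?_, funext hσ⟩
  rw [← pairVar_fst, hσ, shuffleVar_fst]

theorem injective_comp_shuffleVar {z : Fin n × ℕ → ℚ}
    (hz : Function.Injective (z ∘ pairVar γ₁ γ₂)) (hS : S ∈ shuffles γ₁ γ₂) :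
    Function.Injective (z ∘ shuffleVar γ₁ γ₂ S) := by
  obtain ⟨σ, -, hσ⟩ := exists_perm_shuffleVar hS
  rw [← hσ]
  exact hz.comp σ.injective

end Shuffles

section Evaluation

variable {γ₁ γ₂ : Fin n → ℕ} {S : Fin n → Finset ℕ} {z : Fin n × ℕ → ℚ}

theorem prod_label_ite_eq {γ : Fin n → ℕ} {M : Type*} [CommMonoid M] (i : Fin n)
    (F : Label γ → M) :
    ∏ p : Label γ, (if i = p.1 then F p else 1) = ∏ k : Fin (γ i), F ⟨i, k⟩ := by
  rw [Fintype.prod_sigma, Finset.prod_eq_single i]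
  · simp
  · intro j _ hj
    simp [hj.symm]
  · simp

theorem prod_label_ite_and_eq {M : Type*} [CommMonoid M] (i j : Fin n)
    (F : Label γ₁ → Label γ₂ → M) :
    ∏ p : Label γ₁, ∏ q : Label γ₂, (if i = p.1 ∧ j = q.1 then F p q else 1) =
      ∏ k : Fin (γ₁ i), ∏ l : Fin (γ₂ j), F ⟨i, k⟩ ⟨j, l⟩ := by
  rw [← prod_label_ite_eq i (fun p => ∏ l : Fin (γ₂ j), F p ⟨j, l⟩)]
  refine Finset.prod_congr rfl fun p _ => ?_
  by_cases h : i = p.1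
  · rw [if_pos h, ← prod_label_ite_eq j (fun q => F p q)]
    simp only [h, true_and]
  · simp [h]

theorem shuffleKernel_sumElim {A B I : Type*} [Fintype A] [Fintype B] (e : I → I → ℤ)
    (π : A ⊕ B → I) (y : A ⊕ B → ℚ) :
    shuffleKernel e π (Sum.elim (fun _ => 0) (fun _ => 1)) y =
      ∏ p : A, ∏ q : B, (y (Sum.inr q) - y (Sum.inl p)) ^ e (π (Sum.inl p)) (π (Sum.inr q)) := by
  rw [shuffleKernel, Fintype.prod_prod_type]
  simp [Fintype.prod_sum_type]

theorem eval_prod_shuffleCompl (hS : S ∈ shuffles γ₁ γ₂) (z : Fin n × ℕ → ℚ) (i j : Fin n) :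
    eval z (∏ j' ∈ shuffleCompl γ₁ γ₂ S j, ∏ k ∈ S i, (X (j, j') - X (i, k)) : PolyQ n) =
      ∏ p : Label γ₁, ∏ q : Label γ₂, if i = p.1 ∧ j = q.1 then
        z (shuffleVar γ₁ γ₂ S (Sum.inr q)) - z (shuffleVar γ₁ γ₂ S (Sum.inl p)) else 1 := by
  rw [map_prod, prod_eq_prod_nthElement (card_shuffleCompl hS _)]
  simp only [map_prod, map_sub, eval_X]
  rw [Finset.prod_comm, prod_eq_prod_nthElement (card_of_mem_shuffles hS _), prod_label_ite_and_eq]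
  rfl

theorem shuffleVar_sub_ne_zero (hz : Function.Injective (z ∘ shuffleVar γ₁ γ₂ S)) (p : Label γ₁)
    (q : Label γ₂) :
    z (shuffleVar γ₁ γ₂ S (Sum.inr q)) - z (shuffleVar γ₁ γ₂ S (Sum.inl p)) ≠ 0 :=
  sub_ne_zero.2 fun h => Sum.inr_ne_inl (hz h)

theorem eval_interactionNum (Q : FinQuiver n) (hS : S ∈ shuffles γ₁ γ₂)
    (hz : Function.Injective (z ∘ shuffleVar γ₁ γ₂ S)) :
    eval z (interactionNum Q γ₁ γ₂ S) = ∏ p : Label γ₁, ∏ q : Label γ₂,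
      (z (shuffleVar γ₁ γ₂ S (Sum.inr q)) - z (shuffleVar γ₁ γ₂ S (Sum.inl p))) ^
        (∑ a : Q.Arr, if Q.tl a = p.1 ∧ Q.hd a = q.1 then (1 : ℤ) else 0) := by
  simp only [interactionNum, arrowFactor, map_prod (eval z) _ (Finset.univ : Finset Q.Arr),
    eval_prod_shuffleCompl hS]
  rw [Finset.prod_comm]
  refine Finset.prod_congr rfl fun p _ => ?_
  rw [Finset.prod_comm]
  refine Finset.prod_congr rfl fun q _ => ?_
  rw [← prod_zpow_eq_zpow_sum _ _ (shuffleVar_sub_ne_zero hz p q)]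
  refine Finset.prod_congr rfl fun a _ => ?_
  split_ifs <;> simp

theorem eval_interactionDen (hS : S ∈ shuffles γ₁ γ₂) (z : Fin n × ℕ → ℚ) :
    eval z (interactionDen γ₁ γ₂ S) = ∏ p : Label γ₁, ∏ q : Label γ₂,
      (z (shuffleVar γ₁ γ₂ S (Sum.inr q)) - z (shuffleVar γ₁ γ₂ S (Sum.inl p))) ^
        (if p.1 = q.1 then (1 : ℤ) else 0) := by
  rw [interactionDen, map_prod]
  simp only [eval_prod_shuffleCompl hS]
  rw [Finset.prod_comm]
  refine Finset.prod_congr rfl fun p _ => ?_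
  rw [Finset.prod_comm]
  refine Finset.prod_congr rfl fun q _ => ?_
  rw [Finset.prod_eq_single p.1]
  · split_ifs <;> simp_all
  · intro i _ hi
    exact if_neg fun h => hi h.1
  · simp

theorem eval_interactionDen_ne_zero (hS : S ∈ shuffles γ₁ γ₂)
    (hz : Function.Injective (z ∘ shuffleVar γ₁ γ₂ S)) :
    eval z (interactionDen γ₁ γ₂ S) ≠ 0 := by
  rw [eval_interactionDen hS]
  exact Finset.prod_ne_zero_iff.2 fun p _ => Finset.prod_ne_zero_iff.2 fun q _ =>
    zpow_ne_zero _ (shuffleVar_sub_ne_zero hz p q)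

theorem eval_interactionNum_div_interactionDen (Q : FinQuiver n) (hS : S ∈ shuffles γ₁ γ₂)
    (hz : Function.Injective (z ∘ shuffleVar γ₁ γ₂ S)) :
    eval z (interactionNum Q γ₁ γ₂ S) / eval z (interactionDen γ₁ γ₂ S) =
      shuffleKernel (quiverExponent Q) (pairColor γ₁ γ₂) (pairLevel γ₁ γ₂)
        (z ∘ shuffleVar γ₁ γ₂ S) := by
  rw [pairLevel, shuffleKernel_sumElim, eval_interactionNum Q hS hz, eval_interactionDen hS]
  simp only [← Finset.prod_div_distrib, ← zpow_sub₀ (shuffleVar_sub_ne_zero hz _ _)]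
  rfl

theorem interactionDen_ne_zero (γ₁ γ₂ : Fin n → ℕ) (S : Fin n → Finset ℕ) :
    interactionDen γ₁ γ₂ S ≠ 0 := by
  refine Finset.prod_ne_zero_iff.2 fun i _ => Finset.prod_ne_zero_iff.2 fun j' hj' =>
    Finset.prod_ne_zero_iff.2 fun j hj => sub_ne_zero.2 fun h => ?_
  obtain ⟨-, rfl⟩ := Prod.mk.inj (X_injective h)
  exact (Finset.mem_sdiff.1 hj').2 hj

theorem eval_substAlong {γ : Fin n → ℕ} {f : PolyQ n} (hf : ∀ p ∈ f.vars, p.2 < γ p.1)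
    (S : Fin n → Finset ℕ) (z : Fin n × ℕ → ℚ) :
    eval z (substAlong S f) =
      eval (z ∘ fun p : Label γ => (p.1, nthElement (S p.1) p.2)) (toLabels γ f) := by
  conv_lhs => rw [← rename_toLabels hf]
  rw [substAlong, aeval_rename, eval_aeval]
  simp only [Function.comp_apply, eval_X]
  rfl

/-- The value of the localization summand `f₁ · f₂ · kernel` when the variables of the two factors
are specialized to `y`. -/
noncomputable def pairSummand (Q : FinQuiver n) (γ₁ γ₂ : Fin n → ℕ) (f₁ f₂ : PolyQ n)
    (y : PairLabel γ₁ γ₂ → ℚ) : ℚ :=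
  eval (y ∘ Sum.inl) (toLabels γ₁ f₁) * eval (y ∘ Sum.inr) (toLabels γ₂ f₂) *
    shuffleKernel (quiverExponent Q) (pairColor γ₁ γ₂) (pairLevel γ₁ γ₂) y

theorem eval_summand_cohaMulRat (Q : FinQuiver n) (hS : S ∈ shuffles γ₁ γ₂) {f₁ f₂ : PolyQ n}
    (h₁ : f₁ ∈ Hspace γ₁) (h₂ : f₂ ∈ Hspace γ₂)
    (hz : Function.Injective (z ∘ shuffleVar γ₁ γ₂ S)) :
    eval z (substAlong S f₁ * substAlong (shuffleCompl γ₁ γ₂ S) f₂ * interactionNum Q γ₁ γ₂ S) /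
      eval z (interactionDen γ₁ γ₂ S) = pairSummand Q γ₁ γ₂ f₁ f₂ (z ∘ shuffleVar γ₁ γ₂ S) := by
  rw [map_mul, mul_div_assoc, eval_interactionNum_div_interactionDen Q hS hz, map_mul,
    eval_substAlong h₁.1, eval_substAlong h₂.1]
  rfl

theorem sum_pairSummand_eq_shuffleSum (Q : FinQuiver n) (γ₁ γ₂ : Fin n → ℕ) (f₁ f₂ : PolyQ n)
    (y : PairLabel γ₁ γ₂ → ℚ) :
    ∑ σ ∈ colorPerms (pairColor γ₁ γ₂), pairSummand Q γ₁ γ₂ f₁ f₂ (y ∘ σ) =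
      shuffleSum (quiverExponent Q) (pairColor γ₁ γ₂) (pairLevel γ₁ γ₂)
        (rename Sum.inl (toLabels γ₁ f₁) * rename Sum.inr (toLabels γ₂ f₂)) y := by
  refine Finset.sum_congr rfl fun σ _ => ?_
  rw [pairSummand, map_mul, eval_rename, eval_rename]

end Evaluation

section LevelPerms

variable {γ₁ γ₂ : Fin n → ℕ} {S : Fin n → Finset ℕ} {f₁ f₂ : PolyQ n}
  {σ σ₀ τ : Equiv.Perm (PairLabel γ₁ γ₂)}

/-- The colour-preserving permutations of a pair of labellings which do not mix the two factors. -/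
noncomputable def levelPerms (γ₁ γ₂ : Fin n → ℕ) : Finset (Equiv.Perm (PairLabel γ₁ γ₂)) :=
  {τ ∈ colorPerms (pairColor γ₁ γ₂) | ∀ p, pairLevel γ₁ γ₂ (τ p) = pairLevel γ₁ γ₂ p}

theorem mem_levelPerms :
    τ ∈ levelPerms γ₁ γ₂ ↔ τ ∈ colorPerms (pairColor γ₁ γ₂) ∧
      ∀ p, pairLevel γ₁ γ₂ (τ p) = pairLevel γ₁ γ₂ p :=
  Finset.mem_filter

theorem card_levelPerms_ne_zero (γ₁ γ₂ : Fin n → ℕ) : ((levelPerms γ₁ γ₂).card : ℚ) ≠ 0 := by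
  have hone : 1 ∈ levelPerms γ₁ γ₂ := mem_levelPerms.2 ⟨by simp, by simp⟩
  exact_mod_cast (Finset.card_pos.2 ⟨1, hone⟩).ne'

theorem exists_eq_inl_of_pairLevel {p : PairLabel γ₁ γ₂} (h : pairLevel γ₁ γ₂ p = 0) :
    ∃ q, Sum.inl q = p := by
  rcases p with q | q
  exacts [⟨q, rfl⟩, absurd h one_ne_zero]

theorem exists_eq_inr_of_pairLevel {p : PairLabel γ₁ γ₂} (h : pairLevel γ₁ γ₂ p = 1) :
    ∃ q, Sum.inr q = p := by
  rcases p with q | q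
  exacts [absurd h zero_ne_one, ⟨q, rfl⟩]

theorem pairSummand_comp (Q : FinQuiver n) (h₁ : f₁ ∈ Hspace γ₁) (h₂ : f₂ ∈ Hspace γ₂)
    (hτ : τ ∈ levelPerms γ₁ γ₂) (y : PairLabel γ₁ γ₂ → ℚ) :
    pairSummand Q γ₁ γ₂ f₁ f₂ (y ∘ τ) = pairSummand Q γ₁ γ₂ f₁ f₂ y := by
  obtain ⟨hcolor, hlevel⟩ := mem_levelPerms.1 hτ
  have hleft : eval (y ∘ τ ∘ Sum.inl) (toLabels γ₁ f₁) = eval (y ∘ Sum.inl) (toLabels γ₁ f₁) :=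
    eval_toLabels_eq_of_range_subset h₁ (π := pairColor γ₁ γ₂)
      (τ.injective.comp Sum.inl_injective) (fun _ => mem_colorPerms.1 hcolor _) (fun _ => rfl)
      (fun p => exists_eq_inl_of_pairLevel (hlevel (Sum.inl p))) y
  have hright : eval (y ∘ τ ∘ Sum.inr) (toLabels γ₂ f₂) = eval (y ∘ Sum.inr) (toLabels γ₂ f₂) :=
    eval_toLabels_eq_of_range_subset h₂ (π := pairColor γ₁ γ₂)
      (τ.injective.comp Sum.inr_injective) (fun _ => mem_colorPerms.1 hcolor _) (fun _ => rfl)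
      (fun p => exists_eq_inr_of_pairLevel (hlevel (Sum.inr p))) y
  have hkernel := shuffleKernel_comp_perm_of_level_eq (e := quiverExponent Q)
    (w := pairLevel γ₁ γ₂) y hcolor (funext hlevel)
  rw [pairSummand, Function.comp_assoc, Function.comp_assoc, hleft, hright, hkernel, pairSummand]

/-- The shuffle recording the positions to which `σ` moves the labels of the first factor. -/
def permShuffle (σ : Equiv.Perm (PairLabel γ₁ γ₂)) (i : Fin n) : Finset ℕ :=
  Finset.univ.image fun k : Fin (γ₁ i) => (pairVar γ₁ γ₂ (σ (Sum.inl ⟨i, k⟩))).2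

theorem card_permShuffle (hσ : σ ∈ colorPerms (pairColor γ₁ γ₂)) (i : Fin n) :
    (permShuffle σ i).card = γ₁ i := by
  rw [permShuffle, Finset.card_image_of_injective, Finset.card_univ, Fintype.card_fin]
  intro k l hkl
  have hvar : pairVar γ₁ γ₂ (σ (Sum.inl ⟨i, k⟩)) = pairVar γ₁ γ₂ (σ (Sum.inl ⟨i, l⟩)) := by
    refine Prod.ext ?_ hkl
    rw [pairVar_fst, pairVar_fst, mem_colorPerms.1 hσ, mem_colorPerms.1 hσ]
    rfl
  simpa using σ.injective (pairVar_injective _ _ hvar)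

theorem permShuffle_mem_shuffles (hσ : σ ∈ colorPerms (pairColor γ₁ γ₂)) :
    permShuffle σ ∈ shuffles γ₁ γ₂ := by
  refine mem_shuffles.2 fun i => ⟨fun x hx => ?_, card_permShuffle hσ i⟩
  obtain ⟨k, _, rfl⟩ := Finset.mem_image.1 hx
  have hlt := pairVar_snd_lt (σ (Sum.inl ⟨i, k⟩))
  rw [mem_colorPerms.1 hσ] at hlt
  exact Finset.mem_range.2 hlt

theorem permShuffle_eq_iff (hσ : σ ∈ colorPerms (pairColor γ₁ γ₂)) (hS : S ∈ shuffles γ₁ γ₂) :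
    permShuffle σ = S ↔ ∀ p : Label γ₁, (pairVar γ₁ γ₂ (σ (Sum.inl p))).2 ∈ S p.1 := by
  constructor
  · rintro rfl p
    exact Finset.mem_image.2 ⟨p.2, Finset.mem_univ _, rfl⟩
  · intro hp
    funext i
    apply Finset.eq_of_subset_of_card_le
    · intro x hx
      obtain ⟨k, _, rfl⟩ := Finset.mem_image.1 hx
      exact hp ⟨i, k⟩
    · rw [card_permShuffle hσ, card_of_mem_shuffles hS]

theorem shuffleVar_mem_iff (hS : S ∈ shuffles γ₁ γ₂) (p : PairLabel γ₁ γ₂) :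
    (shuffleVar γ₁ γ₂ S p).2 ∈ S (pairColor γ₁ γ₂ p) ↔ pairLevel γ₁ γ₂ p = 0 := by
  rcases p with p | p
  · exact iff_of_true (shuffleVar_inl_mem hS p) rfl
  · exact iff_of_false (Finset.mem_sdiff.1 (shuffleVar_inr_mem hS p)).2 one_ne_zero

theorem pairLevel_comp_eq_iff (τ : Equiv.Perm (PairLabel γ₁ γ₂)) :
    (∀ p, pairLevel γ₁ γ₂ (τ p) = pairLevel γ₁ γ₂ p) ↔
      ∀ p, pairLevel γ₁ γ₂ (τ (Sum.inl p)) = 0 := by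
  refine ⟨fun h p => h (Sum.inl p), fun h => ?_⟩
  have hmaps : Set.MapsTo τ (Set.range Sum.inr) (Set.range Sum.inr) :=
    (Equiv.Perm.perm_mapsTo_inl_iff_mapsTo_inr τ).1 <| by
      rintro _ ⟨p, rfl⟩
      exact exists_eq_inl_of_pairLevel (h p)
  rintro (p | p)
  · exact h p
  · obtain ⟨q, hq⟩ := hmaps ⟨p, rfl⟩
    rw [← hq]
    rfl

theorem permShuffle_eq_iff_mem_levelPerms (hσ : σ ∈ colorPerms (pairColor γ₁ γ₂))
    (hS : S ∈ shuffles γ₁ γ₂) (hσ₀ : σ₀ ∈ colorPerms (pairColor γ₁ γ₂))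
    (hS₀ : pairVar γ₁ γ₂ ∘ σ₀ = shuffleVar γ₁ γ₂ S) :
    permShuffle σ = S ↔ σ₀⁻¹ * σ ∈ levelPerms γ₁ γ₂ := by
  have hcolor := mul_mem_colorPerms (inv_mem_colorPerms hσ₀) hσ
  have hvar : ∀ x, pairVar γ₁ γ₂ (σ x) = shuffleVar γ₁ γ₂ S ((σ₀⁻¹ * σ) x) := by
    intro x
    rw [← hS₀]
    simp
  rw [permShuffle_eq_iff hσ hS, mem_levelPerms, and_iff_right hcolor, pairLevel_comp_eq_iff]
  refine forall_congr' fun p => ?_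
  rw [← shuffleVar_mem_iff hS, hvar, mem_colorPerms.1 hcolor]
  rfl

theorem card_filter_permShuffle_eq (hS : S ∈ shuffles γ₁ γ₂) :
    {σ ∈ colorPerms (pairColor γ₁ γ₂) | permShuffle σ = S}.card = (levelPerms γ₁ γ₂).card := by
  obtain ⟨σ₀, hσ₀, hS₀⟩ := exists_perm_shuffleVar hS
  refine Finset.card_bij' (fun σ _ => σ₀⁻¹ * σ) (fun τ _ => σ₀ * τ) ?_ ?_ (by simp) (by simp)
  · intro σ hσ
    rw [Finset.mem_filter] at hσ
    exact (permShuffle_eq_iff_mem_levelPerms hσ.1 hS hσ₀ hS₀).1 hσ.2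
  · intro τ hτ
    have hcolor := mul_mem_colorPerms hσ₀ (mem_levelPerms.1 hτ).1
    refine Finset.mem_filter.2
      ⟨hcolor, (permShuffle_eq_iff_mem_levelPerms hcolor hS hσ₀ hS₀).2 ?_⟩
    rwa [inv_mul_cancel_left]

theorem pairSummand_comp_pairVar (Q : FinQuiver n) (h₁ : f₁ ∈ Hspace γ₁) (h₂ : f₂ ∈ Hspace γ₂)
    (hσ : σ ∈ colorPerms (pairColor γ₁ γ₂)) (z : Fin n × ℕ → ℚ) :
    pairSummand Q γ₁ γ₂ f₁ f₂ (z ∘ pairVar γ₁ γ₂ ∘ σ) =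
      pairSummand Q γ₁ γ₂ f₁ f₂ (z ∘ shuffleVar γ₁ γ₂ (permShuffle σ)) := by
  have hS := permShuffle_mem_shuffles hσ
  obtain ⟨σ₀, hσ₀, hS₀⟩ := exists_perm_shuffleVar hS
  have hlevel := (permShuffle_eq_iff_mem_levelPerms hσ hS hσ₀ hS₀).1 rfl
  rw [← pairSummand_comp Q h₁ h₂ hlevel (z ∘ shuffleVar γ₁ γ₂ _), ← hS₀]
  congr 1
  funext x
  simp

theorem sum_colorPerms_pairSummand (Q : FinQuiver n) (h₁ : f₁ ∈ Hspace γ₁) (h₂ : f₂ ∈ Hspace γ₂)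
    (z : Fin n × ℕ → ℚ) :
    ∑ σ ∈ colorPerms (pairColor γ₁ γ₂), pairSummand Q γ₁ γ₂ f₁ f₂ (z ∘ pairVar γ₁ γ₂ ∘ σ) =
      (levelPerms γ₁ γ₂).card *
        ∑ S ∈ shuffles γ₁ γ₂, pairSummand Q γ₁ γ₂ f₁ f₂ (z ∘ shuffleVar γ₁ γ₂ S) := by
  rw [← Finset.sum_fiberwise_of_maps_to (t := shuffles γ₁ γ₂) (g := permShuffle)
    fun σ hσ => permShuffle_mem_shuffles hσ, Finset.mul_sum]
  refine Finset.sum_congr rfl fun S hS => ?_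
  rw [← card_filter_permShuffle_eq hS, ← nsmul_eq_mul]
  refine Finset.sum_eq_card_nsmul fun σ hσ => ?_
  obtain ⟨hcolor, rfl⟩ := Finset.mem_filter.1 hσ
  exact pairSummand_comp_pairVar Q h₁ h₂ hcolor z

end LevelPerms

section CohaMul

variable {γ₁ γ₂ : Fin n → ℕ} {f₁ f₂ : PolyQ n}

theorem algebraMap_eq_sum_div {ι R : Type*} [CommRing R] [IsDomain R] (s : Finset ι)
    (A D : ι → R) (P : R) (hD : ∀ i ∈ s, D i ≠ 0)
    (h : P * ∏ i ∈ s, D i = ∑ i ∈ s, A i * ∏ j ∈ s.erase i, D j) :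
    algebraMap R (FractionRing R) P =
      ∑ i ∈ s, algebraMap R (FractionRing R) (A i) / algebraMap R (FractionRing R) (D i) := by
  have hD' : ∀ i ∈ s, algebraMap R (FractionRing R) (D i) ≠ 0 := fun i hi =>
    (map_ne_zero_iff _ (IsFractionRing.injective R (FractionRing R))).2 (hD i hi)
  apply mul_right_cancel₀ (Finset.prod_ne_zero_iff.2 hD')
  rw [← map_prod, ← map_mul, h, map_sum, Finset.sum_mul]
  refine Finset.sum_congr rfl fun i hi => ?_
  rw [map_mul, ← Finset.mul_prod_erase s D hi, map_mul]
  field_simp [hD' i hi]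

theorem eq_of_eval_eq_of_injective_comp {L M : Type*} [Finite L] {v : L → M}
    (hv : Function.Injective v) {f g : MvPolynomial M ℚ}
    (h : ∀ z, Function.Injective (z ∘ v) → eval z f = eval z g) : f = g := by
  cases nonempty_fintype L
  rw [← sub_eq_zero]
  refine eq_zero_of_eval_eq_zero_of_eval_ne_zero (d := rename v (colorDiscriminant fun _ : L => ()))
    ((map_ne_zero_iff _ (rename_injective v hv)).2 (colorDiscriminant_ne_zero _)) fun z hz => ?_
  rw [eval_rename, eval_colorDiscriminant_ne_zero_iff] at hz
  rw [map_sub, h z fun p q hpq => not_not.1 fun hne => hz p q hne rfl hpq, sub_self]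

theorem cohaMul_eq_of_algebraMap_eq {Q : FinQuiver n} {P : PolyQ n}
    (h : algebraMap (PolyQ n) (FractionRing (PolyQ n)) P = cohaMulRat Q γ₁ γ₂ f₁ f₂) :
    cohaMul Q γ₁ γ₂ f₁ f₂ = P := by
  have hex : ∃ P : PolyQ n,
    algebraMap (PolyQ n) (FractionRing (PolyQ n)) P = cohaMulRat Q γ₁ γ₂ f₁ f₂ := ⟨P, h⟩
  rw [cohaMul, dif_pos hex]
  exact IsFractionRing.injective (PolyQ n) (FractionRing (PolyQ n)) (hex.choose_spec.trans h.symm)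

theorem cohaMul_eq_of_eval_eq {Q : FinQuiver n} (h₁ : f₁ ∈ Hspace γ₁) (h₂ : f₂ ∈ Hspace γ₂)
    {P : PolyQ n} (hP : ∀ z : Fin n × ℕ → ℚ, Function.Injective (z ∘ pairVar γ₁ γ₂) →
      eval z P = ∑ S ∈ shuffles γ₁ γ₂, pairSummand Q γ₁ γ₂ f₁ f₂ (z ∘ shuffleVar γ₁ γ₂ S)) :
    cohaMul Q γ₁ γ₂ f₁ f₂ = P := by
  apply cohaMul_eq_of_algebraMap_eq
  apply algebraMap_eq_sum_div _ _ _ _ fun S _ => interactionDen_ne_zero γ₁ γ₂ S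
  refine eq_of_eval_eq_of_injective_comp (pairVar_injective γ₁ γ₂) fun z hz => ?_
  rw [map_mul, hP z hz, map_prod, map_sum, Finset.sum_mul]
  refine Finset.sum_congr rfl fun S hS => ?_
  have hzS := injective_comp_shuffleVar hz hS
  rw [← eval_summand_cohaMulRat Q hS h₁ h₂ hzS, map_mul (eval z) _ (∏ j ∈ _, _), map_prod,
    ← Finset.mul_prod_erase _ _ hS, ← mul_assoc,
    div_mul_cancel₀ _ (eval_interactionDen_ne_zero hS hzS)]
  congr!

theorem Represents.rename_eq {L I : Type*} [Fintype L] {e : I → I → ℤ} {π : L → I} {w : L → ℕ}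
    {g P : MvPolynomial L ℚ} (hP : Represents P (shuffleSum e π w g)) {σ : Equiv.Perm L}
    (hσ : σ ∈ colorPerms π) : rename σ P = P := by
  refine Represents.unique (fun y hy => ?_) hP
  rw [eval_rename, hP _ (hy.comp σ.injective), shuffleSum_comp hσ]

/-- The polynomial in the labels of `γ₁ + γ₂` corresponding to `P`, divided by the number of
permutations which do not mix the two factors. -/
noncomputable def averageOverLevels {γ₁ γ₂ : Fin n → ℕ} (P : MvPolynomial (PairLabel γ₁ γ₂) ℚ) :
    MvPolynomial (Label (γ₁ + γ₂)) ℚ :=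
  C ((levelPerms γ₁ γ₂).card : ℚ)⁻¹ * rename (labelAddEquiv γ₁ γ₂).symm P

theorem cohaMul_eq_rename_averageOverLevels {Q : FinQuiver n} (h₁ : f₁ ∈ Hspace γ₁)
    (h₂ : f₂ ∈ Hspace γ₂) {P : MvPolynomial (PairLabel γ₁ γ₂) ℚ}
    (hP : Represents P (shuffleSum (quiverExponent Q) (pairColor γ₁ γ₂) (pairLevel γ₁ γ₂)
      (rename Sum.inl (toLabels γ₁ f₁) * rename Sum.inr (toLabels γ₂ f₂)))) :
    cohaMul Q γ₁ γ₂ f₁ f₂ = rename (labelVar (γ₁ + γ₂)) (averageOverLevels P) := by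
  refine cohaMul_eq_of_eval_eq h₁ h₂ fun z hz => ?_
  have hcomp : (z ∘ labelVar (γ₁ + γ₂)) ∘ (labelAddEquiv γ₁ γ₂).symm = z ∘ pairVar γ₁ γ₂ := rfl
  rw [averageOverLevels, eval_rename, map_mul, eval_C, eval_rename, hcomp, hP _ hz,
    ← sum_pairSummand_eq_shuffleSum]
  exact (inv_mul_eq_iff_eq_mul₀ (card_levelPerms_ne_zero γ₁ γ₂)).2
    (sum_colorPerms_pairSummand Q h₁ h₂ z)

theorem rename_averageOverLevels {P : MvPolynomial (PairLabel γ₁ γ₂) ℚ}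
    (hP : ∀ σ ∈ colorPerms (pairColor γ₁ γ₂), rename σ P = P) {σ : Equiv.Perm (Label (γ₁ + γ₂))}
    (hσ : σ ∈ colorPerms (fun p : Label (γ₁ + γ₂) => p.1)) :
    rename σ (averageOverLevels P) = averageOverLevels P := by
  set σ' : Equiv.Perm (PairLabel γ₁ γ₂) :=
    ((labelAddEquiv γ₁ γ₂).symm.trans σ).trans (labelAddEquiv γ₁ γ₂)
  have hσ' : σ' ∈ colorPerms (pairColor γ₁ γ₂) := mem_colorPerms.2 fun p => by
    rw [← labelAddEquiv_symm_fst p, ← mem_colorPerms.1 hσ]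
    exact pairColor_labelAddEquiv _
  have hcomp : σ ∘ (labelAddEquiv γ₁ γ₂).symm = (labelAddEquiv γ₁ γ₂).symm ∘ σ' := by
    funext x
    simp [σ']
  rw [averageOverLevels, map_mul, rename_C, rename_rename, hcomp, ← rename_rename, hP σ' hσ']

theorem cohaMul_mem_Hspace (Q : FinQuiver n) (h₁ : f₁ ∈ Hspace γ₁) (h₂ : f₂ ∈ Hspace γ₂) :
    cohaMul Q γ₁ γ₂ f₁ f₂ ∈ Hspace (γ₁ + γ₂) := by
  obtain ⟨P, hP⟩ := exists_represents_shuffleSum (isQuiverExponent_quiverExponent Q)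
    (pairColor γ₁ γ₂) (pairLevel γ₁ γ₂)
    (rename Sum.inl (toLabels γ₁ f₁) * rename Sum.inr (toLabels γ₂ f₂))
  rw [cohaMul_eq_rename_averageOverLevels h₁ h₂ hP]
  exact rename_labelVar_mem_Hspace fun σ hσ =>
    rename_averageOverLevels (fun _ => hP.rename_eq) hσ

theorem card_levelPerms_mul_eval_cohaMul (Q : FinQuiver n) (h₁ : f₁ ∈ Hspace γ₁)
    (h₂ : f₂ ∈ Hspace γ₂) {y : PairLabel γ₁ γ₂ → ℚ} (hy : Function.Injective y) :
    ((levelPerms γ₁ γ₂).card : ℚ) *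
        eval (y ∘ labelAddEquiv γ₁ γ₂) (toLabels (γ₁ + γ₂) (cohaMul Q γ₁ γ₂ f₁ f₂)) =
      shuffleSum (quiverExponent Q) (pairColor γ₁ γ₂) (pairLevel γ₁ γ₂)
        (rename Sum.inl (toLabels γ₁ f₁) * rename Sum.inr (toLabels γ₂ f₂)) y := by
  obtain ⟨P, hP⟩ := exists_represents_shuffleSum (isQuiverExponent_quiverExponent Q)
    (pairColor γ₁ γ₂) (pairLevel γ₁ γ₂)
    (rename Sum.inl (toLabels γ₁ f₁) * rename Sum.inr (toLabels γ₂ f₂))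
  have hcomp : (y ∘ labelAddEquiv γ₁ γ₂) ∘ (labelAddEquiv γ₁ γ₂).symm = y := by
    funext x
    simp
  rw [cohaMul_eq_rename_averageOverLevels h₁ h₂ hP, toLabels_rename, averageOverLevels, map_mul,
    eval_C, eval_rename, mul_inv_cancel_left₀ (card_levelPerms_ne_zero γ₁ γ₂), hcomp, hP y hy]

end CohaMul

/-! ### Iterated products -/

section ShuffleSum

variable {L I : Type*} [Fintype L]

theorem shuffleSum_comp_equiv {M : Type*} [Fintype M] (e : I → I → ℤ) (π : L → I) (w : L → ℕ)
    (g : MvPolynomial M ℚ) (y : L → ℚ) (φ : M ≃ L) :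
    shuffleSum e (π ∘ φ) (w ∘ φ) g (y ∘ φ) = shuffleSum e π w (rename φ g) y := by
  refine Finset.sum_equiv φ.permCongr (fun σ => ?_) fun σ _ => ?_
  · simp only [mem_colorPerms, Equiv.permCongr_apply, Function.comp_apply]
    exact ⟨fun h p => by simpa using h (φ.symm p), fun h p => by simpa using h (φ p)⟩
  · have hcomp : (y ∘ φ.permCongr σ) ∘ φ = (y ∘ φ) ∘ σ := by
      funext p
      simp
    rw [eval_rename, ← shuffleKernel_comp_equiv e π w _ φ, hcomp]

theorem shuffleSum_of_level_eq {e : I → I → ℤ} {π : L → I} {w : L → ℕ} (hw : ∀ p q, w p = w q)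
    {g : MvPolynomial L ℚ} {y : L → ℚ}
    (hg : ∀ σ ∈ colorPerms π, eval (y ∘ σ) g = eval y g) :
    shuffleSum e π w g y = (colorPerms π).card * eval y g := by
  have hkernel (y' : L → ℚ) : shuffleKernel e π w y' = 1 :=
    Finset.prod_eq_one fun a _ => if_neg (hw a.1 a.2).not_lt
  rw [shuffleSum, ← nsmul_eq_mul]
  exact Finset.sum_eq_card_nsmul fun σ hσ => by rw [hkernel, mul_one, hg σ hσ]

end ShuffleSum

section Concatenation

variable {L₁ L₂ I : Type*} [Fintype L₁] [Fintype L₂] {π₁ : L₁ → I} {π₂ : L₂ → I}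

theorem sumCongr_one_mem_colorPerms {τ : Equiv.Perm L₁} (hτ : τ ∈ colorPerms π₁) :
    Equiv.Perm.sumCongr τ (1 : Equiv.Perm L₂) ∈ colorPerms (Sum.elim π₁ π₂) := by
  rw [mem_colorPerms] at hτ ⊢
  rintro (p | p)
  exacts [hτ p, rfl]

theorem shuffleKernel_sumElim_lt (e : I → I → ℤ) {w : L₁ → ℕ} {M : ℕ} (hw : ∀ p, w p < M)
    (y : L₁ ⊕ L₂ → ℚ) :
    shuffleKernel e (Sum.elim π₁ π₂) (Sum.elim w fun _ => M) y =
      shuffleKernel e π₁ w (y ∘ Sum.inl) *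
        shuffleKernel e (Sum.elim π₁ π₂) (Sum.elim (fun _ => 0) fun _ => 1) y := by
  simp only [shuffleKernel, Fintype.prod_prod_type, Fintype.prod_sum_type, Sum.elim_inl,
    Sum.elim_inr, hw, (hw _).not_gt, Finset.prod_mul_distrib, Function.comp_apply, lt_irrefl,
    not_lt_zero, zero_lt_one, if_true, if_false, Finset.prod_const_one, mul_one, one_mul]
  rfl

/-- Substituting one symmetrization into the first factor of another only repeats terms, since the
permutations of the first factor are absorbed by those of all labels. -/
theorem mul_shuffleSum_sumElim (e : I → I → ℤ) {w : L₁ → ℕ} {M : ℕ} (hw : ∀ p, w p < M)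
    {f₁ g₁ : MvPolynomial L₁ ℚ} (f₂ : MvPolynomial L₂ ℚ) {N : ℚ}
    (hf₁ : ∀ y, Function.Injective y → N * eval y f₁ = shuffleSum e π₁ w g₁ y)
    {y : L₁ ⊕ L₂ → ℚ} (hy : Function.Injective y) :
    N * shuffleSum e (Sum.elim π₁ π₂) (Sum.elim (fun _ => 0) fun _ => 1)
        (rename Sum.inl f₁ * rename Sum.inr f₂) y =
      (colorPerms π₁).card * shuffleSum e (Sum.elim π₁ π₂) (Sum.elim w fun _ => M)
        (rename Sum.inl g₁ * rename Sum.inr f₂) y := by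
  set summand : (L₁ ⊕ L₂ → ℚ) → ℚ := fun z => eval z (rename Sum.inl g₁ * rename Sum.inr f₂) *
    shuffleKernel e (Sum.elim π₁ π₂) (Sum.elim w fun _ => M) z with hsummand
  have hexpand (z : L₁ ⊕ L₂ → ℚ) (hz : Function.Injective z) :
      N * (eval z (rename Sum.inl f₁ * rename Sum.inr f₂) *
        shuffleKernel e (Sum.elim π₁ π₂) (Sum.elim (fun _ => 0) fun _ => 1) z) =
      ∑ τ ∈ colorPerms π₁, summand (z ∘ Equiv.Perm.sumCongr τ 1) := by
    rw [map_mul, eval_rename, eval_rename, mul_assoc, ← mul_assoc N,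
      hf₁ _ (hz.comp Sum.inl_injective), shuffleSum, Finset.sum_mul]
    refine Finset.sum_congr rfl fun τ hτ => ?_
    have hlevel : (Sum.elim (fun _ => 0) fun _ => 1 : L₁ ⊕ L₂ → ℕ) ∘ Equiv.Perm.sumCongr τ 1 =
        Sum.elim (fun _ => 0) fun _ => 1 := by
      funext p
      rcases p with p | p <;> rfl
    have hinl : (z ∘ Equiv.Perm.sumCongr τ 1) ∘ Sum.inl = (z ∘ Sum.inl) ∘ τ := rfl
    have hinr : (z ∘ Equiv.Perm.sumCongr τ 1) ∘ Sum.inr = z ∘ Sum.inr := rfl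
    rw [hsummand]
    dsimp only
    rw [map_mul, eval_rename, eval_rename, shuffleKernel_sumElim_lt e hw, hinl, hinr,
      shuffleKernel_comp_perm_of_level_eq z (sumCongr_one_mem_colorPerms hτ) hlevel]
    ring
  rw [shuffleSum, Finset.mul_sum]
  refine (Finset.sum_congr rfl fun (σ : Equiv.Perm (L₁ ⊕ L₂)) _ =>
    hexpand (y ∘ σ) (hy.comp σ.injective)).trans ?_
  refine (sum_colorPerms_sum_mul_right _ _ (fun τ hτ => sumCongr_one_mem_colorPerms hτ)
    fun _ σ => summand (y ∘ σ)).trans ?_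
  simp only [Finset.sum_const, nsmul_eq_mul, ← Finset.mul_sum]
  rfl

end Concatenation

section BlockLabel

variable {r : ℕ}

/-- The labels of the variables of a product of `r` factors, the `u`-th of which has dimension
vector `γ u`. -/
abbrev BlockLabel (γ : Fin r → Fin n → ℕ) : Type := Σ u, Label (γ u)

/-- The vertex of a variable of one of `r` factors. -/
def blockColor (γ : Fin r → Fin n → ℕ) (q : BlockLabel γ) : Fin n := q.2.1

/-- The position of the factor to which a variable belongs. -/
def blockLevel (γ : Fin r → Fin n → ℕ) (q : BlockLabel γ) : ℕ := q.1

theorem eval_toLabels_comp_of_block_eq (γ : Fin r → Fin n → ℕ) (u : Fin r) {f : PolyQ n}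
    (hf : f ∈ Hspace (γ u)) {σ : Equiv.Perm (BlockLabel γ)} (hσ : σ ∈ colorPerms (blockColor γ))
    (hblock : ∀ p, (σ p).1 = p.1) (z : BlockLabel γ → ℚ) :
    eval ((z ∘ σ) ∘ Sigma.mk u) (toLabels (γ u) f) =
      eval (z ∘ Sigma.mk u) (toLabels (γ u) f) := by
  have hinj : Function.Injective fun p : Label (γ u) => σ ⟨u, p⟩ := fun p q h =>
    sigma_mk_injective (β := fun u => Label (γ u)) (σ.injective h)
  have hrange (p : Label (γ u)) : ∃ q, (⟨u, q⟩ : BlockLabel γ) = σ ⟨u, p⟩ := by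
    have hfst := hblock ⟨u, p⟩
    generalize σ ⟨u, p⟩ = q at hfst
    obtain ⟨v, q⟩ := q
    obtain rfl : v = u := hfst
    exact ⟨q, rfl⟩
  exact eval_toLabels_eq_of_range_subset hf (π := blockColor γ) (a := fun p => σ ⟨u, p⟩)
    (b := fun p => ⟨u, p⟩) hinj (fun p => mem_colorPerms.1 hσ _) (fun _ => rfl) hrange z

/-- The labels of `r + 1` factors, with those of the last factor split off. -/
noncomputable def blockLabelSuccEquiv (γ : Fin (r + 1) → Fin n → ℕ) :
    BlockLabel (fun u => γ u.castSucc) ⊕ Label (γ (Fin.last r)) ≃ BlockLabel γ :=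
  Equiv.ofBijective
    (Sum.elim (fun q => ⟨q.1.castSucc, q.2⟩) fun p => ⟨Fin.last r, p⟩) <| by
    refine ⟨Function.Injective.sumElim ?_ ?_ fun q p h => ?_, ?_⟩
    · rintro ⟨u, p⟩ ⟨v, q⟩ h
      obtain rfl : u = v := Fin.castSucc_injective r (congrArg Sigma.fst h)
      exact congrArg (Sigma.mk u) (sigma_mk_injective (β := fun u => Label (γ u)) h)
    · exact fun p q h => sigma_mk_injective (β := fun u => Label (γ u)) h
    · exact Fin.castSucc_ne_last _ (congrArg Sigma.fst h)
    · rintro ⟨u, p⟩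
      induction u using Fin.lastCases with
      | last => exact ⟨Sum.inr p, rfl⟩
      | cast u => exact ⟨Sum.inl ⟨u, p⟩, rfl⟩

theorem blockColor_comp_blockLabelSuccEquiv (γ : Fin (r + 1) → Fin n → ℕ) :
    blockColor γ ∘ blockLabelSuccEquiv γ =
      Sum.elim (blockColor fun u => γ u.castSucc) Sigma.fst := by
  funext p
  rcases p with p | p <;> rfl

theorem blockLevel_comp_blockLabelSuccEquiv (γ : Fin (r + 1) → Fin n → ℕ) :
    blockLevel γ ∘ blockLabelSuccEquiv γ =
      Sum.elim (blockLevel fun u => γ u.castSucc) fun _ => r := by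
  funext p
  rcases p with p | p <;> rfl

/-- The product of the polynomials `f u`, each in its own set of variables. -/
noncomputable def externalProduct (γ : Fin r → Fin n → ℕ) (f : Fin r → PolyQ n) :
    MvPolynomial (BlockLabel γ) ℚ :=
  ∏ u, rename (Sigma.mk u) (toLabels (γ u) (f u))

theorem externalProduct_succ (γ : Fin (r + 1) → Fin n → ℕ) (f : Fin (r + 1) → PolyQ n) :
    externalProduct γ f = rename (blockLabelSuccEquiv γ)
      (rename Sum.inl (externalProduct (fun u => γ u.castSucc) fun u => f u.castSucc) *
        rename Sum.inr (toLabels (γ (Fin.last r)) (f (Fin.last r)))) := by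
  simp only [externalProduct, Fin.prod_univ_castSucc, map_mul, map_prod, rename_rename]
  rfl

end BlockLabel

section CohaProd

variable {r : ℕ} {Q : FinQuiver n}

theorem cohaProd_concat (Q : FinQuiver n) {l : List ((Fin n → ℕ) × PolyQ n)} (hl : l ≠ [])
    (x : (Fin n → ℕ) × PolyQ n) :
    cohaProd Q (l.concat x) = ((cohaProd Q l).1 + x.1,
      cohaMul Q (cohaProd Q l).1 x.1 (cohaProd Q l).2 x.2) := by
  obtain ⟨a, t, rfl⟩ := List.exists_cons_of_ne_nil hl
  rw [List.concat_eq_append, List.cons_append]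
  simp only [cohaProd, List.foldl_append, List.foldl_cons, List.foldl_nil]

theorem one_mem_Hspace (γ : Fin n → ℕ) : (1 : PolyQ n) ∈ Hspace γ :=
  ⟨fun p hp => by simp at hp, fun _ _ _ => map_one _⟩

/-- Along the identification `T` of the variables of `ℋ_total` with those of the factors, the
iterated CoHA product in the dimension vectors `γ u` is `N⁻¹` times a shuffle sum. -/
structure ComputesCohaProd (Q : FinQuiver n) (γ : Fin r → Fin n → ℕ) {total : Fin n → ℕ}
    (T : Label total ≃ BlockLabel γ) (N : ℚ) : Prop where
  color : ∀ p, blockColor γ (T p) = p.1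
  ne_zero : N ≠ 0
  cohaProd_fst : ∀ f : Fin r → PolyQ n, (cohaProd Q (List.ofFn fun u => (γ u, f u))).1 = total
  mem_Hspace : ∀ {f : Fin r → PolyQ n}, (∀ u, f u ∈ Hspace (γ u)) → cohaProdFin Q γ f ∈ Hspace total
  mul_eval : ∀ {f : Fin r → PolyQ n}, (∀ u, f u ∈ Hspace (γ u)) → ∀ {y : BlockLabel γ → ℚ},
    Function.Injective y → N * eval (y ∘ T) (toLabels total (cohaProdFin Q γ f)) =
      shuffleSum (quiverExponent Q) (blockColor γ) (blockLevel γ) (externalProduct γ f) y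

instance isEmpty_label_zero : IsEmpty (Label fun _ : Fin n => 0) := ⟨fun p => p.2.elim0⟩

theorem computesCohaProd_zero (Q : FinQuiver n) (γ : Fin 0 → Fin n → ℕ) :
    ComputesCohaProd Q γ (Equiv.equivOfIsEmpty (Label fun _ => 0) _)
      (colorPerms (blockColor γ)).card where
  color := isEmptyElim
  ne_zero := card_colorPerms_ne_zero _
  cohaProd_fst _ := by simp [cohaProd]
  mem_Hspace _ := by simpa [cohaProdFin, cohaProd] using one_mem_Hspace _
  mul_eval _ _ _ := by
    rw [shuffleSum_of_level_eq isEmptyElim] <;> simp [externalProduct, cohaProdFin, cohaProd]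

theorem computesCohaProd_one (Q : FinQuiver n) (γ : Fin 1 → Fin n → ℕ) :
    ComputesCohaProd Q γ (Equiv.uniqueSigma fun u => Label (γ u)).symm
      (colorPerms (blockColor γ)).card where
  color _ := rfl
  ne_zero := card_colorPerms_ne_zero _
  cohaProd_fst _ := by simp [cohaProd]
  mem_Hspace hf := by simpa [cohaProdFin, cohaProd] using hf 0
  mul_eval {f} hf {y} _ := by
    have hprod : cohaProdFin Q γ f = f 0 := by simp [cohaProdFin, cohaProd]
    have hexternal (z : BlockLabel γ → ℚ) :
        eval z (externalProduct γ f) = eval (z ∘ Sigma.mk 0) (toLabels (γ 0) (f 0)) := by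
      rw [externalProduct, Fin.prod_univ_one, eval_rename]
    rw [shuffleSum_of_level_eq fun p q => by rw [blockLevel, blockLevel, Subsingleton.elim p.1 q.1]]
    · rw [hprod, hexternal]
      rfl
    · intro σ hσ
      rw [hexternal, hexternal]
      exact eval_toLabels_comp_of_block_eq γ 0 (hf 0) hσ (fun _ => Subsingleton.elim _ _) y

theorem cohaProd_ofFn_succ (Q : FinQuiver n) {γ : Fin (r + 2) → Fin n → ℕ} {total : Fin n → ℕ}
    {f : Fin (r + 2) → PolyQ n}
    (htotal : (cohaProd Q (List.ofFn fun u : Fin (r + 1) => (γ u.castSucc, f u.castSucc))).1 =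
      total) :
    cohaProd Q (List.ofFn fun u => (γ u, f u)) = (total + γ (Fin.last _),
      cohaMul Q total (γ (Fin.last _))
        (cohaProdFin Q (fun u => γ u.castSucc) fun u => f u.castSucc) (f (Fin.last _))) := by
  rw [List.ofFn_succ', cohaProd_concat Q (by rw [List.ofFn_succ]; exact List.cons_ne_nil _ _),
    htotal]
  rfl

/-- The identification of the variables of a product with those of its factors, extended by one
further factor. -/
noncomputable def snocEquiv (γ : Fin (r + 1) → Fin n → ℕ) {total : Fin n → ℕ}
    (T : Label total ≃ BlockLabel fun u => γ u.castSucc) :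
    Label (total + γ (Fin.last r)) ≃ BlockLabel γ :=
  (labelAddEquiv total (γ (Fin.last r))).trans
    ((Equiv.sumCongr T (Equiv.refl _)).trans (blockLabelSuccEquiv γ))

theorem sumElim_blockColor_comp_sumCongr {γ : Fin r → Fin n → ℕ} {total γ' : Fin n → ℕ}
    {T : Label total ≃ BlockLabel γ} (hT : ∀ p, blockColor γ (T p) = p.1) :
    Sum.elim (blockColor γ) Sigma.fst ∘ Equiv.sumCongr T (Equiv.refl (Label γ')) =
      pairColor total γ' := by
  funext p
  rcases p with p | p
  exacts [hT p, rfl]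

theorem blockColor_snocEquiv {γ : Fin (r + 1) → Fin n → ℕ} {total : Fin n → ℕ}
    {T : Label total ≃ BlockLabel fun u => γ u.castSucc}
    (hT : ∀ p, blockColor _ (T p) = p.1) (p : Label (total + γ (Fin.last r))) :
    blockColor γ (snocEquiv γ T p) = p.1 := by
  rw [← pairColor_labelAddEquiv p, ← sumElim_blockColor_comp_sumCongr hT,
    ← blockColor_comp_blockLabelSuccEquiv]
  rfl

theorem mul_eval_cohaMul_snoc {γ : Fin (r + 1) → Fin n → ℕ} {total : Fin n → ℕ}
    {T : Label total ≃ BlockLabel fun u => γ u.castSucc} (hT : ∀ p, blockColor _ (T p) = p.1)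
    {f₁ f₂ : PolyQ n} (h₁ : f₁ ∈ Hspace total) (h₂ : f₂ ∈ Hspace (γ (Fin.last r)))
    {N : ℚ} {g : MvPolynomial (BlockLabel fun u => γ u.castSucc) ℚ}
    (hg : ∀ y, Function.Injective y → N * eval (y ∘ T) (toLabels total f₁) =
      shuffleSum (quiverExponent Q) (blockColor _) (blockLevel _) g y)
    {y : BlockLabel γ → ℚ} (hy : Function.Injective y) :
    N * ((levelPerms total (γ (Fin.last r))).card *
        eval (y ∘ snocEquiv γ T) (toLabels _ (cohaMul Q total (γ (Fin.last r)) f₁ f₂))) =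
      (colorPerms (blockColor fun u => γ u.castSucc)).card *
        shuffleSum (quiverExponent Q) (blockColor γ) (blockLevel γ)
          (rename (blockLabelSuccEquiv γ)
            (rename Sum.inl g * rename Sum.inr (toLabels (γ (Fin.last r)) f₂))) y := by
  set e : PairLabel total (γ (Fin.last r)) ≃ _ := Equiv.sumCongr T (Equiv.refl _) with he
  have hy' := hy.comp (blockLabelSuccEquiv γ).injective
  have hlevel : Sum.elim (fun _ => 0) (fun _ => 1) ∘ e = pairLevel total (γ (Fin.last r)) := by
    funext p
    rcases p with p | p <;> rfl
  have hrename : rename e (rename Sum.inl (toLabels total f₁) *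
      rename Sum.inr (toLabels (γ (Fin.last r)) f₂)) =
      rename Sum.inl (rename T (toLabels total f₁)) *
        rename Sum.inr (toLabels (γ (Fin.last r)) f₂) := by
    simp only [map_mul, rename_rename]
    rfl
  have hlt (p) : blockLevel (fun u => γ u.castSucc) p < r := p.1.2
  have hpair := card_levelPerms_mul_eval_cohaMul Q h₁ h₂ (hy'.comp e.injective)
  rw [← sumElim_blockColor_comp_sumCongr hT, ← hlevel, ← he, shuffleSum_comp_equiv,
    hrename] at hpair
  rw [← shuffleSum_comp_equiv, blockColor_comp_blockLabelSuccEquiv,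
    blockLevel_comp_blockLabelSuccEquiv,
    ← mul_shuffleSum_sumElim _ hlt _ (fun z hz => by rw [eval_rename, hg z hz]) hy', ← hpair]
  rfl

theorem ComputesCohaProd.snoc {γ : Fin (r + 2) → Fin n → ℕ} {total : Fin n → ℕ}
    {T : Label total ≃ BlockLabel fun u => γ u.castSucc} {N : ℚ}
    (h : ComputesCohaProd Q (fun u => γ u.castSucc) T N) :
    ComputesCohaProd Q γ (snocEquiv γ T)
      (((colorPerms (blockColor fun u => γ u.castSucc)).card : ℚ)⁻¹ *
        (N * (levelPerms total (γ (Fin.last _))).card)) := by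
  have hcoha (f : Fin (r + 2) → PolyQ n) :=
    cohaProd_ofFn_succ Q (h.cohaProd_fst fun u => f u.castSucc)
  refine ⟨blockColor_snocEquiv h.color, mul_ne_zero (inv_ne_zero (card_colorPerms_ne_zero _))
    (mul_ne_zero h.ne_zero (card_levelPerms_ne_zero _ _)), fun f => by rw [hcoha f],
    fun {f} hf => ?_, fun {f} hf {y} hy => ?_⟩
  · rw [cohaProdFin, hcoha f]
    exact cohaMul_mem_Hspace Q (h.mem_Hspace fun u => hf _) (hf _)
  · rw [mul_assoc, mul_assoc, inv_mul_eq_iff_eq_mul₀ (card_colorPerms_ne_zero _),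
      externalProduct_succ, cohaProdFin, hcoha f]
    exact mul_eval_cohaMul_snoc h.color (h.mem_Hspace fun u => hf _) (hf _)
      (fun z hz => h.mul_eval (fun u => hf _) hz) hy

theorem exists_computesCohaProd (Q : FinQuiver n) : ∀ {r : ℕ} (γ : Fin r → Fin n → ℕ),
    ∃ (total : Fin n → ℕ) (T : Label total ≃ BlockLabel γ) (N : ℚ), ComputesCohaProd Q γ T N
  | 0, γ => ⟨_, _, _, computesCohaProd_zero Q γ⟩
  | 1, γ => ⟨_, _, _, computesCohaProd_one Q γ⟩
  | r + 2, γ =>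
    let ⟨_, _, _, h⟩ := exists_computesCohaProd Q fun u : Fin (r + 1) => γ u.castSucc
    ⟨_, _, _, h.snoc⟩

end CohaProd

/-! ### Graded spaces of polynomials -/

section IsGraded

variable {K σ : Type*} [Field K] {B : Submodule K (MvPolynomial σ K)}

/-- A space of polynomials that contains the homogeneous components of its elements. -/
def IsGraded (B : Submodule K (MvPolynomial σ K)) : Prop :=
  ∀ f ∈ B, ∀ s, homogeneousComponent s f ∈ B

section HomogeneousFamily

variable {C : Type*} {E : C → MvPolynomial σ K} {deg : C → ℕ}

theorem homogeneousComponent_mem_span_of_mem_span (hE : ∀ c, (E c).IsHomogeneous (deg c))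
    {g : MvPolynomial σ K} (hg : g ∈ Submodule.span K (Set.range E)) (k : ℕ) :
    homogeneousComponent k g ∈
      Submodule.span K (Set.range fun c : {c // deg c = k} => E c) := by
  suffices h : Submodule.span K (Set.range E) ≤ (Submodule.span K
      (Set.range fun c : {c // deg c = k} => E c)).comap (homogeneousComponent k) from h hg
  rw [Submodule.span_le, Set.range_subset_iff]
  intro c
  rw [SetLike.mem_coe, Submodule.mem_comap, homogeneousComponent_of_mem (hE c)]
  split_ifs with hk
  · exact Submodule.subset_span ⟨⟨c, hk.symm⟩, rfl⟩
  · exact zero_mem _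

theorem isGraded_span (hE : ∀ c, (E c).IsHomogeneous (deg c)) :
    IsGraded (Submodule.span K (Set.range E)) := fun _ hg k =>
  Submodule.span_mono (Set.range_comp_subset_range Subtype.val E)
    (homogeneousComponent_mem_span_of_mem_span hE hg k)

theorem span_inf_homogeneousSubmodule (hE : ∀ c, (E c).IsHomogeneous (deg c)) (k : ℕ) :
    Submodule.span K (Set.range E) ⊓ homogeneousSubmodule σ K k =
      Submodule.span K (Set.range fun c : {c // deg c = k} => E c) := by
  refine le_antisymm ?_ (le_inf ?_ ?_)
  · rintro g ⟨hg, hgk⟩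
    simpa only [homogeneousComponent_of_mem hgk, if_true] using
      homogeneousComponent_mem_span_of_mem_span hE hg k
  · exact Submodule.span_mono (Set.range_comp_subset_range Subtype.val E)
  · rw [Submodule.span_le, Set.range_subset_iff]
    rintro ⟨c, rfl⟩
    exact hE c

theorem finrank_span_inf_homogeneousSubmodule (hind : LinearIndependent K E)
    (hE : ∀ c, (E c).IsHomogeneous (deg c)) (k : ℕ) :
    Module.finrank K ↥(Submodule.span K (Set.range E) ⊓ homogeneousSubmodule σ K k) =
      Nat.card {c // deg c = k} := by
  rw [span_inf_homogeneousSubmodule hE]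
  exact Module.finrank_eq_nat_card_basis
    (Module.Basis.span (hind.comp _ Subtype.val_injective))

end HomogeneousFamily

variable [Finite σ]

instance finiteDimensional_inf_homogeneousSubmodule (B : Submodule K (MvPolynomial σ K)) (s : ℕ) :
    FiniteDimensional K ↥(B ⊓ homogeneousSubmodule σ K s) :=
  have : FiniteDimensional K ↥(homogeneousSubmodule σ K s) :=
    Module.Finite.iff_fg.2 (homogeneousSubmodule_fg σ K s)
  Submodule.finiteDimensional_inf_right _ _

/-- The concatenation of bases of the homogeneous parts of `B`; the degree of its members is the
first component of their index. -/
noncomputable def homogeneousFamily (B : Submodule K (MvPolynomial σ K))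
    (c : Σ s, Fin (Module.finrank K ↥(B ⊓ homogeneousSubmodule σ K s))) : MvPolynomial σ K :=
  (Module.finBasis K ↥(B ⊓ homogeneousSubmodule σ K c.1) c.2 : MvPolynomial σ K)

theorem isHomogeneous_homogeneousFamily (B : Submodule K (MvPolynomial σ K)) (c) :
    (homogeneousFamily B c).IsHomogeneous c.1 :=
  (Module.finBasis K ↥(B ⊓ homogeneousSubmodule σ K c.1) c.2).2.2

theorem span_homogeneousFamily_degree (B : Submodule K (MvPolynomial σ K)) (s : ℕ) :
    Submodule.span K (Set.range fun i => homogeneousFamily B ⟨s, i⟩) =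
      B ⊓ homogeneousSubmodule σ K s := by
  have hspan := congrArg (Submodule.map (B ⊓ homogeneousSubmodule σ K s).subtype)
    (Module.finBasis K ↥(B ⊓ homogeneousSubmodule σ K s)).span_eq
  rwa [Submodule.map_span, ← Set.range_comp, Submodule.map_subtype_top] at hspan

theorem span_homogeneousFamily (hB : IsGraded B) :
    Submodule.span K (Set.range (homogeneousFamily B)) = B := by
  refine le_antisymm (Submodule.span_le.2 (Set.range_subset_iff.2 fun c =>
    (Module.finBasis K ↥(B ⊓ homogeneousSubmodule σ K c.1) c.2).2.1)) fun f hf => ?_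
  rw [← sum_homogeneousComponent f]
  refine Submodule.sum_mem _ fun s _ => ?_
  have hs : homogeneousComponent s f ∈ B ⊓ homogeneousSubmodule σ K s :=
    ⟨hB f hf s, homogeneousComponent_mem s f⟩
  rw [← span_homogeneousFamily_degree] at hs
  exact Submodule.span_mono (Set.range_comp_subset_range (Sigma.mk s) (homogeneousFamily B)) hs

theorem linearIndependent_homogeneousFamily (B : Submodule K (MvPolynomial σ K)) :
    LinearIndependent K (homogeneousFamily B) := by
  have hdegree (s : ℕ) : LinearIndependent K fun i => homogeneousFamily B ⟨s, i⟩ :=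
    (Module.finBasis K ↥(B ⊓ homogeneousSubmodule σ K s)).linearIndependent.map'
      (Submodule.subtype _) (Submodule.ker_subtype _)
  let := gradedAlgebra (σ := σ) (R := K)
  have hindep : iSupIndep fun s =>
      Submodule.span K (Set.range fun i => homogeneousFamily B ⟨s, i⟩) :=
    (DirectSum.Decomposition.isInternal (homogeneousSubmodule σ K)).submodule_iSupIndep.mono
      fun s => (span_homogeneousFamily_degree B s).trans_le inf_le_right
  exact linearIndependent_iUnion_finite (f := fun s i => homogeneousFamily B ⟨s, i⟩) hdegree
    fun s t _ hst => hindep.disjoint_biSup hst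

end IsGraded

section ExternalTensor

variable {K ι : Type*} [Field K] [Fintype ι] {σ : ι → Type*}

theorem split_sum_mapDomain_mk (d : ∀ u, σ u →₀ ℕ) (v : ι) :
    Finsupp.split (∑ u, Finsupp.mapDomain (Sigma.mk u) (d u)) v = d v := by
  ext x
  rw [Finsupp.split_apply, Finsupp.finsetSum_apply,
    Finset.sum_eq_single_of_mem v (Finset.mem_univ v) fun u _ huv =>
      Finsupp.mapDomain_of_notMem_range _ _ fun ⟨_, hy⟩ => huv (congrArg Sigma.fst hy)]
  exact Finsupp.mapDomain_apply sigma_mk_injective _ _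

theorem exists_linearMap_prod_rename_eq (l : ∀ u, MvPolynomial (σ u) K →ₗ[K] K) :
    ∃ Λ : MvPolynomial (Σ u, σ u) K →ₗ[K] K, ∀ h : ∀ u, MvPolynomial (σ u) K,
      Λ (∏ u, rename (Sigma.mk u) (h u)) = ∏ u, l u (h u) := by
  let Λ : MvPolynomial (Σ u, σ u) K →ₗ[K] K := (basisMonomials (Σ u, σ u) K).constr K
    fun d => ∏ u, l u (monomial (Finsupp.split d u) 1)
  have hmultilinear : Λ.compMultilinearMap ((MultilinearMap.mkPiAlgebra K ι _).compLinearMap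
      fun u => (rename (R := K) (Sigma.mk (β := σ) u)).toLinearMap) =
      (MultilinearMap.mkPiAlgebra K ι K).compLinearMap l := by
    refine Module.Basis.ext_multilinear (fun u => basisMonomials (σ u) K) fun d => ?_
    simp only [LinearMap.compMultilinearMap_apply, MultilinearMap.compLinearMap_apply,
      MultilinearMap.mkPiAlgebra_apply, coe_basisMonomials, AlgHom.toLinearMap_apply,
      rename_monomial, ← monomial_sum_one]
    refine ((basisMonomials (Σ u, σ u) K).constr_basis K _ _).trans ?_
    simp only [split_sum_mapDomain_mk]
  exact ⟨Λ, fun h => congrArg (fun f => f h) hmultilinear⟩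

theorem exists_dual_eq_ite {V κ : Type*} [AddCommGroup V] [Module K V] {e : κ → V}
    (he : LinearIndependent K e) (c : κ) :
    ∃ l : V →ₗ[K] K, ∀ c', l (e c') = if c' = c then 1 else 0 := by
  obtain ⟨l, hl⟩ := (Finsupp.lapply c ∘ₗ he.repr).exists_extend
  refine ⟨l, fun c' => ?_⟩
  have happly := LinearMap.congr_fun hl ⟨e c', Submodule.subset_span ⟨c', rfl⟩⟩
  rw [LinearMap.comp_apply, LinearMap.comp_apply, he.repr_eq_single c' _ rfl] at happly
  exact happly.trans Finsupp.single_apply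

theorem linearIndependent_prod_rename {κ : ι → Type*} {e : ∀ u, κ u → MvPolynomial (σ u) K}
    (he : ∀ u, LinearIndependent K (e u)) :
    LinearIndependent K fun c : ∀ u, κ u => ∏ u, rename (Sigma.mk u) (e u (c u)) := by
  choose l hl using fun u => exists_dual_eq_ite (he u)
  choose Λ hΛ using fun c : ∀ u, κ u => exists_linearMap_prod_rename_eq fun u => l u (c u)
  refine LinearIndependent.of_pairwise_dual_eq_zero_one _ Λ (fun c c' hcc' => ?_) fun c => ?_
  · obtain ⟨u, hu⟩ := Function.ne_iff.1 hcc'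
    rw [hΛ]
    exact Finset.prod_eq_zero (Finset.mem_univ u) (by rw [hl, if_neg hu.symm])
  · rw [hΛ]
    exact Finset.prod_eq_one fun u _ => by rw [hl, if_pos rfl]

/-- The tensor product of spaces of polynomials, realized as the span of the products of
polynomials in disjoint sets of variables. -/
noncomputable def externalTensor (B : ∀ u, Submodule K (MvPolynomial (σ u) K)) :
    Submodule K (MvPolynomial (Σ u, σ u) K) :=
  ∏ u, (B u).map (rename (Sigma.mk u)).toLinearMap

theorem externalTensor_span (S : ∀ u, Set (MvPolynomial (σ u) K)) :
    externalTensor (fun u => Submodule.span K (S u)) =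
      Submodule.span K {g | ∃ h : ∀ u, MvPolynomial (σ u) K, (∀ u, h u ∈ S u) ∧
        ∏ u, rename (Sigma.mk u) (h u) = g} := by
  simp only [externalTensor, Submodule.map_span, Submodule.prod_span]
  congr 1
  ext g
  simp only [Set.mem_fintype_prod, Set.mem_image, AlgHom.toLinearMap_apply, Set.mem_ofPred_eq]
  constructor
  · rintro ⟨g, hg, rfl⟩
    choose h hh using @hg
    exact ⟨fun u => h u, fun u => (hh u).1, Finset.prod_congr rfl fun u _ => (hh u).2⟩
  · rintro ⟨h, hh, rfl⟩
    exact ⟨_, fun {u} => ⟨h u, hh u, rfl⟩, rfl⟩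

theorem externalTensor_eq_span (B : ∀ u, Submodule K (MvPolynomial (σ u) K)) :
    externalTensor B = Submodule.span K {g | ∃ h : ∀ u, MvPolynomial (σ u) K,
      (∀ u, h u ∈ B u) ∧ ∏ u, rename (Sigma.mk u) (h u) = g} := by
  simpa only [Submodule.span_eq, SetLike.mem_coe] using
    externalTensor_span fun u => (B u : Set (MvPolynomial (σ u) K))

variable [∀ u, Finite (σ u)] {B : ∀ u, Submodule K (MvPolynomial (σ u) K)}

theorem externalTensor_eq_span_homogeneousFamily (hB : ∀ u, IsGraded (B u)) :
    externalTensor B = Submodule.span K (Set.range fun c : (u : ι) → _ =>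
      ∏ u, rename (Sigma.mk u) (homogeneousFamily (B u) (c u))) := by
  conv_lhs => rw [← funext fun u => span_homogeneousFamily (hB u), externalTensor_span]
  congr 1
  ext g
  constructor
  · rintro ⟨h, hh, rfl⟩
    choose c hc using hh
    exact ⟨c, by simp only [hc]⟩
  · rintro ⟨c, rfl⟩
    exact ⟨_, fun u => ⟨c u, rfl⟩, rfl⟩

theorem isHomogeneous_prod_homogeneousFamily (B : ∀ u, Submodule K (MvPolynomial (σ u) K))
    (c : ∀ u, Σ s, Fin (Module.finrank K ↥(B u ⊓ homogeneousSubmodule (σ u) K s))) :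
    (∏ u, rename (Sigma.mk (β := σ) u) (homogeneousFamily (B u) (c u))).IsHomogeneous
      (∑ u, (c u).1) :=
  IsHomogeneous.prod _ _ _ fun _ _ =>
    (isHomogeneous_homogeneousFamily _ _).rename_isHomogeneous

theorem isGraded_externalTensor (hB : ∀ u, IsGraded (B u)) : IsGraded (externalTensor B) := by
  rw [externalTensor_eq_span_homogeneousFamily hB]
  exact isGraded_span (isHomogeneous_prod_homogeneousFamily B)

theorem card_sigma_fin_sum_eq {r : ℕ} (d : Fin r → ℕ → ℕ) (k : ℕ) :
    Nat.card {c : ∀ u : Fin r, Σ s : ℕ, Fin (d u s) // ∑ u, (c u).1 = k} =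
      ∑ t ∈ Finset.Nat.antidiagonalTuple r k, ∏ u, d u (t u) := by
  let splitDegrees : {c : ∀ u : Fin r, Σ s : ℕ, Fin (d u s) // ∑ u, (c u).1 = k} ≃
      Σ t : {t // t ∈ Finset.Nat.antidiagonalTuple r k}, ∀ u, Fin (d u (t.1 u)) :=
    { toFun c := ⟨⟨fun u => (c.1 u).1, Finset.Nat.mem_antidiagonalTuple.2 c.2⟩,
        fun u => (c.1 u).2⟩
      invFun t := ⟨fun u => ⟨t.1.1 u, t.2 u⟩, Finset.Nat.mem_antidiagonalTuple.1 t.1.2⟩ }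
  rw [Nat.card_congr splitDegrees, Nat.card_eq_fintype_card, Fintype.card_sigma]
  simp only [Fintype.card_pi, Fintype.card_fin]
  exact Finset.sum_coe_sort (Finset.Nat.antidiagonalTuple r k) fun t => ∏ u, d u (t u)

theorem finrank_externalTensor_inf_homogeneousSubmodule {r : ℕ} {σ : Fin r → Type*}
    [∀ u, Finite (σ u)] {B : ∀ u, Submodule K (MvPolynomial (σ u) K)}
    (hB : ∀ u, IsGraded (B u)) (k : ℕ) :
    Module.finrank K ↥(externalTensor B ⊓ homogeneousSubmodule (Σ u, σ u) K k) =
      ∑ t ∈ Finset.Nat.antidiagonalTuple r k,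
        ∏ u, Module.finrank K ↥(B u ⊓ homogeneousSubmodule (σ u) K (t u)) := by
  rw [← card_sigma_fin_sum_eq fun u s =>
    Module.finrank K ↥(B u ⊓ homogeneousSubmodule (σ u) K s),
    externalTensor_eq_span_homogeneousFamily hB]
  exact finrank_span_inf_homogeneousSubmodule
    (linearIndependent_prod_rename fun u => linearIndependent_homogeneousFamily (B u))
    (isHomogeneous_prod_homogeneousFamily B) k

end ExternalTensor

/-! ### The degree of the product -/

section Homogeneous

theorem eval_mul_of_isHomogeneous {σ R : Type*} [CommRing R] {g : MvPolynomial σ R} {k : ℕ}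
    (hg : g.IsHomogeneous k) (y : σ → R) (l : R) :
    eval (fun p => y p * l) g = l ^ k * eval y g := by
  rw [eval_eq, eval_eq, Finset.mul_sum]
  refine Finset.sum_congr rfl fun d hd => ?_
  have hdegree : d.degree = k := not_imp_comm.1 hg.coeff_eq_zero (mem_support_iff.1 hd)
  rw [← hdegree, Finsupp.degree_apply, ← Finset.prod_pow_eq_pow_sum, mul_left_comm,
    ← Finset.prod_mul_distrib]
  simp only [mul_pow, mul_comm]

theorem coeff_restrictLine_zero {L : Type*} (y : L → ℚ) (f : MvPolynomial L ℚ) (i : ℕ) :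
    (restrictLine (fun _ => 0) y f).coeff i = eval y (homogeneousComponent i f) := by
  have hexpand : restrictLine (fun _ => 0) y f = ∑ s ∈ Finset.range (f.totalDegree + 1),
      Polynomial.monomial s (eval y (homogeneousComponent s f)) := by
    refine Polynomial.funext fun l => ?_
    conv_lhs => rw [eval_restrictLine, ← sum_homogeneousComponent f, map_sum]
    simp only [zero_add, Polynomial.eval_finsetSum, Polynomial.eval_monomial,
      eval_mul_of_isHomogeneous (homogeneousComponent_isHomogeneous _ f), mul_comm (eval y _)]
  rw [hexpand, Polynomial.finsetSum_coeff]
  simp only [Polynomial.coeff_monomial, Finset.sum_ite_eq', Finset.mem_range]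
  split_ifs with hi
  · rfl
  · rw [homogeneousComponent_eq_zero _ _ (by simpa using hi), map_zero]

theorem coeff_eq_zero_of_eval_eq_zpow {K : Type*} [Field K] [Infinite K] {p : Polynomial K}
    {d : ℤ} {c : K} (h : ∀ l, l ≠ 0 → p.eval l = l ^ d * c) {i : ℕ} (hi : (i : ℤ) ≠ d) :
    p.coeff i = 0 := by
  obtain ⟨M, hM⟩ : ∃ M : ℕ, M = d.natAbs + 1 := ⟨_, rfl⟩
  have hmonomial : p * Polynomial.X ^ M = Polynomial.monomial (M + d).toNat c := by
    refine Polynomial.funext fun l => ?_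
    rw [Polynomial.eval_mul, Polynomial.eval_pow, Polynomial.eval_X, Polynomial.eval_monomial]
    rcases eq_or_ne l 0 with rfl | hl
    · rw [zero_pow (by omega), zero_pow (by omega), mul_zero, mul_zero]
    · have hpow : l ^ (M + d).toNat = l ^ d * l ^ M := by
        rw [← zpow_natCast, ← zpow_natCast, ← zpow_add₀ hl]
        congr 1
        omega
      rw [h l hl, hpow]
      ring
  have hcoeff := congrArg (fun q => Polynomial.coeff q (i + M)) hmonomial
  simp only [Polynomial.coeff_mul_X_pow, Polynomial.coeff_monomial] at hcoeff
  rw [hcoeff, if_neg (by omega)]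

variable {K σ τ : Type*} [Field K] {d : ℤ} {F : MvPolynomial σ K →ₗ[K] MvPolynomial τ K}

/-- The linear map `F` sends homogeneous polynomials of degree `s` to homogeneous polynomials of
degree `s + d`, hence to zero when `s + d` is negative. -/
def ShiftsDegree (F : MvPolynomial σ K →ₗ[K] MvPolynomial τ K) (d : ℤ) : Prop :=
  ∀ ⦃s : ℕ⦄ ⦃g : MvPolynomial σ K⦄, g.IsHomogeneous s → ∀ ⦃i : ℕ⦄, (i : ℤ) ≠ s + d →
    homogeneousComponent i (F g) = 0

theorem ShiftsDegree.isHomogeneous (hF : ShiftsDegree F d) {k j : ℕ} (hj : (j : ℤ) = k + d)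
    {g : MvPolynomial σ K} (hg : g.IsHomogeneous k) : (F g).IsHomogeneous j := by
  rw [← mem_homogeneousSubmodule, ← sum_homogeneousComponent (F g)]
  refine Submodule.sum_mem _ fun s _ => ?_
  rcases eq_or_ne s j with rfl | hs
  · exact homogeneousComponent_mem s _
  · rw [hF hg (by omega)]
    exact zero_mem _

theorem ShiftsDegree.homogeneousComponent_apply (hF : ShiftsDegree F d) {k j : ℕ}
    (hj : (j : ℤ) = k + d) (g : MvPolynomial σ K) :
    homogeneousComponent j (F g) = F (homogeneousComponent k g) := by
  have hk := hF.isHomogeneous hj (homogeneousComponent_isHomogeneous k g)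
  calc homogeneousComponent j (F g)
      = ∑ s ∈ Finset.range (g.totalDegree + 1),
          homogeneousComponent j (F (homogeneousComponent s g)) := by
        rw [← map_sum, ← map_sum, sum_homogeneousComponent]
    _ = homogeneousComponent j (F (homogeneousComponent k g)) := by
        refine Finset.sum_eq_single k (fun s _ hs =>
          hF (homogeneousComponent_isHomogeneous s g) (by omega)) fun hrange => ?_
        have hzero : homogeneousComponent k g = 0 :=
          homogeneousComponent_eq_zero _ _ (by simpa using hrange)
        rw [hzero, map_zero, map_zero]
    _ = F (homogeneousComponent k g) := by
        rw [homogeneousComponent_of_mem hk, if_pos rfl]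

theorem ShiftsDegree.map_inf_homogeneousSubmodule (hF : ShiftsDegree F d) {k j : ℕ}
    (hj : (j : ℤ) = k + d) {W : Submodule K (MvPolynomial σ K)} (hW : IsGraded W) :
    W.map F ⊓ homogeneousSubmodule τ K j = (W ⊓ homogeneousSubmodule σ K k).map F := by
  apply le_antisymm
  · rintro _ ⟨⟨g, hg, rfl⟩, hgj⟩
    refine ⟨homogeneousComponent k g, ⟨hW g hg k, homogeneousComponent_mem k g⟩, ?_⟩
    rw [← hF.homogeneousComponent_apply hj, homogeneousComponent_of_mem hgj, if_pos rfl]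
  · rintro _ ⟨g, ⟨hg, hgk⟩, rfl⟩
    exact ⟨⟨g, hg, rfl⟩, hF.isHomogeneous hj hgk⟩

theorem ShiftsDegree.smul_rename_comp (hF : ShiftsDegree F d) {υ : Type*} (φ : τ → υ)
    (N : K) : ShiftsDegree (N • (rename φ).toLinearMap ∘ₗ F) d := by
  intro s g hg i hi
  have hrename : homogeneousComponent i (rename φ (F g)) = 0 := by
    rw [← rename_homogeneousComponent, hF hg hi, map_zero]
  rw [LinearMap.smul_apply, map_smul]
  exact smul_eq_zero_of_right N hrename

end Homogeneous

section ShuffleMap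

variable {L I : Type*} [Fintype L] {e : I → I → ℤ}

theorem shuffleSum_mul {g : MvPolynomial L ℚ} {k : ℕ} (hg : g.IsHomogeneous k) (π : L → I)
    (w : L → ℕ) (y : L → ℚ) {l : ℚ} (hl : l ≠ 0) :
    shuffleSum e π w g (fun p => y p * l) =
      l ^ (k + kernelDegree e π w) * shuffleSum e π w g y := by
  rw [shuffleSum, shuffleSum, Finset.mul_sum]
  refine Finset.sum_congr rfl fun (σ : Equiv.Perm L) _ => ?_
  have hkernel := shuffleKernel_add_mul e π w (y ∘ σ) 0 hl
  simp only [zero_add] at hkernel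
  have hcomp : (fun p => y p * l) ∘ σ = fun p => (y ∘ σ) p * l := rfl
  rw [hcomp, eval_mul_of_isHomogeneous hg, hkernel, zpow_add₀ hl, zpow_natCast]
  ring

/-- The linear map that sends `g` to the polynomial with the values `shuffleSum e π w g`. -/
noncomputable def shuffleMap (he : IsQuiverExponent e) (π : L → I) (w : L → ℕ) :
    MvPolynomial L ℚ →ₗ[ℚ] MvPolynomial L ℚ where
  toFun g := (exists_represents_shuffleSum he π w g).choose
  map_add' g h := (exists_represents_shuffleSum he π w _).choose_spec.unique fun y hy => by
    rw [map_add, (exists_represents_shuffleSum he π w g).choose_spec y hy,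
      (exists_represents_shuffleSum he π w h).choose_spec y hy]
    simp only [shuffleSum, ← Finset.sum_add_distrib, map_add, add_mul]
  map_smul' c g := (exists_represents_shuffleSum he π w _).choose_spec.unique fun y hy => by
    rw [RingHom.id_apply, smul_eval, (exists_represents_shuffleSum he π w g).choose_spec y hy]
    simp only [shuffleSum, Finset.mul_sum, smul_eval, mul_assoc]

theorem represents_shuffleMap (he : IsQuiverExponent e) (π : L → I) (w : L → ℕ)
    (g : MvPolynomial L ℚ) : Represents (shuffleMap he π w g) (shuffleSum e π w g) :=
  (exists_represents_shuffleSum he π w g).choose_spec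

theorem shiftsDegree_shuffleMap (he : IsQuiverExponent e) (π : L → I) (w : L → ℕ) :
    ShiftsDegree (shuffleMap he π w) (kernelDegree e π w) := by
  intro s g hg i hi
  refine eq_zero_of_eval_injective_eq_zero fun y hy => ?_
  rw [← coeff_restrictLine_zero]
  refine coeff_eq_zero_of_eval_eq_zpow (c := shuffleSum e π w g y) (fun l hl => ?_) hi
  have hinj : Function.Injective fun p => y p * l := fun p q h => hy (mul_right_cancel₀ hl h)
  simp only [eval_restrictLine, zero_add]
  rw [represents_shuffleMap he π w g _ hinj, shuffleSum_mul hg π w y hl]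

end ShuffleMap

section CohaProd

variable {r : ℕ}

/-- The linear map on products of polynomials in separate variables that computes the iterated CoHA
product, up to a nonzero factor and a renaming of the variables. -/
noncomputable def cohaShuffleMap (Q : FinQuiver n) (γ : Fin r → Fin n → ℕ) :
    MvPolynomial (BlockLabel γ) ℚ →ₗ[ℚ] MvPolynomial (BlockLabel γ) ℚ :=
  shuffleMap (isQuiverExponent_quiverExponent Q) (blockColor γ) (blockLevel γ)

theorem exists_cohaProdFin_eq_smul_rename (Q : FinQuiver n) (γ : Fin r → Fin n → ℕ) :
    ∃ (φ : BlockLabel γ → Fin n × ℕ) (N : ℚ), Function.Injective φ ∧ N ≠ 0 ∧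
      ∀ f : Fin r → PolyQ n, (∀ u, f u ∈ Hspace (γ u)) →
        cohaProdFin Q γ f = N • rename φ (cohaShuffleMap Q γ (externalProduct γ f)) := by
  obtain ⟨total, T, N, hT⟩ := exists_computesCohaProd Q γ
  refine ⟨labelVar total ∘ T.symm, N⁻¹, (labelVar_injective total).comp T.symm.injective,
    inv_ne_zero hT.ne_zero, fun f hf => ?_⟩
  have hshuffle : N • rename T (toLabels total (cohaProdFin Q γ f)) =
      cohaShuffleMap Q γ (externalProduct γ f) := by
    refine Represents.unique (fun y hy => ?_) (represents_shuffleMap _ _ _ _)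
    rw [smul_eval, eval_rename, hT.mul_eval hf hy]
  rw [← hshuffle, map_smul, inv_smul_smul₀ hT.ne_zero, rename_rename, Function.comp_assoc,
    Equiv.symm_comp_self, Function.comp_id, rename_toLabels (hT.mem_Hspace hf).1]

theorem dimVec_blockColor (γ : Fin r → Fin n → ℕ) {u : Fin r} {S : BlockLabel γ → Prop}
    (hS : ∀ q, S q → q.1 = u) (i : Fin n) :
    dimVec (blockColor γ) S i = ∑ a, if S ⟨u, i, a⟩ then 1 else 0 := by
  rw [dimVec, Fintype.sum_sigma]
  refine (Finset.sum_eq_single_of_mem u (Finset.mem_univ u) fun v _ hv =>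
    Finset.sum_eq_zero fun p _ => if_neg fun h => hv (hS _ h.1)).trans ?_
  rw [Fintype.sum_sigma]
  refine (Finset.sum_eq_single_of_mem i (Finset.mem_univ i) fun j _ hj =>
    Finset.sum_eq_zero fun a _ => if_neg fun h => hj h.2).trans ?_
  simp only [blockColor, and_true]

theorem kernelDegree_block (Q : FinQuiver n) (γ : Fin r → Fin n → ℕ) :
    kernelDegree (quiverExponent Q) (blockColor γ) (blockLevel γ) =
      -∑ a : Fin r × Fin r with a.1 < a.2, Q.euler (γ a.1) (γ a.2) := by
  have hdim (u : Fin r) : dimVec (blockColor γ) (fun p => p.1 = u) = intVec (γ u) := by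
    funext i
    rw [dimVec_blockColor γ (fun _ h => h)]
    simp
  refine (kernelDegree_fin (quiverExponent Q) (blockColor γ) Sigma.fst).trans ?_
  simp only [hdim, euler_eq_eulerForm]

end CohaProd

/-! ### Root spaces and the dimension count -/

section Aspace

variable {β : Fin n → ℕ} {i : Fin n} {m : ℕ}

/-- The label of the `k`-th variable at a vertex at which the root `β` equals `1`. -/
def vertexLabel (hβ : β i = 1) (k : Fin m) : Label fun v => m * β v :=
  ⟨i, k.cast (by simp only [hβ, mul_one])⟩

theorem exists_rename_vertexLabel_eq (hβ : β i = 1) {f : PolyQ n} (hf : f ∈ Aspace β i m) :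
    ∃ g : MvPolynomial (Fin m) ℚ, rename (vertexLabel hβ) g = toLabels (fun v => m * β v) f := by
  obtain ⟨⟨hvars, -⟩, hvertex⟩ := hf
  have hinj : Function.Injective (labelVar (fun v => m * β v) ∘ vertexLabel (m := m) hβ) :=
    fun a b h => Fin.ext (Prod.mk.inj h).2
  obtain ⟨g, rfl⟩ := exists_rename_eq_of_vars_subset_range f _ hinj fun p hp => by
    have hlt : p.2 < m * β p.1 := hvars p hp
    have hp₁ : p.1 = i := hvertex p hp
    rw [hp₁, hβ, mul_one] at hlt
    exact ⟨⟨p.2, hlt⟩, Prod.ext hp₁.symm rfl⟩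
  exact ⟨g, by rw [← rename_rename, toLabels_rename]⟩

theorem vars_homogeneousComponent_subset {σ R : Type*} [CommSemiring R] (f : MvPolynomial σ R)
    (s : ℕ) : (homogeneousComponent s f).vars ⊆ f.vars := fun p hp => by
  rw [mem_vars_iff_mem_support] at hp ⊢
  obtain ⟨d, hd, hpd⟩ := hp
  rw [support_homogeneousComponent] at hd
  exact ⟨d, (Finset.mem_filter.1 hd).1, hpd⟩

theorem isGraded_Aspace (β : Fin n → ℕ) (i : Fin n) (m : ℕ) : IsGraded (Aspace β i m) := by
  rintro f ⟨⟨hvars, hsymm⟩, hvertex⟩ s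
  have hsub := vars_homogeneousComponent_subset f s
  refine ⟨⟨fun p hp => hvars p (hsub hp), fun i σ hσ => ?_⟩, fun p hp => hvertex p (hsub hp)⟩
  rw [rename_homogeneousComponent, hsymm i σ hσ]

/-- The space `Aspace β i m`, viewed among the polynomials in the finitely many variables of the
dimension vector `m • β`. -/
noncomputable def labelAspace (β : Fin n → ℕ) (i : Fin n) (m : ℕ) :
    Submodule ℚ (MvPolynomial (Label fun v => m * β v) ℚ) :=
  (Aspace β i m).map (toLabels fun v => m * β v).toLinearMap

theorem map_rename_labelAspace (β : Fin n → ℕ) (i : Fin n) (m : ℕ) :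
    (labelAspace β i m).map (rename (labelVar fun v => m * β v)).toLinearMap = Aspace β i m := by
  rw [labelAspace, ← Submodule.map_comp]
  have hid : ∀ f ∈ Aspace β i m, rename (labelVar fun v => m * β v) (toLabels _ f) = f :=
    fun f hf => rename_toLabels hf.1.1
  refine le_antisymm ?_ fun f hf => ⟨f, hf, hid f hf⟩
  rintro _ ⟨f, hf, rfl⟩
  exact (hid f hf).symm ▸ hf

theorem isGraded_labelAspace (β : Fin n → ℕ) (i : Fin n) (m : ℕ) :
    IsGraded (labelAspace β i m) := by
  rintro _ ⟨f, hf, rfl⟩ s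
  refine ⟨homogeneousComponent s f, isGraded_Aspace β i m f hf s, ?_⟩
  conv_lhs => rw [← rename_toLabels (γ := fun v => m * β v) hf.1.1, ← rename_homogeneousComponent]
  exact toLabels_rename _ _

theorem finrank_map_rename_inf_homogeneousSubmodule {K σ τ : Type*} [Field K] {φ : σ → τ}
    (hφ : Function.Injective φ) (B : Submodule K (MvPolynomial σ K)) (s : ℕ) :
    Module.finrank K ↥(B.map (rename φ).toLinearMap ⊓ homogeneousSubmodule τ K s) =
      Module.finrank K ↥(B ⊓ homogeneousSubmodule σ K s) := by
  have hmap : B.map (rename φ).toLinearMap ⊓ homogeneousSubmodule τ K s =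
      (B ⊓ homogeneousSubmodule σ K s).map (rename φ).toLinearMap := by
    apply le_antisymm
    · rintro _ ⟨⟨f, hf, rfl⟩, hfs⟩
      exact ⟨f, ⟨hf, (IsHomogeneous.rename_isHomogeneous_iff hφ).1 hfs⟩, rfl⟩
    · rintro _ ⟨f, ⟨hf, hfs⟩, rfl⟩
      exact ⟨⟨f, hf, rfl⟩, IsHomogeneous.rename_isHomogeneous hfs⟩
  rw [hmap]
  exact (Submodule.equivMapOfInjective _ (rename_injective φ hφ) _).finrank_eq.symm

theorem finrank_labelAspace_inf_homogeneousSubmodule (β : Fin n → ℕ) (i : Fin n) (m s : ℕ) :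
    Module.finrank ℚ ↥(labelAspace β i m ⊓ homogeneousSubmodule _ ℚ s) =
      Module.finrank ℚ ↥(Aspace β i m ⊓ homogeneousSubmodule (Fin n × ℕ) ℚ s) := by
  rw [← finrank_map_rename_inf_homogeneousSubmodule (labelVar_injective _),
    map_rename_labelAspace]

end Aspace

section Cluster

variable {r : ℕ}

/-- The dimension vectors `m u • β u` of the factors of the product. -/
abbrev scaledDim (β : Fin r → Fin n → ℕ) (m : Fin r → ℕ) : Fin r → Fin n → ℕ :=
  fun u v => m u * β u v

/-- Divides the variables of the factor of dimension `m u • β u` into `m u` clusters of dimension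
`β u`. -/
def cluster (β : Fin r → Fin n → ℕ) (m : Fin r → ℕ) (q : BlockLabel (scaledDim β m)) :
    Σ u, Fin (m u) :=
  ⟨q.1, (finProdFinEquiv.symm (q.2.2 : Fin (m q.1 * β q.1 q.2.1))).1⟩

theorem dimVec_cluster (β : Fin r → Fin n → ℕ) (m : Fin r → ℕ) (c : Σ u, Fin (m u)) :
    dimVec (blockColor (scaledDim β m)) (fun p => cluster β m p = c) = intVec (β c.1) := by
  obtain ⟨u, c⟩ := c
  funext i
  have hfst (q) (h : cluster β m q = ⟨u, c⟩) : q.1 = u := congrArg Sigma.fst h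
  rw [dimVec_blockColor _ hfst, intVec_apply]
  have hcluster (a : Fin (m u * β u i)) :
      cluster β m ⟨u, i, a⟩ = ⟨u, c⟩ ↔ (finProdFinEquiv.symm a).1 = c :=
    (sigma_mk_injective (β := fun u => Fin (m u))).eq_iff
  simp only [hcluster]
  rw [Equiv.sum_comp finProdFinEquiv.symm fun a : Fin (m u) × Fin (β u i) =>
    if a.1 = c then (1 : ℤ) else 0, Fintype.sum_prod_type_right]
  simp

variable {β : Fin r → Fin n → ℕ} {iv : Fin r → Fin n}

/-- The label, in each cluster, of the variable at the chosen vertex. -/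
def clusterLabel (hiv : ∀ u, β u (iv u) = 1) {m : Fin r → ℕ} (c : Σ u, Fin (m u)) :
    BlockLabel (scaledDim β m) :=
  ⟨c.1, vertexLabel (hiv c.1) c.2⟩

theorem cluster_comp_clusterLabel (hiv : ∀ u, β u (iv u) = 1) (m : Fin r → ℕ) :
    cluster β m ∘ clusterLabel hiv = id := by
  funext ⟨u, k⟩
  refine congrArg (Sigma.mk u) (Fin.ext ?_)
  change (k : ℕ) / β u (iv u) = k
  rw [hiv, Nat.div_one]

theorem externalTensor_labelAspace_le_range (hiv : ∀ u, β u (iv u) = 1) (m : Fin r → ℕ) :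
    externalTensor (fun u => labelAspace (β u) (iv u) (m u)) ≤
      Subalgebra.toSubmodule (rename (R := ℚ) (clusterLabel hiv)).range := by
  rw [externalTensor_eq_span, Submodule.span_le]
  rintro _ ⟨h, hh, rfl⟩
  refine Subalgebra.prod_mem _ fun u _ => ?_
  obtain ⟨f, hf, hfu⟩ := hh u
  obtain ⟨g, hg⟩ := exists_rename_vertexLabel_eq (hiv u) hf
  refine ⟨rename (Sigma.mk u) g, ?_⟩
  rw [← hfu]
  refine Eq.trans ?_ (congrArg (rename (Sigma.mk u)) hg)
  rw [rename_rename]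
  exact rename_rename _ _ _

theorem eval_comp_of_mem_externalTensor {m : Fin r → ℕ}
    {g : MvPolynomial (BlockLabel (scaledDim β m)) ℚ}
    (hg : g ∈ externalTensor fun u => labelAspace (β u) (iv u) (m u))
    {σ : Equiv.Perm (BlockLabel (scaledDim β m))}
    (hσ : σ ∈ colorPerms (blockColor (scaledDim β m))) (hblock : ∀ p, (σ p).1 = p.1)
    (z : BlockLabel (scaledDim β m) → ℚ) : eval (z ∘ σ) g = eval z g := by
  rw [externalTensor_eq_span] at hg
  induction hg using Submodule.span_induction with
  | mem g hg =>
    obtain ⟨h, hh, rfl⟩ := hg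
    rw [map_prod, map_prod]
    refine Finset.prod_congr rfl fun u _ => ?_
    obtain ⟨f, hf, hfu⟩ := hh u
    rw [← hfu, eval_rename, eval_rename]
    exact eval_toLabels_comp_of_block_eq (scaledDim β m) u hf.1 hσ hblock z
  | zero => simp only [map_zero]
  | add g h _ _ hg hh => rw [map_add, map_add, hg, hh]
  | smul a g _ hg => rw [smul_eval, smul_eval, hg]

variable {Q : FinQuiver n} {m : Fin r → ℕ} {g : MvPolynomial (BlockLabel (scaledDim β m)) ℚ}

theorem eval_cluster_eq_zero (hβ : IsReinekeSystem (quiverExponent Q) β)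
    (hg : g ∈ externalTensor fun u => labelAspace (β u) (iv u) (m u))
    (hzero : cohaShuffleMap Q (scaledDim β m) g = 0) {x : (Σ u, Fin (m u)) → ℚ}
    (hx : Function.Injective x) : eval (x ∘ cluster β m) g = 0 := by
  set blockPerms := {σ ∈ colorPerms (blockColor (scaledDim β m)) |
    ∀ p, (cluster β m (σ p)).1 = (cluster β m p).1} with hblockPerms
  have hformula := hβ.hasClusterFormula (BlockLabel (scaledDim β m)) (Σ u, Fin (m u))
    (blockColor (scaledDim β m)) (cluster β m) Sigma.fst (dimVec_cluster β m) g _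
    (represents_shuffleMap (isQuiverExponent_quiverExponent Q) _ _ g) x hx
  have hkernel := shuffleKernel_ne_zero (e := quiverExponent Q)
    (π := blockColor (scaledDim β m)) (w := fun p => ((cluster β m p).1 : ℕ))
    (y := x ∘ cluster β m) fun p q hpq hxpq => by
      rw [hx hxpq] at hpq
      exact lt_irrefl _ hpq
  have hsum : ∑ σ ∈ blockPerms, eval (x ∘ cluster β m ∘ σ) g =
      (blockPerms.card : ℚ) * eval (x ∘ cluster β m) g := by
    rw [← nsmul_eq_mul, ← Finset.sum_const]
    refine Finset.sum_congr rfl fun (σ : Equiv.Perm _) hσ => ?_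
    obtain ⟨hcolor, hblock⟩ := Finset.mem_filter.1 hσ
    exact eval_comp_of_mem_externalTensor hg hcolor hblock (x ∘ cluster β m)
  have hcard : (blockPerms.card : ℚ) ≠ 0 :=
    Nat.cast_ne_zero.2 <| Finset.card_ne_zero_of_mem (a := 1) <| by simp [hblockPerms]
  change eval _ (cohaShuffleMap Q _ g) = _ at hformula
  rw [hzero, map_zero, hsum] at hformula
  exact ((mul_eq_zero.1 ((mul_eq_zero.1 hformula.symm).resolve_right hkernel)).resolve_left hcard)

theorem eq_zero_of_cohaShuffleMap_eq_zero (hβ : IsReinekeSystem (quiverExponent Q) β)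
    (hiv : ∀ u, β u (iv u) = 1)
    (hg : g ∈ externalTensor fun u => labelAspace (β u) (iv u) (m u))
    (hzero : cohaShuffleMap Q (scaledDim β m) g = 0) : g = 0 := by
  obtain ⟨h, rfl⟩ : ∃ h, rename (clusterLabel hiv) h = g :=
    externalTensor_labelAspace_le_range hiv m hg
  suffices h = 0 by rw [this, map_zero]
  refine eq_zero_of_eval_injective_eq_zero fun x hx => ?_
  have hx₀ := eval_cluster_eq_zero hβ hg hzero hx
  rwa [eval_rename, Function.comp_assoc, cluster_comp_clusterLabel, Function.comp_id] at hx₀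

end Cluster

section DimensionCount

variable {r : ℕ} {β : Fin r → Fin n → ℕ} {iv : Fin r → Fin n} {m : Fin r → ℕ}

theorem span_cohaProdFin_eq_map {Q : FinQuiver n} {F : MvPolynomial _ ℚ →ₗ[ℚ] PolyQ n}
    (hF : ∀ f : Fin r → PolyQ n, (∀ u, f u ∈ Hspace (scaledDim β m u)) →
      cohaProdFin Q (scaledDim β m) f = F (externalProduct (scaledDim β m) f)) :
    Submodule.span ℚ {g : PolyQ n | ∃ f : Fin r → PolyQ n,
        (∀ u, f u ∈ Aspace (β u) (iv u) (m u)) ∧ g = cohaProdFin Q (scaledDim β m) f} =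
      (externalTensor fun u => labelAspace (β u) (iv u) (m u)).map F := by
  rw [externalTensor_eq_span, Submodule.map_span]
  congr 1
  ext g
  constructor
  · rintro ⟨f, hf, rfl⟩
    exact ⟨_, ⟨fun u => toLabels _ (f u), fun u => ⟨f u, hf u, rfl⟩, rfl⟩,
      (hF f fun u => (hf u).1).symm⟩
  · rintro ⟨_, ⟨h, hh, rfl⟩, rfl⟩
    choose f hf hfh using hh
    obtain rfl : h = fun u => toLabels (scaledDim β m u) (f u) := funext fun u => (hfh u).symm
    exact ⟨f, hf, (hF f fun u => (hf u).1).symm⟩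

theorem finrank_span_cohaProdFin {Q : FinQuiver n} (hβ : IsReinekeSystem (quiverExponent Q) β)
    (hiv : ∀ u, β u (iv u) = 1) {k j : ℕ}
    (hj : (j : ℤ) = k + -∑ a : Fin r × Fin r with a.1 < a.2,
      Q.euler (scaledDim β m a.1) (scaledDim β m a.2)) :
    Module.finrank ℚ ↥(Submodule.span ℚ {g : PolyQ n | ∃ f : Fin r → PolyQ n,
        (∀ u, f u ∈ Aspace (β u) (iv u) (m u)) ∧ g = cohaProdFin Q (scaledDim β m) f} ⊓
        homogeneousSubmodule (Fin n × ℕ) ℚ j) =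
      ∑ t ∈ Finset.Nat.antidiagonalTuple r k, ∏ u, Module.finrank ℚ
        ↥(Aspace (β u) (iv u) (m u) ⊓ homogeneousSubmodule (Fin n × ℕ) ℚ (t u)) := by
  have hgraded (u : Fin r) := isGraded_labelAspace (β u) (iv u) (m u)
  obtain ⟨φ, N, hφ, hN, hprod⟩ := exists_cohaProdFin_eq_smul_rename Q (scaledDim β m)
  set F := N • (rename φ).toLinearMap ∘ₗ cohaShuffleMap Q (scaledDim β m)
  have hF : ShiftsDegree F _ := (shiftsDegree_shuffleMap _ _ _).smul_rename_comp φ N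
  rw [← kernelDegree_block] at hj
  simp only [← finrank_labelAspace_inf_homogeneousSubmodule]
  rw [span_cohaProdFin_eq_map (F := F) hprod,
    hF.map_inf_homogeneousSubmodule hj (isGraded_externalTensor hgraded),
    ← finrank_externalTensor_inf_homogeneousSubmodule hgraded, ← LinearMap.range_domRestrict]
  refine LinearMap.finrank_range_of_inj ((injective_iff_map_eq_zero _).2 ?_)
  rintro ⟨g, hg⟩ hFg
  have hrename : rename φ (cohaShuffleMap Q (scaledDim β m) g) = 0 :=
    (smul_eq_zero.1 hFg).resolve_left hN
  have hzero := rename_injective φ hφ (hrename.trans (map_zero (rename φ)).symm)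
  exact Subtype.ext (eq_zero_of_cohaShuffleMap_eq_zero hβ hiv hg.1 hzero)

end DimensionCount

end CoHA

theorem graded_dimension_shift_general {n ℓ r : ℕ} (Q : FinQuiver n) (P : SubqPartition Q ℓ)
    (hDyn : P.Dynkin) (β : Fin r → Fin n → ℕ) (blk : Fin r → Fin ℓ) (hR : IsReinekeOrder P β blk)
    (iv : Fin r → Fin n) (hiv : ∀ u, β u (iv u) = 1) (m : Fin r → ℕ) (k j : ℕ)
    (hj : (j : ℤ) = (k : ℤ) +
      (-∑ p ∈ Finset.univ.filter (fun p : Fin r × Fin r => p.1 < p.2),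
          Q.euler (fun v => m p.1 * β p.1 v) (fun v => m p.2 * β p.2 v))) :
    ∑ t ∈ Finset.Nat.antidiagonalTuple r k,
        ∏ u : Fin r, Module.finrank ℚ
          ↥(Aspace (β u) (iv u) (m u) ⊓ homogeneousSubmodule (Fin n × ℕ) ℚ (t u)) =
      Module.finrank ℚ
        ↥(Submodule.span ℚ {g : PolyQ n | ∃ f : Fin r → PolyQ n,
              (∀ u, f u ∈ Aspace (β u) (iv u) (m u)) ∧
              g = cohaProdFin Q (fun u v => m u * β u v) f} ⊓
            homogeneousSubmodule (Fin n × ℕ) ℚ j) :=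
  (CoHA.finrank_span_cohaProdFin (CoHA.isReinekeSystem_quiverExponent hDyn hR) hiv hj).symm

/-- With `𝒬•` an admissible, ordered, Dynkin subquiver partition of
the acyclic quiver `Q`, `β` a Reineke order with chosen vertices `iv u`
(`β u (iv u) = 1`), and `m` a `𝒬•`-partition of `γ`: grading by total polynomial
degree and setting `d_m = −Σ_{u<v} χ_Q(m_u β_u, m_v β_v)`, for every `k ≥ 0` (and `j`
with `j = k + d_m`),
`Σ_{k₁+⋯+k_r=k} ∏_u dim (𝒜_{β_u,m_u})_{k_u}
  = dim (𝒜_{β₁,m₁} * ⋯ * 𝒜_{β_r,m_r})_{k + d_m}`,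
where `𝒜_{β₁,m₁} * ⋯ * 𝒜_{β_r,m_r} ⊆ ℋ_γ` is the span of all left-to-right products
`f₁ * ⋯ * f_r` with `f_u ∈ 𝒜_{β_u,m_u}`. -/
theorem graded_dimension_shift {n ℓ r : ℕ} (Q : FinQuiver n) (hQ : Q.Acyclic)
    (P : SubqPartition Q ℓ) (hord : P.Ordered) (hDyn : P.Dynkin)
    (β : Fin r → Fin n → ℕ) (blk : Fin r → Fin ℓ) (hR : IsReinekeOrder P β blk)
    (iv : Fin r → Fin n) (hiv : ∀ u, β u (iv u) = 1)
    (γ : Fin n → ℕ) (m : Fin r → ℕ) (hm : (fun v => ∑ u, m u * β u v) = γ)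
    (k j : ℕ)
    (hj : (j : ℤ) = (k : ℤ) +
      (-∑ p ∈ Finset.univ.filter (fun p : Fin r × Fin r => p.1 < p.2),
          Q.euler (fun v => m p.1 * β p.1 v) (fun v => m p.2 * β p.2 v))) :
    ∑ t ∈ Finset.Nat.antidiagonalTuple r k,
        ∏ u : Fin r, Module.finrank ℚ
          ↥(Aspace (β u) (iv u) (m u) ⊓ homogeneousSubmodule (Fin n × ℕ) ℚ (t u)) =
      Module.finrank ℚ
        ↥(Submodule.span ℚ {g : PolyQ n | ∃ f : Fin r → PolyQ n,
              (∀ u, f u ∈ Aspace (β u) (iv u) (m u)) ∧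
              g = cohaProdFin Q (fun u v => m u * β u v) f} ⊓
            homogeneousSubmodule (Fin n × ℕ) ℚ j) := by
  exact graded_dimension_shift_general Q P hDyn β blk hR iv hiv m k j hj
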